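/- arXiv:2201.03660 — 5 statements merged into one kernel-verified Lean document; each statement's English description precedes it below -/
import Mathlib

section
/- Let ζ₇ = exp(2πi/7), ζ₃ = exp(2πi/3), let A = diag(ζ₇, ζ₇², ζ₇⁴) ∈ U(3), and let B ∈ U(3) be the product of the cyclic permutation matrix sending (e_1, e_2, e_3) to (e_3, e_1, e_2) with diag(ζ₃, 1, 1). Then every non-identity element g of the subgroup G = ⟨A, B⟩ of U(3) has no nonzero fixed vector in ℂ³ (so G acts freely on the unit sphere S⁵), and every G-invariant harmonic polynomial on ℝ⁶ ≅ ℂ³ homogeneous of degree d with 1 ≤ d ≤ 3 is identically zero. -/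
/-!
The matrices satisfy `A⁷ = 1`, `B³ = ζ₃` and `BA = A²B`, so every element of `G` is some `AⁱBʲ`
(`mem_normal_form`).  If `3 ∤ j`, its cube is the scalar `ζ₃ʲ ≠ 1` (`cube_normal_form`, by
`7 ∣ 1 + 2ʲ + 4ʲ`), so it fixes no nonzero vector; if `3 ∣ j`, it is diagonal with entries
`ζ₃ᵏ ζ₇^{ei}`, `e ∈ {1, 2, 4}`, and one such entry equals `1` only when the element is trivial.

For the invariants, a real polynomial is rewritten in the variables `z, z̄` (`complexify`), which
are algebraically independent (`eq_zero_of_eval_conjPair`).  There `A`, `B³` and `B` act by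
monomial substitutions, so invariance becomes a set of relations between coefficients
(`coeff_complexify_of_invariant`).  In degrees one to three the weights modulo `7` and `3` leave
only `zᵢz̄ᵢ`, `z₀z₁z₂` and `z̄₀z̄₁z̄₂`; the cubic ones are multiplied by `ζ₃` and `ζ₃²` under `B`
(`coeff_complexify_eq_zero`), and `B` permutes the `zᵢz̄ᵢ` cyclically.  Hence an invariant is a
multiple `r · |x|²`, whose Laplacian is `12 r`, and harmonicity forces `r = 0`.
-/

open MvPolynomial

/-- The Laplacian `Σ ∂²p/∂xᵢ²` of a polynomial in finitely many real variables. -/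
noncomputable def polyLap {σ : Type*} [Fintype σ] (p : MvPolynomial σ ℝ) : MvPolynomial σ ℝ :=
  ∑ i, MvPolynomial.pderiv i (MvPolynomial.pderiv i p)

/-- A polynomial is harmonic if its Laplacian vanishes identically. -/
def IsHarmonic {σ : Type*} [Fintype σ] (p : MvPolynomial σ ℝ) : Prop := polyLap p = 0

/-- The identification `ℂ³ ≅ ℝ⁶`: the vector `v` has real coordinates `Re (v i), Im (v i)`. -/
noncomputable def coords (v : Fin 3 → ℂ) : Fin 3 × Fin 2 → ℝ :=
  fun j => if j.2 = 0 then (v j.1).re else (v j.1).im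

/-- `ζ₇ = exp(2πi/7)`. -/
noncomputable def ζ7 : ℂ := Complex.exp (2 * Real.pi * Complex.I / 7)

/-- `ζ₃ = exp(2πi/3)`. -/
noncomputable def ζ3 : ℂ := Complex.exp (2 * Real.pi * Complex.I / 3)

lemma ζ7_prim : IsPrimitiveRoot ζ7 7 := by
  have := Complex.isPrimitiveRoot_exp 7 (by norm_num)
  simpa [ζ7] using this

lemma ζ3_prim : IsPrimitiveRoot ζ3 3 := by
  have := Complex.isPrimitiveRoot_exp 3 (by norm_num)
  simpa [ζ3] using this

lemma conj_ζ7 : (starRingEnd ℂ) ζ7 = ζ7 ^ 6 := by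
  have h1 := ζ7_prim.pow_eq_one
  rw [← Complex.inv_eq_conj (ζ7_prim.norm'_eq_one (by norm_num))]
  exact inv_eq_of_mul_eq_one_right (by rw [← h1]; ring)

lemma conj_ζ3 : (starRingEnd ℂ) ζ3 = ζ3 ^ 2 := by
  have h1 := ζ3_prim.pow_eq_one
  rw [← Complex.inv_eq_conj (ζ3_prim.norm'_eq_one (by norm_num))]
  exact inv_eq_of_mul_eq_one_right (by rw [← h1]; ring)

/-! ### The group and its free action -/

section Group

variable {A B : Matrix.unitaryGroup (Fin 3) ℂ}

lemma A_pow_coe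
    (hA : (A : Matrix (Fin 3) (Fin 3) ℂ) = Matrix.diagonal ![ζ7, ζ7 ^ 2, ζ7 ^ 4]) (n : ℕ) :
    ((A ^ n : Matrix.unitaryGroup (Fin 3) ℂ) : Matrix (Fin 3) (Fin 3) ℂ)
      = Matrix.diagonal (![ζ7, ζ7 ^ 2, ζ7 ^ 4] ^ n) := by
  rw [SubmonoidClass.coe_pow, hA, Matrix.diagonal_pow]

lemma A_pow_seven
    (hA : (A : Matrix (Fin 3) (Fin 3) ℂ) = Matrix.diagonal ![ζ7, ζ7 ^ 2, ζ7 ^ 4]) :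
    A ^ 7 = 1 := by
  apply Subtype.ext
  have h1 := ζ7_prim.pow_eq_one
  rw [A_pow_coe hA, OneMemClass.coe_one, ← Matrix.diagonal_one]
  congr 1
  ext i
  fin_cases i
  · simpa using h1
  · simp [← pow_mul, pow_mul' ζ7 2 7, h1]
  · simp [← pow_mul, pow_mul' ζ7 4 7, h1]

lemma B_coe
    (hB : (B : Matrix (Fin 3) (Fin 3) ℂ) =
      Matrix.of ![![0, 1, 0], ![0, 0, 1], ![1, 0, 0]] * Matrix.diagonal ![ζ3, 1, 1]) :
    (B : Matrix (Fin 3) (Fin 3) ℂ) = !![0, 1, 0; 0, 0, 1; ζ3, 0, 0] := by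
  rw [hB]
  ext i j
  rw [Matrix.mul_diagonal]
  fin_cases i <;> fin_cases j <;> simp

lemma B_mulVec
    (hB : (B : Matrix (Fin 3) (Fin 3) ℂ) =
      Matrix.of ![![0, 1, 0], ![0, 0, 1], ![1, 0, 0]] * Matrix.diagonal ![ζ3, 1, 1])
    (v : Fin 3 → ℂ) :
    Matrix.mulVec (B : Matrix (Fin 3) (Fin 3) ℂ) v = ![v 1, v 2, ζ3 * v 0] := by
  rw [B_coe hB]
  ext i
  fin_cases i <;> simp [Matrix.mulVec, dotProduct, Fin.sum_univ_three]

/-- `B³` is the scalar `ζ₃`. -/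
lemma B_pow_coe
    (hB : (B : Matrix (Fin 3) (Fin 3) ℂ) =
      Matrix.of ![![0, 1, 0], ![0, 0, 1], ![1, 0, 0]] * Matrix.diagonal ![ζ3, 1, 1])
    (n : ℕ) :
    ((B ^ (3 * n) : Matrix.unitaryGroup (Fin 3) ℂ) : Matrix (Fin 3) (Fin 3) ℂ)
      = ζ3 ^ n • 1 := by
  have h3 : (B : Matrix (Fin 3) (Fin 3) ℂ) ^ 3 = ζ3 • 1 := by
    rw [B_coe hB, pow_succ, pow_two, Matrix.one_fin_three]
    simp
  rw [SubmonoidClass.coe_pow, pow_mul, h3, smul_pow, one_pow]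

lemma B_pow_nine
    (hB : (B : Matrix (Fin 3) (Fin 3) ℂ) =
      Matrix.of ![![0, 1, 0], ![0, 0, 1], ![1, 0, 0]] * Matrix.diagonal ![ζ3, 1, 1]) :
    B ^ 9 = 1 := by
  apply Subtype.ext
  rw [show 9 = 3 * 3 from rfl, B_pow_coe hB, ζ3_prim.pow_eq_one, one_smul]
  rfl

lemma B_mul_A
    (hA : (A : Matrix (Fin 3) (Fin 3) ℂ) = Matrix.diagonal ![ζ7, ζ7 ^ 2, ζ7 ^ 4])
    (hB : (B : Matrix (Fin 3) (Fin 3) ℂ) =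
      Matrix.of ![![0, 1, 0], ![0, 0, 1], ![1, 0, 0]] * Matrix.diagonal ![ζ3, 1, 1]) :
    B * A = A ^ 2 * B := by
  apply Subtype.ext
  have h8 : ζ7 = (ζ7 ^ 4) ^ 2 := by
    calc ζ7 = ζ7 ^ 7 * ζ7 := by rw [ζ7_prim.pow_eq_one, one_mul]
      _ = _ := by ring
  rw [Submonoid.coe_mul, Submonoid.coe_mul, A_pow_coe hA, hA, B_coe hB]
  ext i j
  rw [Matrix.mul_diagonal, Matrix.diagonal_mul]
  fin_cases i <;> fin_cases j <;> simp
  · ring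
  · rw [← h8]; ring

lemma B_pow_mul_A_pow (h : B * A = A ^ 2 * B) (j i : ℕ) :
    B ^ j * A ^ i = A ^ (2 ^ j * i) * B ^ j := by
  have h1 : ∀ i, B * A ^ i = A ^ (2 * i) * B := fun i => by
    rw [pow_mul]
    exact (SemiconjBy.pow_right (show SemiconjBy B A (A ^ 2) from h) i)
  induction j generalizing i with
  | zero => simp
  | succ j ih =>
    rw [pow_succ, mul_assoc, h1, ← mul_assoc, ih, mul_assoc, ← mul_assoc (2 ^ j), ← pow_succ]

lemma mem_normal_form (h7 : A ^ 7 = 1) (h9 : B ^ 9 = 1) (h : B * A = A ^ 2 * B)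
    {g : Matrix.unitaryGroup (Fin 3) ℂ} (hg : g ∈ Subgroup.closure {A, B}) :
    ∃ i j : ℕ, g = A ^ i * B ^ j := by
  have hBmul : ∀ k i j : ℕ, B ^ k * (A ^ i * B ^ j) = A ^ (2 ^ k * i) * B ^ (k + j) :=
    fun k i j => by rw [← mul_assoc, B_pow_mul_A_pow h, mul_assoc, pow_add]
  induction hg using Subgroup.closure_induction_left with
  | one => exact ⟨0, 0, by simp⟩
  | mul_left x hx y hy ih =>
    obtain ⟨i, j, rfl⟩ := ih
    rcases hx with rfl | rfl
    · exact ⟨i + 1, j, by rw [pow_succ', mul_assoc]⟩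
    · exact ⟨_, _, by simpa using hBmul 1 i j⟩
  | inv_mul_cancel x hx y hy ih =>
    obtain ⟨i, j, rfl⟩ := ih
    rcases hx with rfl | rfl
    · have : x⁻¹ = x ^ 6 := inv_eq_of_mul_eq_one_right (by rw [← pow_succ', h7])
      exact ⟨6 + i, j, by rw [this, pow_add, mul_assoc]⟩
    · have : x⁻¹ = x ^ 8 := inv_eq_of_mul_eq_one_right (by rw [← pow_succ', h9])
      exact ⟨_, _, by rw [this]; exact hBmul 8 i j⟩

lemma seven_dvd {j : ℕ} (hj : ¬ 3 ∣ j) : 7 ∣ 1 + 2 ^ j + 2 ^ (2 * j) := by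
  obtain ⟨k, l, hl, rfl⟩ : ∃ k l, (l = 1 ∨ l = 2) ∧ j = 3 * k + l :=
    ⟨j / 3, j % 3, by omega, by omega⟩
  have h8 : (2 ^ (3 * k) : ℕ) ≡ 1 [MOD 7] := by
    rw [pow_mul]
    simpa using (show (2 ^ 3 : ℕ) ≡ 1 [MOD 7] by decide).pow k
  have e : 1 + 2 ^ (3 * k + l) + 2 ^ (2 * (3 * k + l))
      = 1 + 2 ^ (3 * k) * 2 ^ l + 2 ^ (3 * k) * 2 ^ (3 * k) * 4 ^ l := by
    rw [show (4 : ℕ) = 2 ^ 2 by norm_num, ← pow_mul]; ring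
  rw [← Nat.modEq_zero_iff_dvd, e]
  have : 1 + 2 ^ (3 * k) * 2 ^ l + 2 ^ (3 * k) * 2 ^ (3 * k) * 4 ^ l
      ≡ 1 + 1 * 2 ^ l + 1 * 1 * 4 ^ l [MOD 7] := by
    gcongr
  refine this.trans ?_
  rcases hl with rfl | rfl <;> decide

/-- If `3 ∤ j` then `g = AⁱBʲ` has `g³ = B³ʲ`, because `7 ∣ 1 + 2ʲ + 4ʲ`; so `g³` is a
nontrivial scalar. -/
lemma cube_normal_form (h7 : A ^ 7 = 1) (h : B * A = A ^ 2 * B) (i : ℕ) {j : ℕ}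
    (hj : ¬ 3 ∣ j) : (A ^ i * B ^ j) ^ 3 = B ^ (3 * j) := by
  have e : (A ^ i * B ^ j) ^ 3 = A ^ (i * (1 + 2 ^ j + 2 ^ (2 * j))) * B ^ (3 * j) := by
    calc (A ^ i * B ^ j) ^ 3 = A ^ i * (B ^ j * A ^ i) * (B ^ j * (A ^ i * B ^ j)) := by
          simp only [pow_succ, pow_zero, one_mul, mul_assoc]
      _ = A ^ i * A ^ (2 ^ j * i) * (B ^ (2 * j) * A ^ i) * B ^ j := by
          rw [B_pow_mul_A_pow h j i, two_mul j, pow_add]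
          simp only [mul_assoc]
      _ = _ := by
          rw [B_pow_mul_A_pow h (2 * j) i, ← mul_assoc, ← pow_add, ← pow_add, mul_assoc,
            ← pow_add]
          congr 2 <;> ring
  obtain ⟨c, hc⟩ := seven_dvd hj
  rw [e, hc, mul_left_comm, pow_mul, h7, one_pow, one_mul]

lemma free_action
    (hA : (A : Matrix (Fin 3) (Fin 3) ℂ) = Matrix.diagonal ![ζ7, ζ7 ^ 2, ζ7 ^ 4])
    (hB : (B : Matrix (Fin 3) (Fin 3) ℂ) =
      Matrix.of ![![0, 1, 0], ![0, 0, 1], ![1, 0, 0]] * Matrix.diagonal ![ζ3, 1, 1])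
    {g : Matrix.unitaryGroup (Fin 3) ℂ} (hg : g ∈ Subgroup.closure {A, B}) (h1 : g ≠ 1)
    {v : Fin 3 → ℂ} (hv : Matrix.mulVec (g : Matrix (Fin 3) (Fin 3) ℂ) v = v) : v = 0 := by
  have h7 := A_pow_seven hA
  have h9 := B_pow_nine hB
  have h := B_mul_A hA hB
  obtain ⟨i, j, rfl⟩ := mem_normal_form h7 h9 h hg
  by_cases hj : 3 ∣ j
  · obtain ⟨k, rfl⟩ := hj
    by_contra hv0
    obtain ⟨c, hc⟩ := Function.ne_iff.mp hv0
    have hvc := congrFun hv c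
    rw [Submonoid.coe_mul, A_pow_coe hA, B_pow_coe hB, mul_smul_comm, mul_one,
      Matrix.smul_mulVec, Pi.smul_apply, Matrix.mulVec_diagonal, smul_eq_mul, ← mul_assoc] at hvc
    have hw := mul_right_cancel₀ hc (hvc.trans (one_mul _).symm)
    obtain ⟨e, he, hce⟩ : ∃ e, Nat.Coprime 7 e ∧
        (![ζ7, ζ7 ^ 2, ζ7 ^ 4] : Fin 3 → ℂ) c = ζ7 ^ e := by
      fin_cases c
      · exact ⟨1, by norm_num, by simp⟩
      · exact ⟨2, by norm_num, by simp⟩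
      · exact ⟨4, by norm_num, by simp⟩
    rw [Pi.pow_apply, hce, ← pow_mul] at hw
    -- The seventh power kills the `ζ₇` factor, which separates the two roots of unity.
    have h3k : 3 ∣ k := by
      have h2 : ζ3 ^ (k * 7) = 1 := by
        calc ζ3 ^ (k * 7) = (ζ3 ^ k * ζ7 ^ (e * i)) ^ 7 := by
              rw [mul_pow, ← pow_mul, ← pow_mul, mul_comm (e * i) 7, pow_mul ζ7,
                ζ7_prim.pow_eq_one, one_pow, mul_one]
          _ = 1 := by rw [hw, one_pow]
      have := (ζ3_prim.pow_eq_one_iff_dvd _).mp h2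
      omega
    obtain ⟨l, rfl⟩ := h3k
    rw [pow_mul ζ3, ζ3_prim.pow_eq_one, one_pow, one_mul, ζ7_prim.pow_eq_one_iff_dvd] at hw
    obtain ⟨n, rfl⟩ := he.dvd_of_dvd_mul_left hw
    apply h1
    rw [← mul_assoc, pow_mul, pow_mul, h7]
    norm_num [h9]
  · have h3 : Matrix.mulVec (((A ^ i * B ^ j) ^ 3 : Matrix.unitaryGroup (Fin 3) ℂ) :
        Matrix (Fin 3) (Fin 3) ℂ) v = v := by
      rw [SubmonoidClass.coe_pow, pow_succ, pow_two, ← Matrix.mulVec_mulVec,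
        ← Matrix.mulVec_mulVec, hv, hv, hv]
    rw [cube_normal_form h7 h i hj, B_pow_coe hB, Matrix.smul_mulVec, Matrix.one_mulVec] at h3
    have h4 : (ζ3 ^ j - 1) • v = 0 := by rw [sub_smul, h3, one_smul, sub_self]
    refine (smul_eq_zero.mp h4).resolve_left fun h5 => hj ?_
    exact (ζ3_prim.pow_eq_one_iff_dvd _).mp (sub_eq_zero.mp h5)

end Group

/-! ### Polynomials in `z` and `z̄` -/

/-- The point `(z, z̄)` of `ℂ⁶` attached to `z ∈ ℂ³`: index `(i, 0)` carries `zᵢ` and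
`(i, 1)` carries its conjugate. -/
noncomputable def conjPair (v : Fin 3 → ℂ) : Fin 3 × Fin 2 → ℂ :=
  fun j => if j.2 = 0 then v j.1 else (starRingEnd ℂ) (v j.1)

/-- A real polynomial on `ℝ⁶` rewritten in the variables `z, z̄`, by substituting
`x = (z + z̄) / 2` and `y = (z - z̄) / (2i)`. -/
noncomputable def complexify (p : MvPolynomial (Fin 3 × Fin 2) ℝ) :
    MvPolynomial (Fin 3 × Fin 2) ℂ :=
  bind₁ (fun j => if j.2 = 0 then C (1 / 2) * (X (j.1, 0) + X (j.1, 1))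
    else C (-Complex.I / 2) * (X (j.1, 0) - X (j.1, 1))) (map (algebraMap ℝ ℂ) p)

lemma eval_complexify (p : MvPolynomial (Fin 3 × Fin 2) ℝ) (v : Fin 3 → ℂ) :
    eval (conjPair v) (complexify p) = ((eval (coords v) p : ℝ) : ℂ) := by
  have h : ((eval (coords v) p : ℝ) : ℂ)
      = eval (fun j => ((coords v j : ℝ) : ℂ)) (map (algebraMap ℝ ℂ) p) := by
    have := (map_eval (algebraMap ℝ ℂ) (coords v) p)
    simpa [Function.comp_def] using this
  rw [h, complexify, ← MvPolynomial.coe_aeval_eq_eval, RingHom.coe_coe, aeval_bind₁]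
  rw [← MvPolynomial.coe_aeval_eq_eval, RingHom.coe_coe]
  congr 2
  ext ⟨i, k⟩
  fin_cases k
  · simp [conjPair, coords, Complex.re_eq_add_conj]
    ring
  · simp [conjPair, coords, Complex.im_eq_sub_conj]
    field_simp
    simp

lemma isHomogeneous_complexify {p : MvPolynomial (Fin 3 × Fin 2) ℝ} {d : ℕ}
    (hp : p.IsHomogeneous d) : (complexify p).IsHomogeneous d := by
  have := (hp.map (algebraMap ℝ ℂ)).aeval (n := 1)
    (fun j : Fin 3 × Fin 2 => (if j.2 = 0 then C (1 / 2) * (X (j.1, 0) + X (j.1, 1))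
      else C (-Complex.I / 2) * (X (j.1, 0) - X (j.1, 1)) : MvPolynomial (Fin 3 × Fin 2) ℂ))
    (fun j => by
      split_ifs
      · exact ((isHomogeneous_X _ _).add (isHomogeneous_X _ _)).C_mul _
      · exact ((isHomogeneous_X _ _).sub (isHomogeneous_X _ _)).C_mul _)
  rw [one_mul] at this
  exact this

/-- A complex polynomial in `z, z̄` that vanishes on `ℂ³` is zero: `z` and `z̄` are independent,
since `x` and `y` are. -/
lemma eq_zero_of_eval_conjPair {r : MvPolynomial (Fin 3 × Fin 2) ℂ}
    (h : ∀ v, eval (conjPair v) r = 0) : r = 0 := by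
  let f : Fin 3 × Fin 2 → MvPolynomial (Fin 3 × Fin 2) ℂ := fun j =>
    if j.2 = 0 then X (j.1, 0) + C Complex.I * X (j.1, 1)
    else X (j.1, 0) - C Complex.I * X (j.1, 1)
  let f' : Fin 3 × Fin 2 → MvPolynomial (Fin 3 × Fin 2) ℂ := fun j =>
    if j.2 = 0 then C (1 / 2) * (X (j.1, 0) + X (j.1, 1))
    else C (-Complex.I / 2) * (X (j.1, 0) - X (j.1, 1))
  have hs : bind₁ f r = 0 := by
    refine funext_set (fun _ => Set.range ((↑) : ℝ → ℂ))
      (fun _ => Set.infinite_range_of_injective Complex.ofReal_injective) fun x hx => ?_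
    have hx' : ∀ j, ∃ y : ℝ, (y : ℂ) = x j := fun j => hx j trivial
    choose y hy using hx'
    rw [map_zero, ← h fun i => (y (i, 0) : ℂ) + Complex.I * y (i, 1),
      ← MvPolynomial.coe_aeval_eq_eval, RingHom.coe_coe, aeval_bind₁,
      ← MvPolynomial.coe_aeval_eq_eval, RingHom.coe_coe]
    congr 2
    ext ⟨i, k⟩
    fin_cases k
    · simp [f, conjPair, hy]
    · simp [f, conjPair, ← hy, sub_eq_add_neg]
  have hr : bind₁ f' (bind₁ f r) = r := by
    rw [bind₁_bind₁]
    conv_rhs => rw [← aeval_X_left_apply r]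
    change aeval _ r = _
    congr 2
    ext1 ⟨i, k⟩
    have h2 : (C (1 / 2) + C (1 / 2) : MvPolynomial (Fin 3 × Fin 2) ℂ) = 1 := by
      rw [← C_add]; norm_num
    have hI : (C Complex.I * C (-Complex.I / 2) : MvPolynomial (Fin 3 × Fin 2) ℂ)
        = C (1 / 2) := by
      rw [← C_mul]; congr 1; linear_combination (-1 / 2) * Complex.I_mul_I
    have hf0 : f' (i, 0) = C (1 / 2) * (X (i, 0) + X (i, 1)) := rfl
    have hf1 : f' (i, 1) = C (-Complex.I / 2) * (X (i, 0) - X (i, 1)) := rfl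
    fin_cases k
    · change bind₁ f' (X (i, 0) + C Complex.I * X (i, 1)) = X (i, 0)
      rw [map_add, map_mul, bind₁_X_right, bind₁_X_right, algHom_C, algebraMap_eq, hf0, hf1]
      linear_combination X (i, 0) * h2 + (X (i, 0) - X (i, 1)) * hI
    · change bind₁ f' (X (i, 0) - C Complex.I * X (i, 1)) = X (i, 1)
      rw [map_sub, map_mul, bind₁_X_right, bind₁_X_right, algHom_C, algebraMap_eq, hf0, hf1]
      linear_combination X (i, 1) * h2 - (X (i, 0) - X (i, 1)) * hI
  rw [← hr, hs, map_zero]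

/-- Effect on coefficients of a substitution of each variable by a multiple of another. -/
lemma coeff_bind₁_monomial_map {σ : Type*} (τ : Equiv.Perm σ) (t : σ → ℂ)
    (q : MvPolynomial σ ℂ) (m : σ →₀ ℕ) :
    coeff (m.mapDomain τ) (bind₁ (fun i => C (t i) * X (τ i)) q)
      = (m.prod fun i k => t i ^ k) * coeff m q := by
  classical
  induction q using MvPolynomial.induction_on' with
  | add p q hp hq => simp only [map_add, coeff_add, hp, hq, mul_add]
  | monomial u a =>
    have e : bind₁ (fun i => C (t i) * X (τ i)) (monomial u a)
        = monomial (u.mapDomain τ) (a * u.prod fun i k => t i ^ k) := by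
      rw [bind₁_monomial, monomial_eq (s := u.mapDomain τ), C_mul, mul_assoc,
        Finsupp.prod_mapDomain_index (by simp) (by intros; rw [pow_add])]
      congr 1
      simp only [Finsupp.prod, mul_pow, Finset.prod_mul_distrib, map_prod, map_pow]
    rw [e, coeff_monomial, coeff_monomial]
    by_cases hm : u = m
    · simp [hm, mul_comm]
    · rw [if_neg hm, if_neg fun h => hm (Finsupp.mapDomain_injective τ.injective h), mul_zero]

/-- Invariance under a monomial transformation `zᵢ ↦ tᵢ z_{s i}` relates the coefficients
of `p` in the variables `z, z̄`. -/
lemma coeff_complexify_of_invariant {p : MvPolynomial (Fin 3 × Fin 2) ℝ}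
    (s : Equiv.Perm (Fin 3)) (t : Fin 3 → ℂ)
    (hp : ∀ v : Fin 3 → ℂ, eval (coords fun i => t i * v (s i)) p = eval (coords v) p)
    (m : Fin 3 × Fin 2 →₀ ℕ) :
    coeff (m.mapDomain (s.prodCongr (Equiv.refl _))) (complexify p)
      = (m.prod fun j k => conjPair t j ^ k) * coeff m (complexify p) := by
  have h : bind₁ (fun j => C (conjPair t j) * X (s.prodCongr (Equiv.refl _) j)) (complexify p)
      = complexify p := by
    rw [← sub_eq_zero]
    refine eq_zero_of_eval_conjPair fun v => ?_
    rw [map_sub, eval_complexify, ← hp v, ← eval_complexify, sub_eq_zero,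
      ← MvPolynomial.coe_aeval_eq_eval, RingHom.coe_coe, aeval_bind₁,
      ← MvPolynomial.coe_aeval_eq_eval, RingHom.coe_coe]
    congr 2
    ext ⟨i, k⟩
    fin_cases k <;> simp [conjPair]
  rw [← coeff_bind₁_monomial_map, h]

lemma prod_conjPair (t : Fin 3 → ℂ) (m : Fin 3 × Fin 2 →₀ ℕ) :
    (m.prod fun j k => conjPair t j ^ k)
      = t 0 ^ m (0, 0) * (starRingEnd ℂ) (t 0) ^ m (0, 1)
        * (t 1 ^ m (1, 0) * (starRingEnd ℂ) (t 1) ^ m (1, 1))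
        * (t 2 ^ m (2, 0) * (starRingEnd ℂ) (t 2) ^ m (2, 1)) := by
  rw [Finsupp.prod_fintype _ _ (by simp), Fintype.prod_prod_type]
  simp [Fin.prod_univ_three, Fin.prod_univ_two, conjPair]

lemma degree_eq_sum (m : Fin 3 × Fin 2 →₀ ℕ) :
    m.degree = m (0, 0) + m (0, 1) + (m (1, 0) + m (1, 1)) + (m (2, 0) + m (2, 1)) := by
  rw [Finsupp.degree_eq_sum, Fintype.sum_prod_type]
  simp [Fin.sum_univ_three, Fin.sum_univ_two]

/-- The exponent of `zᵢ z̄ᵢ`. -/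
noncomputable def normSqExp (i : Fin 3) : Fin 3 × Fin 2 →₀ ℕ :=
  Finsupp.single (i, 0) 1 + Finsupp.single (i, 1) 1

lemma finsupp_ext6 {m n : Fin 3 × Fin 2 →₀ ℕ} (h00 : m (0, 0) = n (0, 0))
    (h01 : m (0, 1) = n (0, 1)) (h10 : m (1, 0) = n (1, 0)) (h11 : m (1, 1) = n (1, 1))
    (h20 : m (2, 0) = n (2, 0)) (h21 : m (2, 1) = n (2, 1)) : m = n := by
  ext ⟨i, k⟩
  fin_cases i <;> fin_cases k <;> assumption

lemma normSqExp_injective : Function.Injective normSqExp := by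
  intro i j h
  have := DFunLike.congr_fun h (i, 0)
  by_contra hij
  simp [normSqExp, Ne.symm hij] at this

lemma polyLap_sum_sq (r : ℝ) :
    polyLap (C r * ∑ j, X j ^ 2 : MvPolynomial (Fin 3 × Fin 2) ℝ) = C (12 * r) := by
  have h : ∀ i : Fin 3 × Fin 2, pderiv i (pderiv i
      (C r * ∑ j, X j ^ 2 : MvPolynomial (Fin 3 × Fin 2) ℝ)) = C (2 * r) := fun i => by
    have h1 : pderiv i (∑ j, X j ^ 2 : MvPolynomial (Fin 3 × Fin 2) ℝ) = 2 * X i := by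
      rw [map_sum, Finset.sum_eq_single i]
      · simp [Derivation.leibniz_pow]
      · intro j _ hj
        simp [Derivation.leibniz_pow, pderiv_X_of_ne hj]
      · simp
    rw [pderiv_C_mul, h1, pderiv_C_mul, show (2 : MvPolynomial (Fin 3 × Fin 2) ℝ) = C 2 from rfl,
      pderiv_C_mul, pderiv_X_self, C_mul]
    simp [mul_comm]
  simp only [polyLap, h, Finset.sum_const, Finset.card_univ, Fintype.card_prod, Fintype.card_fin]
  rw [nsmul_eq_mul, ← map_natCast (C (R := ℝ) (σ := Fin 3 × Fin 2)), ← C_mul]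
  congr 1
  push_cast
  ring

/-! ### Invariants of degree at most three -/

/-- The exponents `aᵢ` of `zᵢ` and `bᵢ` of `z̄ᵢ` allowed by the weights, other than those of
`zᵢz̄ᵢ`, are those of `z₀z₁z₂` and its conjugate. -/
lemma exponent_cases {a0 a1 a2 b0 b1 b2 : ℕ}
    (h1 : 1 ≤ a0 + a1 + a2 + (b0 + b1 + b2)) (h3 : a0 + a1 + a2 + (b0 + b1 + b2) ≤ 3)
    (hdvd7 : 7 ∣ a0 + 2 * a1 + 4 * a2 + 6 * (b0 + 2 * b1 + 4 * b2))
    (hdvd3 : 3 ∣ a0 + a1 + a2 + 2 * (b0 + b1 + b2))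
    (hm0 : ¬ (a0 = 1 ∧ b0 = 1 ∧ a1 = 0 ∧ b1 = 0 ∧ a2 = 0 ∧ b2 = 0))
    (hm1 : ¬ (a0 = 0 ∧ b0 = 0 ∧ a1 = 1 ∧ b1 = 1 ∧ a2 = 0 ∧ b2 = 0))
    (hm2 : ¬ (a0 = 0 ∧ b0 = 0 ∧ a1 = 0 ∧ b1 = 0 ∧ a2 = 1 ∧ b2 = 1)) :
    ∃ a b, a0 = a ∧ a1 = a ∧ a2 = a ∧ b0 = b ∧ b1 = b ∧ b2 = b ∧
      (a = 1 ∧ b = 0 ∨ a = 0 ∧ b = 1) := by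
  refine ⟨a0, b0, ?_⟩
  have hsplit : (a0 + a1 + a2 = 1 ∧ b0 + b1 + b2 = 1) ∨ (a0 + a1 + a2 = 3 ∧ b0 + b1 + b2 = 0) ∨
      (a0 + a1 + a2 = 0 ∧ b0 + b1 + b2 = 3) := by
    generalize a0 + a1 + a2 = s at *
    generalize b0 + b1 + b2 = t at *
    clear hdvd7 hm0 hm1 hm2
    have hs : s ≤ 3 := by omega
    interval_cases s <;> omega
  rcases hsplit with ⟨hs, ht⟩ | ⟨hs, ht⟩ | ⟨hs, ht⟩
  · have ha : a0 = 1 ∧ a1 = 0 ∧ a2 = 0 ∨ a0 = 0 ∧ a1 = 1 ∧ a2 = 0 ∨ a0 = 0 ∧ a1 = 0 ∧ a2 = 1 := by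
      clear * - hs; omega
    have hb : b0 = 1 ∧ b1 = 0 ∧ b2 = 0 ∨ b0 = 0 ∧ b1 = 1 ∧ b2 = 0 ∨ b0 = 0 ∧ b1 = 0 ∧ b2 = 1 := by
      clear * - ht; omega
    rcases ha with ⟨rfl, rfl, rfl⟩ | ⟨rfl, rfl, rfl⟩ | ⟨rfl, rfl, rfl⟩ <;>
      rcases hb with ⟨rfl, rfl, rfl⟩ | ⟨rfl, rfl, rfl⟩ | ⟨rfl, rfl, rfl⟩ <;>
      simp at hm0 hm1 hm2 hdvd7
  · obtain ⟨rfl, rfl, rfl⟩ : b0 = 0 ∧ b1 = 0 ∧ b2 = 0 := by clear * - ht; omega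
    clear hdvd3 hm0 hm1 hm2 h1 h3 ht
    have ha0 : a0 ≤ 3 := by omega
    have ha1 : a1 ≤ 3 := by omega
    interval_cases a0 <;> interval_cases a1 <;> omega
  · obtain ⟨rfl, rfl, rfl⟩ : a0 = 0 ∧ a1 = 0 ∧ a2 = 0 := by clear * - hs; omega
    clear hdvd3 hm0 hm1 hm2 h1 h3 hs
    have hb0 : b0 ≤ 3 := by omega
    have hb1 : b1 ≤ 3 := by omega
    interval_cases b0 <;> interval_cases b1 <;> omega

/-- Congruences modulo `7` (from `A`) and modulo `3` (from `B³ = ζ₃`) leave, in degrees one to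
three, only the monomials `zᵢ z̄ᵢ`, `z₀z₁z₂` and its conjugate; `B` multiplies the last two by
`ζ₃` and `ζ₃²`. -/
lemma coeff_complexify_eq_zero {p : MvPolynomial (Fin 3 × Fin 2) ℝ} {d : ℕ}
    (hd1 : 1 ≤ d) (hd3 : d ≤ 3) (hp : p.IsHomogeneous d)
    (hA : ∀ v : Fin 3 → ℂ,
      eval (coords fun i => ![ζ7, ζ7 ^ 2, ζ7 ^ 4] i * v i) p = eval (coords v) p)
    (hB : ∀ v : Fin 3 → ℂ,
      eval (coords fun i => ![1, 1, ζ3] i * v (finRotate 3 i)) p = eval (coords v) p)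
    (hS : ∀ v : Fin 3 → ℂ, eval (coords fun i => ζ3 * v i) p = eval (coords v) p)
    {m : Fin 3 × Fin 2 →₀ ℕ} (hm : ∀ i, m ≠ normSqExp i) :
    coeff m (complexify p) = 0 := by
  by_contra hc
  have hid : m.mapDomain ((Equiv.refl (Fin 3)).prodCongr (Equiv.refl (Fin 2))) = m := by
    convert Finsupp.mapDomain_id
    rfl
  have hdeg := degree_eq_sum m
  have hmd : m.degree = d := by
    rw [Finsupp.degree_eq_weight_one]
    exact isHomogeneous_complexify hp hc
  have hdvd7 : 7 ∣ m (0, 0) + 2 * m (1, 0) + 4 * m (2, 0)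
      + 6 * (m (0, 1) + 2 * m (1, 1) + 4 * m (2, 1)) := by
    have h := coeff_complexify_of_invariant (Equiv.refl _) ![ζ7, ζ7 ^ 2, ζ7 ^ 4] hA m
    rw [hid, prod_conjPair, eq_comm, mul_eq_right₀ hc] at h
    rw [← ζ7_prim.pow_eq_one_iff_dvd, ← h]
    simp [conj_ζ7]
    ring
  have hdvd3 : 3 ∣ m (0, 0) + m (1, 0) + m (2, 0)
      + 2 * (m (0, 1) + m (1, 1) + m (2, 1)) := by
    have h := coeff_complexify_of_invariant (Equiv.refl _) (fun _ => ζ3) hS m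
    rw [hid, prod_conjPair, eq_comm, mul_eq_right₀ hc] at h
    rw [← ζ3_prim.pow_eq_one_iff_dvd, ← h]
    simp [conj_ζ3]
    ring
  have hm' : ∀ i, ¬ (m (0, 0) = normSqExp i (0, 0) ∧ m (0, 1) = normSqExp i (0, 1) ∧
      m (1, 0) = normSqExp i (1, 0) ∧ m (1, 1) = normSqExp i (1, 1) ∧
      m (2, 0) = normSqExp i (2, 0) ∧ m (2, 1) = normSqExp i (2, 1)) :=
    fun i ⟨h1, h2, h3, h4, h5, h6⟩ => hm i (finsupp_ext6 h1 h2 h3 h4 h5 h6)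
  obtain ⟨a, b, ha0, ha1, ha2, hb0, hb1, hb2, hab⟩ := exponent_cases
    (by omega) (by omega) hdvd7 hdvd3
    (by simpa [normSqExp] using hm' 0) (by simpa [normSqExp] using hm' 1)
    (by simpa [normSqExp] using hm' 2)
  have hrot : m.mapDomain ((finRotate 3).prodCongr (Equiv.refl (Fin 2))) = m := by
    have hap : ∀ i k, m.mapDomain ((finRotate 3).prodCongr (Equiv.refl (Fin 2)))
        (finRotate 3 i, k) = m (i, k) := fun i k =>
      Finsupp.mapDomain_apply ((finRotate 3).prodCongr (Equiv.refl (Fin 2))).injective m (i, k)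
    have h0 := fun k => (hap 2 k)
    have h1 := fun k => (hap 0 k)
    have h2 := fun k => (hap 1 k)
    rw [show finRotate 3 2 = 0 by decide] at h0
    rw [show finRotate 3 0 = 1 by decide] at h1
    rw [show finRotate 3 1 = 2 by decide] at h2
    apply finsupp_ext6 <;> simp only [h0, h1, h2, ha0, ha1, ha2, hb0, hb1, hb2]
  have h := coeff_complexify_of_invariant (finRotate 3) ![1, 1, ζ3] hB m
  rw [hrot, prod_conjPair, eq_comm, mul_eq_right₀ hc] at h
  have h' : ζ3 ^ (a + 2 * b) = 1 := by
    rw [← h, ← ha2, ← hb2]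
    simp [conj_ζ3]
    ring
  have h3 := (ζ3_prim.pow_eq_one_iff_dvd _).mp h'
  clear * - h3 hab
  omega

/-- `B` permutes the `zᵢz̄ᵢ` cyclically, so they share one coefficient. -/
lemma coeff_normSqExp_eq {p : MvPolynomial (Fin 3 × Fin 2) ℝ}
    (hB : ∀ v : Fin 3 → ℂ,
      eval (coords fun i => ![1, 1, ζ3] i * v (finRotate 3 i)) p = eval (coords v) p)
    (i : Fin 3) :
    coeff (normSqExp i) (complexify p) = coeff (normSqExp 0) (complexify p) := by
  have hstep : ∀ i, coeff (normSqExp (finRotate 3 i)) (complexify p)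
      = coeff (normSqExp i) (complexify p) := fun i => by
    have h := coeff_complexify_of_invariant (finRotate 3) ![1, 1, ζ3] hB (normSqExp i)
    have e : (normSqExp i).mapDomain ((finRotate 3).prodCongr (Equiv.refl (Fin 2)))
        = normSqExp (finRotate 3 i) := by
      simp [normSqExp, Finsupp.mapDomain_add, Finsupp.mapDomain_single]
    have hz : ζ3 * ζ3 ^ 2 = 1 := by rw [← ζ3_prim.pow_eq_one]; ring
    rw [e, prod_conjPair] at h
    rw [h]
    fin_cases i <;> simp [normSqExp, conj_ζ3, hz]
  have h1 := hstep 0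
  have h2 := hstep 1
  rw [show finRotate 3 0 = 1 by decide] at h1
  rw [show finRotate 3 1 = 2 by decide] at h2
  fin_cases i
  · rfl
  · exact h1
  · exact h2.trans h1

lemma eq_C_mul_sum_sq {p : MvPolynomial (Fin 3 × Fin 2) ℝ}
    (h0 : ∀ m, (∀ i, m ≠ normSqExp i) → coeff m (complexify p) = 0)
    (h1 : ∀ i, coeff (normSqExp i) (complexify p) = coeff (normSqExp 0) (complexify p)) :
    p = C (coeff (normSqExp 0) (complexify p)).re * ∑ j, X j ^ 2 := by
  classical
  set c := coeff (normSqExp 0) (complexify p)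
  have hq : complexify p = ∑ i, monomial (normSqExp i) c := by
    ext m
    rw [coeff_sum]
    simp only [coeff_monomial]
    by_cases hm : ∃ i, m = normSqExp i
    · obtain ⟨i, rfl⟩ := hm
      rw [h1 i, Finset.sum_eq_single i]
      · simp
      · intro j _ hj
        rw [if_neg fun h => hj (normSqExp_injective h)]
      · simp
    · push Not at hm
      rw [h0 m hm, Finset.sum_eq_zero]
      intro i _
      rw [if_neg fun h => hm i h.symm]
  refine MvPolynomial.funext fun x => ?_
  have hx : coords (fun i => ⟨x (i, 0), x (i, 1)⟩) = x := by
    ext ⟨i, k⟩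
    fin_cases k <;> simp [coords]
  have he := eval_complexify p (fun i => ⟨x (i, 0), x (i, 1)⟩)
  have hterm : ∀ i : Fin 3, eval (conjPair fun i => ⟨x (i, 0), x (i, 1)⟩)
      (monomial (normSqExp i) c) = c * ((x (i, 0) ^ 2 + x (i, 1) ^ 2 : ℝ) : ℂ) := fun i => by
    have e : (monomial (normSqExp i) c : MvPolynomial (Fin 3 × Fin 2) ℂ)
        = C c * (X (i, 0) * X (i, 1)) := by
      simp [X, normSqExp, monomial_mul, C_mul_monomial]
    rw [e]
    simp only [map_mul, eval_C, eval_X, conjPair, if_true, one_ne_zero, if_false]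
    rw [Complex.mul_conj, Complex.normSq_mk]
    congr 2
    ring
  rw [hq, map_sum, Finset.sum_congr rfl fun i _ => hterm i, ← Finset.mul_sum,
    ← Complex.ofReal_sum, hx] at he
  have hre := congrArg Complex.re he
  rw [Complex.re_mul_ofReal, Complex.ofReal_re] at hre
  rw [← hre, map_mul, eval_C, map_sum, Fintype.sum_prod_type]
  simp [Fin.sum_univ_two]

/-- Let `A = diag(ζ₇, ζ₇², ζ₇⁴) ∈ U(3)` and let `B ∈ U(3)` be the product of the cyclic
permutation matrix sending `(e₁, e₂, e₃)` to `(e₃, e₁, e₂)` with `diag(ζ₃, 1, 1)`.  Then every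
non-identity element of the subgroup `G = ⟨A, B⟩` of `U(3)` has no nonzero fixed vector in `ℂ³`
(so `G` acts freely on `S⁵`), and every `G`-invariant harmonic polynomial on `ℝ⁶ ≅ ℂ³`
homogeneous of degree `d` with `1 ≤ d ≤ 3` vanishes identically. -/
theorem free_S5_quotient_example
    (A B : Matrix.unitaryGroup (Fin 3) ℂ)
    (hA : (A : Matrix (Fin 3) (Fin 3) ℂ) = Matrix.diagonal ![ζ7, ζ7 ^ 2, ζ7 ^ 4])
    (hB : (B : Matrix (Fin 3) (Fin 3) ℂ) =
      Matrix.of ![![0, 1, 0], ![0, 0, 1], ![1, 0, 0]] * Matrix.diagonal ![ζ3, 1, 1]) :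
    (∀ g ∈ Subgroup.closure {A, B}, g ≠ 1 → ∀ v : Fin 3 → ℂ,
      Matrix.mulVec (g : Matrix (Fin 3) (Fin 3) ℂ) v = v → v = 0) ∧
    (∀ (p : MvPolynomial (Fin 3 × Fin 2) ℝ) (d : ℕ), 1 ≤ d → d ≤ 3 →
      p.IsHomogeneous d → IsHarmonic p →
      (∀ g ∈ Subgroup.closure {A, B}, ∀ v : Fin 3 → ℂ,
        eval (coords (Matrix.mulVec (g : Matrix (Fin 3) (Fin 3) ℂ) v)) p
          = eval (coords v) p) →
      p = 0) := by
  refine ⟨fun g hg h1 v hv => free_action hA hB hg h1 hv, ?_⟩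
  intro p d hd1 hd3 hp hharm hinv
  have hAmem : A ∈ Subgroup.closure {A, B} := Subgroup.subset_closure (by simp)
  have hBmem : B ∈ Subgroup.closure {A, B} := Subgroup.subset_closure (by simp)
  have hA' : ∀ v : Fin 3 → ℂ,
      eval (coords fun i => ![ζ7, ζ7 ^ 2, ζ7 ^ 4] i * v i) p = eval (coords v) p := fun v => by
    rw [← hinv A hAmem v, hA]
    congr 3
    ext i
    rw [Matrix.mulVec_diagonal]
  have hB' : ∀ v : Fin 3 → ℂ,
      eval (coords fun i => ![1, 1, ζ3] i * v (finRotate 3 i)) p = eval (coords v) p :=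
    fun v => by
    rw [← hinv B hBmem v, B_mulVec hB]
    congr 3
    ext i
    fin_cases i <;> simp
  have hS : ∀ v : Fin 3 → ℂ, eval (coords fun i => ζ3 * v i) p = eval (coords v) p :=
    fun v => by
    rw [← hinv (B ^ (3 * 1)) (pow_mem hBmem _) v, B_pow_coe hB, Matrix.smul_mulVec,
      Matrix.one_mulVec, pow_one]
    rfl
  have hsq := eq_C_mul_sum_sq (p := p)
    (fun m hm => coeff_complexify_eq_zero hd1 hd3 hp hA' hB' hS hm) (coeff_normSqExp_eq hB')
  rw [IsHarmonic, hsq, polyLap_sum_sq, C_eq_zero] at hharm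
  rw [hsq, (mul_eq_zero.mp hharm).resolve_left (by norm_num), C_0, zero_mul]
end

section
/- Let G be any finite subgroup of SO(3) isomorphic to the alternating group A₅ (the rotation group of the icosahedron). Then there exists a nonzero G-invariant harmonic polynomial on ℝ³ homogeneous of degree 6, and every G-invariant harmonic polynomial homogeneous of degree d with 1 ≤ d ≤ 5 is identically zero. -/
/-!
Write `ρ : A₅ → SO(3)` for the inclusion of `G`. Everything is read off from traces. By
Cayley–Hamilton, `A³ = t A² - t A + 1` for `A ∈ SO(3)` with trace `t`, so `t = -1`, `t = 0`,
`t² = t + 1` according as `A` has order `2`, `3`, `5` (`tr_two`, `tr_three`, `tr_five`).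
Fix the involution `s = (0 1)(2 3)`. Its image is the half-turn `2uuᵀ - 1` about a unit vector `u`
(`exists_axis`), and `(u · ρ(a)u)² = (1 + tr ρ(w)) / 4` with `w = s a s a⁻¹` (`sq_axis`), so the
angles between the axes in the orbit of `u` are determined by the orders of elements of `A₅`,
which are computed by `decide`.

*Degrees 1 to 5.* Let `c = (0 1 2)`, which generates a copy of `A₄` together with `s`. The vectors
`u, ρ(c)u, ρ(c²)u` form an orthonormal frame (`exists_frame`) in which `s` acts as
`diag(1, -1, -1)` and `c` as a cyclic permutation of the coordinates. Comparing coefficients, a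
harmonic form of degree `1 ≤ d ≤ 5` with these symmetries is a multiple of `xyz` or of
`x⁴ + y⁴ + z⁴ - 3(x²y² + y²z² + z²x²)` (`tetra_classify`). There is `g ∈ A₅` for which `ρ(g)u` has
squared coordinates `1/4, z, 3/4 - z` with `z² = (12 z - 1)/16`; comparing the values at `u` and
at `ρ(g)u` kills both forms.

*Degree 6.* Average over the group the zonal harmonic
`231 (u·x)⁶ - 315 (u·x)⁴|x|² + 105 (u·x)²|x|⁴ - 5|x|⁶`, which is `16 P₆(u·x)` on the unit sphere.
The sum over the group is invariant and harmonic, and its value at `u` is `165/4 ≠ 0`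
(`sum_zonal`).
-/

open MvPolynomial

/-- The substitution `x ↦ g·x` on polynomials: the variable `xᵢ` is replaced by
`Σⱼ gᵢⱼ xⱼ`, so that `(aeval (matSub g) p)(x) = p(g·x)`. -/
noncomputable def matSub {m : ℕ} (g : Matrix (Fin m) (Fin m) ℝ) :
    Fin m → MvPolynomial (Fin m) ℝ :=
  fun i => ∑ j, MvPolynomial.C (g i j) * MvPolynomial.X j

open Matrix

/-- Real `3 × 3` matrices. -/
abbrev M3 := Matrix (Fin 3) (Fin 3) ℝ

/-! ### Linear substitutions in polynomials -/

theorem aeval_matSub_comp {m : ℕ} (A B : Matrix (Fin m) (Fin m) ℝ) (p : MvPolynomial (Fin m) ℝ) :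
    aeval (matSub A) (aeval (matSub B) p) = aeval (matSub (B * A)) p := by
  have : (aeval (matSub A)).comp (aeval (matSub B)) = aeval (R := ℝ) (matSub (B * A)) := by
    ext1 i
    simp only [AlgHom.comp_apply, aeval_X, matSub, map_sum, map_mul, algHom_C, algebraMap_eq,
      Matrix.mul_apply, Finset.sum_mul, Finset.mul_sum]
    rw [Finset.sum_comm]
    simp only [mul_assoc]
  rw [← this]; rfl

theorem eval_aeval_matSub {m : ℕ} (A : Matrix (Fin m) (Fin m) ℝ) (p : MvPolynomial (Fin m) ℝ)
    (x : Fin m → ℝ) : eval x (aeval (matSub A) p) = eval (A *ᵥ x) p := by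
  have : (aeval (R := ℝ) x).comp (aeval (matSub A)) = aeval (R := ℝ) (A *ᵥ x) := by
    ext1 i
    simp [matSub, mulVec, dotProduct]
  have := congrArg (fun f => f p) this
  simpa [aeval_eq_eval] using this

theorem isHomogeneous_aeval_matSub {m n : ℕ} (A : Matrix (Fin m) (Fin m) ℝ)
    {p : MvPolynomial (Fin m) ℝ} (hp : p.IsHomogeneous n) :
    (aeval (matSub A) p).IsHomogeneous n := by
  have := hp.aeval (matSub A) (n := 1) (fun i => IsHomogeneous.sum _ _ _ fun j _ => by
    simpa using (isHomogeneous_C _ (A i j)).mul (isHomogeneous_X ℝ j))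
  simpa using this

/-- The chain rule for a linear substitution. -/
theorem pderiv_aeval_matSub {m : ℕ} (A : Matrix (Fin m) (Fin m) ℝ) (p : MvPolynomial (Fin m) ℝ)
    (i : Fin m) : pderiv i (aeval (matSub A) p) =
      ∑ j, C (A j i) * aeval (matSub A) (pderiv j p) := by
  induction p using MvPolynomial.induction_on with
  | C a => simp
  | add p q hp hq => simp only [map_add, hp, hq, mul_add, Finset.sum_add_distrib]
  | mul_X p k hp =>
    have hk : pderiv i (matSub A k) = C (A k i) := by
      simp [matSub, pderiv_X, Pi.single_apply]
    simp only [map_mul, aeval_X, Derivation.leibniz, smul_eq_mul, hp, hk, map_add, mul_add,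
      Finset.sum_add_distrib, pderiv_X]
    congr 1
    · simp [Pi.single_apply, apply_ite, mul_comm]
    · rw [Finset.mul_sum]; exact Finset.sum_congr rfl fun j _ => by ring

/-- The Laplacian commutes with orthogonal substitutions. -/
theorem polyLap_aeval_matSub {m : ℕ} {A : Matrix (Fin m) (Fin m) ℝ} (hA : A * Aᵀ = 1)
    (p : MvPolynomial (Fin m) ℝ) :
    polyLap (aeval (matSub A) p) = aeval (matSub A) (polyLap p) := by
  simp only [polyLap, pderiv_aeval_matSub, map_sum, pderiv_C_mul, Finset.mul_sum]
  have h : ∀ j k, ∑ i, A j i * A k i = if j = k then 1 else 0 := fun j k => by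
    rw [← Matrix.one_apply, ← hA, Matrix.mul_apply]; rfl
  rw [Finset.sum_comm]
  refine Finset.sum_congr rfl fun j _ => ?_
  rw [Finset.sum_comm]
  calc _ = ∑ k, C (∑ i, A j i * A k i) * aeval (matSub A) (pderiv k (pderiv j p)) := by
        refine Finset.sum_congr rfl fun k _ => ?_
        rw [map_sum, Finset.sum_mul]
        exact Finset.sum_congr rfl fun i _ => by rw [C_mul, mul_assoc]
    _ = _ := by simp [h]

/-! ### The zonal harmonic of degree six -/

/-- The polynomial `|x|²` on `ℝ³`. -/
noncomputable def normSqPoly : MvPolynomial (Fin 3) ℝ := ∑ i, X i ^ 2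

/-- The linear form `x ↦ u · x` on `ℝ³`. -/
noncomputable def linForm (u : Fin 3 → ℝ) : MvPolynomial (Fin 3) ℝ := ∑ i, C (u i) * X i

/-- The zonal harmonic of degree `6` with axis `u`: the homogenized Legendre polynomial
`16 P₆(u · x)`, harmonic when `u` is a unit vector. -/
noncomputable def zonal (u : Fin 3 → ℝ) : MvPolynomial (Fin 3) ℝ :=
  C 231 * linForm u ^ 6 - C 315 * (linForm u ^ 4 * normSqPoly)
    + C 105 * (linForm u ^ 2 * normSqPoly ^ 2) - C 5 * normSqPoly ^ 3

theorem zonal_harmonic {u : Fin 3 → ℝ} (hu : u ⬝ᵥ u = 1) : IsHarmonic (zonal u) := by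
  have h1 : ∀ i, pderiv i (linForm u) = C (u i) := fun i => by
    simp [linForm, pderiv_X, Pi.single_apply]
  have h2 : ∀ i, pderiv i normSqPoly = 2 * X i := fun i => by
    simp [normSqPoly, pderiv_X, Pi.single_apply]
  have huu : (C (u 0) ^ 2 + C (u 1) ^ 2 + C (u 2) ^ 2 : MvPolynomial (Fin 3) ℝ) = 1 := by
    rw [← C_pow, ← C_pow, ← C_pow, ← C_add, ← C_add, ← C_1, ← hu]
    congr 1; simp [dotProduct, Fin.sum_univ_three]; ring
  have hl : linForm u = C (u 0) * X 0 + C (u 1) * X 1 + C (u 2) * X 2 := by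
    simp [linForm, Fin.sum_univ_three]
  have hr : normSqPoly = X 0 ^ 2 + X 1 ^ 2 + X 2 ^ 2 := by simp [normSqPoly, Fin.sum_univ_three]
  have hc : ∀ (n : ℕ) [n.AtLeastTwo],
      (C (OfNat.ofNat n : ℝ) : MvPolynomial (Fin 3) ℝ) = OfNat.ofNat n :=
    fun n _ => map_ofNat C n
  have h0 : ∀ (i : Fin 3) (n : ℕ) [n.AtLeastTwo],
      pderiv i (OfNat.ofNat n : MvPolynomial (Fin 3) ℝ) = 0 := fun i n _ => by
    rw [← hc, pderiv_C]
  -- `linForm u` and `normSqPoly` are kept as atoms; the relations `huu`, `hl`, `hr` are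
  -- applied only afterwards
  have key : polyLap (zonal u) = (6930 * linForm u ^ 4 - 3780 * (linForm u ^ 2 * normSqPoly)
      + 210 * normSqPoly ^ 2) * (C (u 0) ^ 2 + C (u 1) ^ 2 + C (u 2) ^ 2)
      + (-1260 * 4 * linForm u ^ 3 + 420 * 4 * linForm u * normSqPoly)
        * (C (u 0) * X 0 + C (u 1) * X 1 + C (u 2) * X 2 - linForm u)
      + (420 * 2 * linForm u ^ 2 - 120 * normSqPoly) * (X 0 ^ 2 + X 1 ^ 2 + X 2 ^ 2 - normSqPoly)
      - (6930 * linForm u ^ 4 - 3780 * (linForm u ^ 2 * normSqPoly)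
      + 210 * normSqPoly ^ 2) := by
    simp only [polyLap, zonal, Fin.sum_univ_three, map_add, map_sub, pderiv_pow, h0, h1, h2,
      Derivation.leibniz, pderiv_C, pderiv_X_self, smul_eq_mul, hc, Nat.cast_ofNat, map_zero,
      Nat.reduceSub]
    ring_nf
  rw [IsHarmonic, key, huu, ← hl, ← hr]; ring

theorem zonal_homogeneous (u : Fin 3 → ℝ) : (zonal u).IsHomogeneous 6 := by
  have hl : (linForm u).IsHomogeneous 1 := IsHomogeneous.sum _ _ _ fun j _ => by
    simpa using (isHomogeneous_C _ (u j)).mul (isHomogeneous_X ℝ j)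
  have hr : normSqPoly.IsHomogeneous 2 := IsHomogeneous.sum _ _ _ fun j _ => by
    simpa using (isHomogeneous_X ℝ j).pow 2
  have hC : ∀ (c : ℝ) {p : MvPolynomial (Fin 3) ℝ}, p.IsHomogeneous 6 → (C c * p).IsHomogeneous 6 :=
    fun c p hp => by simpa using (isHomogeneous_C _ c).mul hp
  exact (((hC _ (hl.pow 6)).sub (hC _ ((hl.pow 4).mul hr))).add
    (hC _ ((hl.pow 2).mul (hr.pow 2)))).sub (hC _ (hr.pow 3))

theorem eval_zonal (u x : Fin 3 → ℝ) (hx : x ⬝ᵥ x = 1) : eval x (zonal u) =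
    231 * (u ⬝ᵥ x) ^ 6 - 315 * (u ⬝ᵥ x) ^ 4 + 105 * (u ⬝ᵥ x) ^ 2 - 5 := by
  have hl : eval x (linForm u) = u ⬝ᵥ x := by simp [linForm, dotProduct]
  have hr : eval x normSqPoly = 1 := by rw [← hx]; simp [normSqPoly, dotProduct, sq]
  simp [zonal, hl, hr]

/-! ### Harmonic forms with tetrahedral symmetry -/

/-- The exponent vector `(i, j, k)`. -/
noncomputable def expo (i j k : ℕ) : Fin 3 →₀ ℕ := Finsupp.equivFunOnFinite.symm ![i, j, k]

@[simp]
theorem expo_zero (i j k : ℕ) : expo i j k 0 = i := rfl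

@[simp]
theorem expo_one (i j k : ℕ) : expo i j k 1 = j := rfl

@[simp]
theorem expo_two (i j k : ℕ) : expo i j k 2 = k := rfl

theorem expo_surj (m : Fin 3 →₀ ℕ) : m = expo (m 0) (m 1) (m 2) := by
  ext i; fin_cases i <;> simp [expo]

theorem expo_inj {i j k i' j' k' : ℕ} : expo i j k = expo i' j' k' ↔ i = i' ∧ j = j' ∧ k = k' := by
  constructor
  · intro h
    exact ⟨by simpa using DFunLike.congr_fun h 0, by simpa using DFunLike.congr_fun h 1,
      by simpa using DFunLike.congr_fun h 2⟩
  · rintro ⟨rfl, rfl, rfl⟩; rfl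

theorem monomial_expo (i j k : ℕ) (a : ℝ) :
    monomial (expo i j k) a = C a * (X 0 ^ i * X 1 ^ j * X 2 ^ k) := by
  rw [monomial_eq, Finsupp.prod_fintype _ _ (by simp), Fin.prod_univ_three]
  simp

/-- Effect on coefficients of the substitution `(x, y, z) ↦ (x, -y, -z)`. -/
theorem coeff_flip (p : MvPolynomial (Fin 3) ℝ) (i j k : ℕ) :
    coeff (expo i j k) (aeval (matSub !![1, 0, 0; 0, -1, 0; 0, 0, -1]) p)
      = (-1) ^ (j + k) * coeff (expo i j k) p := by
  induction p using MvPolynomial.induction_on' with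
  | add p q hp hq => simp only [map_add, coeff_add, hp, hq, mul_add]
  | monomial m a =>
    have : aeval (matSub !![1, 0, 0; 0, -1, 0; 0, 0, -1]) (monomial m a)
        = monomial m ((-1) ^ (m 1 + m 2) * a) := by
      rw [expo_surj m, monomial_expo, monomial_expo]
      simp [matSub, Fin.sum_univ_three, algebraMap_eq, neg_pow (X _ : MvPolynomial (Fin 3) ℝ), pow_add]
      ring
    rw [this, coeff_monomial, coeff_monomial]
    split_ifs with h
    · rw [h]; simp
    · simp

/-- Effect on coefficients of the substitution `(x, y, z) ↦ (z, x, y)`. -/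
theorem coeff_cycle (p : MvPolynomial (Fin 3) ℝ) (i j k : ℕ) :
    coeff (expo i j k) (aeval (matSub !![0, 0, 1; 1, 0, 0; 0, 1, 0]) p)
      = coeff (expo k i j) p := by
  induction p using MvPolynomial.induction_on' with
  | add p q hp hq => simp only [map_add, coeff_add, hp, hq]
  | monomial m a =>
    have : aeval (matSub !![0, 0, 1; 1, 0, 0; 0, 1, 0]) (monomial m a)
        = monomial (expo (m 1) (m 2) (m 0)) a := by
      rw [monomial_expo, expo_surj m, monomial_expo]
      simp [matSub, Fin.sum_univ_three, algebraMap_eq]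
      exact Or.inl (by ring)
    rw [this, expo_surj m, coeff_monomial, coeff_monomial]
    congr 1
    simp only [expo_inj, eq_iff_iff]
    simp
    tauto

theorem coeff_lap (p : MvPolynomial (Fin 3) ℝ) (i j k : ℕ) :
    coeff (expo i j k) (polyLap p) = (i + 2) * (i + 1) * coeff (expo (i + 2) j k) p
      + (j + 2) * (j + 1) * coeff (expo i (j + 2) k) p
      + (k + 2) * (k + 1) * coeff (expo i j (k + 2)) p := by
  have e0 : expo i j k + Finsupp.single 0 1 + Finsupp.single 0 1 = expo (i + 2) j k := by
    ext l; fin_cases l <;> simp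
  have e1 : expo i j k + Finsupp.single 1 1 + Finsupp.single 1 1 = expo i (j + 2) k := by
    ext l; fin_cases l <;> simp
  have e2 : expo i j k + Finsupp.single 2 1 + Finsupp.single 2 1 = expo i j (k + 2) := by
    ext l; fin_cases l <;> simp
  simp only [polyLap, Fin.sum_univ_three, coeff_add, coeff_pderiv, e0, e1, e2]
  simp
  ring

theorem eval_expo {p : MvPolynomial (Fin 3) ℝ} {d : ℕ} (hp : p.IsHomogeneous d) (x : Fin 3 → ℝ) :
    eval x p = ∑ i ∈ Finset.range (d + 1), ∑ j ∈ Finset.range (d + 1), ∑ k ∈ Finset.range (d + 1),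
      coeff (expo i j k) p * (x 0 ^ i * x 1 ^ j * x 2 ^ k) := by
  have hdeg : ∀ i j k, coeff (expo i j k) p ≠ 0 → i + j + k = d := fun i j k h => by
    by_contra hc
    refine h (hp.coeff_eq_zero ?_)
    simpa [Finsupp.degree_eq_sum, Fin.sum_univ_three] using hc
  have e : p = ∑ i ∈ Finset.range (d + 1), ∑ j ∈ Finset.range (d + 1),
      ∑ k ∈ Finset.range (d + 1), monomial (expo i j k) (coeff (expo i j k) p) := by
    ext m
    rw [expo_surj m]
    generalize m 0 = i, m 1 = j, m 2 = k
    simp only [coeff_sum, coeff_monomial, expo_inj]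
    by_cases h : coeff (expo i j k) p = 0
    · rw [h, eq_comm]
      refine Finset.sum_eq_zero fun a _ => Finset.sum_eq_zero fun b _ => Finset.sum_eq_zero fun c _ => ?_
      split_ifs with h'
      · obtain ⟨rfl, rfl, rfl⟩ := h'; exact h
      · rfl
    · have := hdeg _ _ _ h
      rw [Finset.sum_eq_single_of_mem i (by simp; omega), Finset.sum_eq_single_of_mem j (by simp; omega),
        Finset.sum_eq_single_of_mem k (by simp; omega)]
      · simp
      · intro b _ hb; simp [hb]
      · intro b _ hb; simp [hb]
      · intro b _ hb; simp [hb]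
  conv_lhs => rw [e]
  simp [monomial_expo]

/-- Harmonic forms of degree `1` to `5` invariant under the rotation group of the tetrahedron
with half-turn axes along the coordinate axes. In degrees `1`, `2`, `5` the form vanishes, which is
the case `a = 0` of either alternative. -/
theorem tetra_classify {p : MvPolynomial (Fin 3) ℝ} {d : ℕ} (h1 : 1 ≤ d) (h5 : d ≤ 5)
    (hp : p.IsHomogeneous d) (hh : IsHarmonic p)
    (hf : aeval (matSub !![1, 0, 0; 0, -1, 0; 0, 0, -1]) p = p)
    (hc : aeval (matSub !![0, 0, 1; 1, 0, 0; 0, 1, 0]) p = p) :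
    ∃ a : ℝ, (a = 0 → p = 0) ∧ ((∀ x, eval x p = a * (x 0 * x 1 * x 2)) ∨
      ∀ x, eval x p = a * (x 0 ^ 4 + x 1 ^ 4 + x 2 ^ 4
        - 3 * (x 0 ^ 2 * x 1 ^ 2 + x 1 ^ 2 * x 2 ^ 2 + x 2 ^ 2 * x 0 ^ 2))) := by
  have hz : (∀ x, eval x p = 0) → p = 0 := fun h => MvPolynomial.funext fun x => by rw [h x, map_zero]
  suffices h : ∃ a : ℝ, ((∀ x, eval x p = a * (x 0 * x 1 * x 2)) ∨
      ∀ x, eval x p = a * (x 0 ^ 4 + x 1 ^ 4 + x 2 ^ 4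
        - 3 * (x 0 ^ 2 * x 1 ^ 2 + x 1 ^ 2 * x 2 ^ 2 + x 2 ^ 2 * x 0 ^ 2))) by
    obtain ⟨a, h⟩ := h
    refine ⟨a, fun ha => hz fun x => ?_, h⟩
    rcases h with h | h <;> rw [h, ha, zero_mul]
  have hdeg : ∀ i j k, i + j + k ≠ d → coeff (expo i j k) p = 0 := fun i j k h =>
    hp.coeff_eq_zero (by simpa [Finsupp.degree_eq_sum, Fin.sum_univ_three] using h)
  have hcyc : ∀ i j k, coeff (expo i j k) p = coeff (expo k i j) p := fun i j k => by
    conv_lhs => rw [← hc, coeff_cycle]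
  have hodd : ∀ i j k, Odd (j + k) → coeff (expo i j k) p = 0 := fun i j k h => by
    have : coeff (expo i j k) p = (-1) ^ (j + k) * coeff (expo i j k) p := by
      conv_lhs => rw [← hf, coeff_flip]
    rw [h.neg_one_pow] at this; linarith
  have hodd' : ∀ i j k, Odd (i + k) → coeff (expo i j k) p = 0 := fun i j k h => by
    rw [hcyc, hcyc]; apply hodd; rwa [add_comm]
  have hlap : ∀ i j k : ℕ, ((i:ℝ) + 2) * (i + 1) * coeff (expo (i + 2) j k) p
      + (j + 2) * (j + 1) * coeff (expo i (j + 2) k) p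
      + (k + 2) * (k + 1) * coeff (expo i j (k + 2)) p = 0 := fun i j k => by
    rw [← coeff_lap, hh, coeff_zero]
  -- only exponents that have equal parity and sum to `d` contribute
  have hpar : ∀ i j k, ¬ (i + j + k = d ∧ (i + k) % 2 = 0 ∧ (j + k) % 2 = 0) →
      coeff (expo i j k) p = 0 := fun i j k h => by
    by_cases a : i + j + k = d
    · by_cases b : (i + k) % 2 = 0
      · exact hodd _ _ _ (Nat.odd_iff.2 (by omega))
      · exact hodd' _ _ _ (Nat.odd_iff.2 (by omega))
    · exact hdeg _ _ _ a
  simp only [eval_expo hp]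
  obtain rfl | rfl | rfl | rfl | rfl : d = 1 ∨ d = 2 ∨ d = 3 ∨ d = 4 ∨ d = 5 := by omega
  · refine ⟨0, Or.inl fun x => ?_⟩
    simp [Finset.sum_range_succ, hpar]
  · have l := hlap 0 0 0
    have r := hcyc 2 0 0
    have r' := hcyc 0 2 0
    norm_num at l
    have z : coeff (expo 2 0 0) p = 0 := by linarith
    refine ⟨0, Or.inl fun x => ?_⟩
    simp [Finset.sum_range_succ, hpar, ← r', ← r, z]
  · refine ⟨coeff (expo 1 1 1) p, Or.inl fun x => ?_⟩
    simp [Finset.sum_range_succ, hpar]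
  · have l := hlap 2 0 0
    norm_num at l
    refine ⟨coeff (expo 4 0 0) p, Or.inr fun x => ?_⟩
    have r := hcyc 4 0 0
    have r' := hcyc 0 4 0
    have r2 := hcyc 2 2 0
    have r2' := hcyc 0 2 2
    have z : coeff (expo 2 2 0) p = -3 * coeff (expo 4 0 0) p := by linarith
    simp [Finset.sum_range_succ, hpar, ← r', ← r, ← r2', ← r2, z]
    ring
  · have l := hlap 1 1 1
    have r := hcyc 3 1 1
    have r' := hcyc 1 3 1
    norm_num at l
    have z : coeff (expo 3 1 1) p = 0 := by linarith
    refine ⟨0, Or.inl fun x => ?_⟩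
    simp [Finset.sum_range_succ, hpar, ← r', ← r, z]

/-! ### Rotations and their traces -/

theorem adj_eq {A : M3} (h : A * Aᵀ = 1) (hd : A.det = 1) : A.adjugate = Aᵀ := by
  have h2 := A.adjugate_mul
  calc A.adjugate = A.adjugate * (A * Aᵀ) := by rw [h, mul_one]
    _ = Aᵀ := by rw [← mul_assoc, h2, hd]; simp

/-- The Cayley–Hamilton identity for `3 × 3` matrices. -/
theorem cayley (A : M3) : A * A * A = A.trace • (A * A) - A.adjugate.trace • A + A.det • 1 := by
  ext i j
  fin_cases i <;> fin_cases j <;>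
  simp [Matrix.mul_apply, Fin.sum_univ_three, Matrix.trace, Matrix.adjugate_fin_three, Matrix.det_fin_three] <;> ring

theorem cayleySO {A : M3} (h : A * Aᵀ = 1) (hd : A.det = 1) :
    A * A * A = A.trace • (A * A) - A.trace • A + 1 := by
  rw [cayley A, adj_eq h hd, hd, trace_transpose, one_smul]

theorem tr_two {A : M3} (h : A * Aᵀ = 1) (hd : A.det = 1) (h2 : A * A = 1) (h1 : A ≠ 1) :
    A.trace = -1 := by
  have := cayleySO h hd
  rw [h2, one_mul] at this
  by_contra hc
  apply h1
  have h3 : (1 + A.trace) • (A - 1) = 0 := by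
    linear_combination (norm := module) this
  rcases smul_eq_zero.1 h3 with h4 | h4
  · exact absurd (by linarith) hc
  · exact sub_eq_zero.1 h4

theorem tr_three {A : M3} (h : A * Aᵀ = 1) (hd : A.det = 1) (h2 : A * A * A = 1) (h1 : A ≠ 1) :
    A.trace = 0 := by
  have := cayleySO h hd
  rw [h2] at this
  have h3 : A.trace • (A * A - A) = 0 := by
    linear_combination (norm := module) -this
  rcases smul_eq_zero.1 h3 with h4 | h4
  · exact h4
  · exfalso; apply h1
    have h5 : A * A = A := sub_eq_zero.1 h4
    rw [h5, h5] at h2; exact h2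

theorem eq_one_of_tr {A : M3} (h : A * Aᵀ = 1) (ht : A.trace = 3) : A = 1 := by
  have h0 : ((A - 1) * (A - 1)ᵀ).trace = 0 := by
    rw [transpose_sub, transpose_one, sub_mul, mul_sub, mul_sub, h]
    simp [ht]
  have := (Matrix.trace_mul_conjTranspose_self_eq_zero_iff (A := A - 1)).1 (by
    rw [conjTranspose_eq_transpose_of_trivial]; exact h0)
  exact sub_eq_zero.1 this

theorem tr_five {A : M3} (h : A * Aᵀ = 1) (hd : A.det = 1) (h2 : A * A * A * A * A = 1) (h1 : A ≠ 1) :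
    A.trace ^ 2 = A.trace + 1 := by
  have c := cayleySO h hd
  set t := A.trace with ht
  -- the traces of the powers satisfy a linear recurrence; `A⁴ = Aᵀ` and `A⁵ = 1` close it up
  have hT : A * A * A * A = Aᵀ := by
    calc A * A * A * A = A * A * A * A * (A * Aᵀ) := by rw [h, mul_one]
      _ = Aᵀ := by rw [← mul_assoc, h2, one_mul]
  have t2 : (A * A).trace = t ^ 2 - 2 * t := by
    have e : (A * A).trace = A.trace ^ 2 - 2 * A.adjugate.trace := by
      simp [Matrix.mul_apply, Fin.sum_univ_three, Matrix.trace, Matrix.adjugate_fin_three]; ring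
    rw [e, adj_eq h hd, trace_transpose]
  have t3 : (A * A * A).trace = t * (A * A).trace - t * t + 3 := by
    rw [c]; simp [← ht]
  have t4 : (A * A * A * A).trace = t * (A * A * A).trace - t * (A * A).trace + t := by
    rw [c, add_mul, sub_mul, smul_mul_assoc, smul_mul_assoc, ]
    simp only [trace_add, trace_sub, trace_smul, one_mul, ← c, smul_eq_mul, ← ht]
  have t5 : (A * A * A * A * A).trace = t * (A * A * A * A).trace - t * (A * A * A).trace + (A * A).trace := by
    have e : A * A * A * A * A = t • (A * A * A * A) - t • (A * A * A) + A * A := by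
      conv_lhs => rw [c]
      simp only [add_mul, sub_mul, smul_mul_assoc, one_mul]
    rw [e, trace_add, trace_sub, trace_smul, trace_smul, smul_eq_mul, smul_eq_mul]
  rw [h2, t4, t3, t2] at t5
  rw [hT, trace_transpose, ← ht, t3, t2] at t4
  simp at t5
  have ht0 : t ≠ 0 := by intro h; rw [h] at t5; norm_num at t5
  have ht3 : t - 3 ≠ 0 := fun h3 => h1 (eq_one_of_tr h (by linarith))
  have : t * (t - 3) * (t ^ 2 - t - 1) = 0 := by linear_combination -t4
  have := (mul_eq_zero.1 this).resolve_left (mul_ne_zero ht0 ht3)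
  linarith

/-- An involution in `SO(3)` is a half-turn about some axis. -/
theorem exists_axis {S : M3} (h : S * Sᵀ = 1) (hd : S.det = 1) (h2 : S * S = 1) (h1 : S ≠ 1) :
    ∃ u : Fin 3 → ℝ, u ⬝ᵥ u = 1 ∧ S = (2 : ℝ) • vecMulVec u u - 1 := by
  have ht := tr_two h hd h2 h1
  have hsym : Sᵀ = S := by
    calc Sᵀ = S * S * Sᵀ := by rw [h2, one_mul]
      _ = S := by rw [mul_assoc, h, mul_one]
  have hadj : S.adjugate = S := by rw [adj_eq h hd, hsym]
  -- all 2 × 2 minors of `P = (1 + S) / 2` vanish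
  obtain ⟨P, hP⟩ : ∃ P : M3, P = (2⁻¹ : ℝ) • (1 + S) := ⟨_, rfl⟩
  have hS : S = (2 : ℝ) • P - 1 := by rw [hP, smul_smul]; simp
  have hPadj : P.adjugate = 0 := by
    have e : P.adjugate = (4⁻¹ : ℝ) • (1 + (S.trace • 1 - S) + S.adjugate) := by
      rw [hP]; ext i j
      fin_cases i <;> fin_cases j <;>
      simp [Matrix.adjugate_fin_three, Matrix.trace, Fin.sum_univ_three] <;> ring
    rw [e, hadj, ht]; module
  have hPs : Pᵀ = P := by rw [hP]; simp [hsym]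
  have hPt : P.trace = 1 := by rw [hP]; simp [ht]; norm_num
  have hPP : P * P = P := by
    rw [hP, smul_mul_smul_comm, add_mul, mul_add, mul_add, h2, one_mul, mul_one, one_mul]
    ext i j; simp; ring
  have m : ∀ i j k, P i j * P i k = P i i * P j k := by
    have s : ∀ i j, P i j = P j i := fun i j => congrFun (congrFun hPs j) i
    rw [Matrix.adjugate_fin_three] at hPadj
    have g := fun i j => congrFun (congrFun hPadj i) j
    simp only [Fin.forall_fin_succ] at g
    simp [s 1 0, s 2 0, s 2 1] at g
    intro i j k
    fin_cases i <;> fin_cases j <;> fin_cases k <;> simp [s 1 0, s 2 0, s 2 1] <;> linarith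
  obtain ⟨i, hi⟩ : ∃ i, P i i ≠ 0 := by
    by_contra hc; push Not at hc
    simp [Matrix.trace, hc] at hPt
  have hi0 : 0 < P i i := by
    refine lt_of_le_of_ne ?_ hi.symm
    have : (P * P) i i = P i i := by rw [hPP]
    rw [← this, Matrix.mul_apply]
    refine Finset.sum_nonneg fun j _ => ?_
    rw [show P j i = P i j from congrFun (congrFun hPs i) j]
    exact mul_self_nonneg _
  have hu : vecMulVec (fun j => P i j / √(P i i)) (fun j => P i j / √(P i i)) = P := by
    ext j k
    rw [vecMulVec_apply, div_mul_div_comm, Real.mul_self_sqrt hi0.le, m]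
    field_simp
  refine ⟨fun j => P i j / √(P i i), ?_, ?_⟩
  · rw [← trace_vecMulVec, hu, hPt]
  · rw [hu, hS]

/-- If `S` is the half-turn about `u`, the squared cosine of the angle between the axes `u` and
`A u` is determined by the trace of `S (A S Aᵀ)`, the product of the half-turns about them. -/
theorem sq_axis {S A : M3} {u : Fin 3 → ℝ} (hu : u ⬝ᵥ u = 1) (hS : S = (2 : ℝ) • vecMulVec u u - 1)
    (h : A * Aᵀ = 1) : (u ⬝ᵥ A *ᵥ u) ^ 2 = (1 + (S * A * S * Aᵀ).trace) / 4 := by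
  have hA' : Aᵀ * A = 1 := mul_eq_one_comm.1 h
  set P := vecMulVec u u with hP
  have e : S * A * S * Aᵀ = (4:ℝ) • (P * (A * P * Aᵀ)) - (2:ℝ) • P * (A * Aᵀ) - (2:ℝ) • (A * P * Aᵀ) + A * Aᵀ := by
    rw [hS]
    simp only [sub_mul, mul_sub, smul_mul_assoc, mul_smul_comm, mul_one, one_mul, mul_assoc]
    module
  have tP : P.trace = 1 := by rw [hP, trace_vecMulVec, hu]
  have t1 : (A * P * Aᵀ).trace = 1 := by rw [mul_assoc, trace_mul_comm, mul_assoc, hA', mul_one, tP]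
  have t2 : (P * (A * P * Aᵀ)).trace = (u ⬝ᵥ A *ᵥ u) ^ 2 := by
    rw [hP, mul_vecMulVec, vecMulVec_mul (A *ᵥ u), vecMulVec_mul_vecMulVec, trace_vecMulVec, dotProduct_smul, vecMul_transpose, smul_eq_mul]
    ring
  rw [e, h, mul_one]
  simp [t1, t2, tP]; ring

/-! ### Computations in `A₅` -/

/-- The alternating group `A₅`. -/
abbrev A5 : Type := alternatingGroup (Fin 5)

/-- The involution `(0 1)(2 3)`. -/
def sA : A5 :=
  ⟨Equiv.swap 0 1 * Equiv.swap 2 3, by rw [Equiv.Perm.mem_alternatingGroup]; decide⟩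

/-- The 3-cycle `(0 1 2)`. -/
def cA : A5 :=
  ⟨Equiv.swap 0 1 * Equiv.swap 1 2, by rw [Equiv.Perm.mem_alternatingGroup]; decide⟩

/-- The product `s (a s a⁻¹)` of the involution `s` and its conjugate by `a`. -/
def wA (a : A5) : A5 := sA * a * sA * a⁻¹

theorem s_sq : sA * sA = 1 := by decide +kernel

theorem s_ne : sA ≠ 1 := by decide +kernel

theorem c_cube : cA * (cA * cA) = 1 := by decide +kernel

theorem w_c : wA cA ≠ 1 ∧ (wA cA) ^ 2 = 1 := by decide +kernel

theorem w_cc : wA (cA * cA) ≠ 1 ∧ (wA (cA * cA)) ^ 2 = 1 := by decide +kernel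

/-- The element used to exclude the tetrahedral invariants of degrees `3` and `4`. -/
theorem exists_order_three_five : ∃ g, wA g ≠ 1 ∧ (wA g) ^ 3 = 1 ∧
    (wA (cA⁻¹ * g)) ≠ 1 ∧ (wA (cA⁻¹ * g)) ^ 5 = 1 := by decide +kernel

theorem wA_pow_cases : ∀ a, wA a = 1 ∨ (wA a) ^ 2 = 1 ∨ (wA a) ^ 3 = 1 ∨ (wA a) ^ 5 = 1 := by
  decide +kernel

theorem card_A5 : (Finset.univ : Finset A5).card = 60 := by decide +kernel

theorem card_wA_one : (Finset.univ.filter fun a => wA a = 1).card = 4 := by decide +kernel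

theorem card_wA_two : (Finset.univ.filter fun a => (wA a) ^ 2 = 1).card = 12 := by decide +kernel

theorem card_wA_three : (Finset.univ.filter fun a => (wA a) ^ 3 = 1).card = 20 := by
  decide +kernel

/-! ### Icosahedral representations -/

section rep

variable {ρ : A5 →* M3} (hO : ∀ a, ρ a * (ρ a)ᵀ = 1) (hD : ∀ a, (ρ a).det = 1)
  (hI : Function.Injective ρ) {u : Fin 3 → ℝ} (hu : u ⬝ᵥ u = 1)
  (hS : ρ sA = (2 : ℝ) • vecMulVec u u - 1)

include hO

theorem rho_inv (a : A5) : ρ a⁻¹ = (ρ a)ᵀ := by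
  calc ρ a⁻¹ = ρ a⁻¹ * (ρ a * (ρ a)ᵀ) := by rw [hO, mul_one]
    _ = (ρ a)ᵀ := by rw [← mul_assoc, ← map_mul]; simp

theorem dot_orbit (a b : A5) : (ρ a *ᵥ u) ⬝ᵥ (ρ b *ᵥ u) = u ⬝ᵥ ρ (a⁻¹ * b) *ᵥ u := by
  rw [map_mul, rho_inv hO, ← mulVec_mulVec, ← vecMul_transpose, ← dotProduct_mulVec]

include hu hS

theorem sq_dot (a : A5) : (u ⬝ᵥ ρ a *ᵥ u) ^ 2 = (1 + (ρ (wA a)).trace) / 4 := by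
  rw [sq_axis hu hS (hO a), wA]; simp only [map_mul, rho_inv hO]

theorem sq_dot_one {a : A5} (h : wA a = 1) : (u ⬝ᵥ ρ a *ᵥ u) ^ 2 = 1 := by
  rw [sq_dot hO hu hS, h, map_one]; simp; norm_num

include hD hI

theorem sq_dot_two {a : A5} (h1 : wA a ≠ 1) (h : wA a ^ 2 = 1) : (u ⬝ᵥ ρ a *ᵥ u) ^ 2 = 0 := by
  rw [sq_dot hO hu hS, tr_two (hO _) (hD _)]
  · norm_num
  · rw [← map_mul, ← sq, h, map_one]
  · rw [← map_one ρ]; exact hI.ne h1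

theorem sq_dot_three {a : A5} (h1 : wA a ≠ 1) (h : wA a ^ 3 = 1) :
    (u ⬝ᵥ ρ a *ᵥ u) ^ 2 = 1 / 4 := by
  rw [sq_dot hO hu hS, tr_three (hO _) (hD _)]
  · norm_num
  · rw [← map_mul, ← map_mul, ← sq, ← pow_succ, h, map_one]
  · rw [← map_one ρ]; exact hI.ne h1

theorem sq_dot_five {a : A5} (h1 : wA a ≠ 1) (h : wA a ^ 5 = 1) :
    ((u ⬝ᵥ ρ a *ᵥ u) ^ 2) ^ 2 = (12 * (u ⬝ᵥ ρ a *ᵥ u) ^ 2 - 1) / 16 := by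
  have := tr_five (hO (wA a)) (hD _) (by
    rw [← map_mul, ← map_mul, ← map_mul, ← map_mul, ← sq, ← pow_succ, ← pow_succ, ← pow_succ, h,
      map_one]) (by rw [← map_one ρ]; exact hI.ne h1)
  rw [sq_dot hO hu hS]
  linear_combination this / 16

/-- The orthogonal matrix `h` with columns `u, ρ(c)u, ρ(c²)u`, together with the coordinates of the
orbit of `u` and the action of `s` and `c` in this frame. -/
theorem exists_frame : ∃ h : M3, h * hᵀ = 1 ∧ hᵀ * h = 1 ∧ (∀ a, hᵀ *ᵥ (ρ a *ᵥ u) =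
      ![u ⬝ᵥ ρ a *ᵥ u, u ⬝ᵥ ρ (cA⁻¹ * a) *ᵥ u, u ⬝ᵥ ρ ((cA * cA)⁻¹ * a) *ᵥ u]) ∧
    h *ᵥ ![1, 0, 0] = u ∧
    ρ sA * h = h * !![1, 0, 0; 0, -1, 0; 0, 0, -1] ∧
    ρ cA * h = h * !![0, 0, 1; 1, 0, 0; 0, 1, 0] := by
  have d1 : u ⬝ᵥ ρ cA *ᵥ u = 0 :=
    pow_eq_zero_iff two_ne_zero |>.1 (sq_dot_two hO hD hI hu hS w_c.1 w_c.2)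
  have d2 : u ⬝ᵥ ρ (cA * cA) *ᵥ u = 0 :=
    pow_eq_zero_iff two_ne_zero |>.1 (sq_dot_two hO hD hI hu hS w_cc.1 w_cc.2)
  have hframe : ∀ a, of ![u, ρ cA *ᵥ u, ρ (cA * cA) *ᵥ u] *ᵥ (ρ a *ᵥ u) =
      ![u ⬝ᵥ ρ a *ᵥ u, u ⬝ᵥ ρ (cA⁻¹ * a) *ᵥ u, u ⬝ᵥ ρ ((cA * cA)⁻¹ * a) *ᵥ u] := fun a => by
    rw [← dot_orbit hO, ← dot_orbit hO]
    ext i; fin_cases i <;> rfl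
  have hself : ∀ a, (ρ a *ᵥ u) ⬝ᵥ (ρ a *ᵥ u) = 1 := fun a => by
    rw [dot_orbit hO]; simp [hu]
  have d3 : (ρ cA *ᵥ u) ⬝ᵥ (ρ (cA * cA) *ᵥ u) = 0 := by
    rw [dot_orbit hO, inv_mul_cancel_left, d1]
  have horth : of ![u, ρ cA *ᵥ u, ρ (cA * cA) *ᵥ u] *
      (of ![u, ρ cA *ᵥ u, ρ (cA * cA) *ᵥ u])ᵀ = 1 := by
    ext i j
    rw [Matrix.mul_apply']
    fin_cases i <;> fin_cases j
    · exact hu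
    · exact d1
    · exact d2
    · exact (dotProduct_comm _ _).trans d1
    · exact hself _
    · exact d3
    · exact (dotProduct_comm _ _).trans d2
    · exact (dotProduct_comm _ _).trans d3
    · exact hself _
  refine ⟨(of ![u, ρ cA *ᵥ u, ρ (cA * cA) *ᵥ u])ᵀ, ?_, ?_, ?_, ?_, ?_, ?_⟩
  · rw [transpose_transpose]; exact mul_eq_one_comm.1 horth
  · rw [transpose_transpose]; exact horth
  · rw [transpose_transpose]; exact hframe
  · ext i; simp [mulVec, dotProduct, Fin.sum_univ_three]
  · have hs : ∀ x, ρ sA *ᵥ x = (2 * (u ⬝ᵥ x)) • u - x := fun x => by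
      rw [hS, sub_mulVec, smul_mulVec, vecMulVec_mulVec, one_mulVec]
      ext i; simp; ring
    have e : ∀ j, (ρ sA * (of ![u, ρ cA *ᵥ u, ρ (cA * cA) *ᵥ u])ᵀ).col j =
        ρ sA *ᵥ (![u, ρ cA *ᵥ u, ρ (cA * cA) *ᵥ u] j) := fun j => rfl
    ext i j
    have := congrFun (e j) i
    rw [col_apply, hs] at this
    rw [this]
    fin_cases j
    · simp [hu, Matrix.mul_apply, Fin.sum_univ_three]; ring
    · simp [d1, Matrix.mul_apply, Fin.sum_univ_three]
    · simp only [Fin.reduceFinMk, cons_val, d2]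
      simp [Matrix.mul_apply, Fin.sum_univ_three]
  · have e : ∀ j, (ρ cA * (of ![u, ρ cA *ᵥ u, ρ (cA * cA) *ᵥ u])ᵀ).col j =
        ρ cA *ᵥ (![u, ρ cA *ᵥ u, ρ (cA * cA) *ᵥ u] j) := fun j => rfl
    ext i j
    have := congrFun (e j) i
    rw [col_apply] at this
    rw [this]
    fin_cases j
    · simp [Matrix.mul_apply, Fin.sum_univ_three]
    · simp [Matrix.mul_apply, Fin.sum_univ_three]
    · simp only [Fin.reduceFinMk, cons_val, mulVec_mulVec, ← map_mul, c_cube]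
      simp [Matrix.mul_apply, Fin.sum_univ_three]

/-- The vector `ρ(a)u` has unit length, expressed in the frame `u, ρ(c)u, ρ(c²)u`. -/
theorem sum_sq_dot (a : A5) : (u ⬝ᵥ ρ a *ᵥ u) ^ 2 + (u ⬝ᵥ ρ (cA⁻¹ * a) *ᵥ u) ^ 2
    + (u ⬝ᵥ ρ ((cA * cA)⁻¹ * a) *ᵥ u) ^ 2 = 1 := by
  obtain ⟨h, h1, -, hf, -⟩ := exists_frame hO hD hI hu hS
  have : (hᵀ *ᵥ (ρ a *ᵥ u)) ⬝ᵥ (hᵀ *ᵥ (ρ a *ᵥ u)) = 1 := by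
    rw [dotProduct_mulVec, vecMul_transpose, mulVec_mulVec, h1, one_mulVec, dot_orbit hO]
    simp [hu]
  rw [hf, vec3_dotProduct] at this
  simp only [cons_val] at this
  linear_combination this

theorem vanish_of_invariant {p : MvPolynomial (Fin 3) ℝ} {d : ℕ} (h1 : 1 ≤ d) (h5 : d ≤ 5)
    (hp : p.IsHomogeneous d) (hh : IsHarmonic p) (hinv : ∀ a, aeval (matSub (ρ a)) p = p) :
    p = 0 := by
  obtain ⟨h, hh1, hh2, hf, he, hs, hc⟩ := exists_frame hO hD hI hu hS
  obtain ⟨g, g1, g3, g1', g5⟩ := exists_order_three_five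
  have hconj : ∀ (a : A5) (B : M3), ρ a * h = h * B →
      aeval (matSub B) (aeval (matSub h) p) = aeval (matSub h) p := fun a B hB => by
    rw [aeval_matSub_comp, ← hB, ← aeval_matSub_comp, hinv]
  obtain ⟨a, ha, hcl⟩ := tetra_classify h1 h5 (isHomogeneous_aeval_matSub h hp)
    (by rw [IsHarmonic, polyLap_aeval_matSub hh1, hh, map_zero]) (hconj _ _ hs) (hconj _ _ hc)
  -- in the frame `h`, the points `u` and `ρ(g)u` of one orbit take the same value
  have key : eval ![1, 0, 0] (aeval (matSub h) p)
      = eval (hᵀ *ᵥ (ρ g *ᵥ u)) (aeval (matSub h) p) := by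
    rw [eval_aeval_matSub, eval_aeval_matSub, he, mulVec_mulVec, hh1, one_mulVec,
      ← eval_aeval_matSub, hinv]
  have z0 := sq_dot_three hO hD hI hu hS g1 g3
  have z1 := sq_dot_five hO hD hI hu hS g1' g5
  have z2 := sum_sq_dot hO hD hI hu hS g
  rw [hf] at key
  set y0 := u ⬝ᵥ ρ g *ᵥ u
  set y1 := u ⬝ᵥ ρ (cA⁻¹ * g) *ᵥ u
  set y2 := u ⬝ᵥ ρ ((cA * cA)⁻¹ * g) *ᵥ u
  have z2' : y2 ^ 2 = 3 / 4 - y1 ^ 2 := by linarith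
  have ha0 : a = 0 := by
    rcases hcl with hcl | hcl <;> rw [hcl, hcl] at key <;> simp at key
    · have hy : (y0 * y1 * y2) ^ 2 = 1 / 64 := by
        rw [mul_pow, mul_pow, z0, z2']; linear_combination (-1 / 4) * z1
      rcases key with h | h
      · exact h
      · exfalso
        have : y0 * y1 * y2 = 0 := by rcases h with (h | h) | h <;> simp [h]
        rw [this] at hy; norm_num at hy
    · have hy : y0 ^ 4 + y1 ^ 4 + y2 ^ 4 - 3 * (y0 ^ 2 * y1 ^ 2 + y1 ^ 2 * y2 ^ 2 + y2 ^ 2 * y0 ^ 2)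
          = -1 / 4 := by
        have e0 : y0 ^ 4 = (y0 ^ 2) ^ 2 := by ring
        have e1 : y1 ^ 4 = (y1 ^ 2) ^ 2 := by ring
        have e2 : y2 ^ 4 = (y2 ^ 2) ^ 2 := by ring
        rw [e0, e1, e2, z0, z2']; linear_combination 5 * z1
      rw [hy] at key; linarith
  have hid := aeval_matSub_comp hᵀ h p
  rw [ha ha0, map_zero, hh1] at hid
  rw [hid]
  have : matSub (1 : M3) = X := by
    funext i; simp [matSub, Matrix.one_apply]
  rw [this, aeval_X_left_apply]

theorem sum_orbit_sq : ∑ a, (u ⬝ᵥ ρ a *ᵥ u) ^ 2 = 20 := by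
  have h : ∑ a, ((u ⬝ᵥ ρ a *ᵥ u) ^ 2 + (u ⬝ᵥ ρ (cA⁻¹ * a) *ᵥ u) ^ 2
    + (u ⬝ᵥ ρ ((cA * cA)⁻¹ * a) *ᵥ u) ^ 2) = 60 := by
    simp only [sum_sq_dot hO hD hI hu hS, Finset.sum_const, card_A5]; norm_num
  have sh : ∀ b : A5, ∑ a, (u ⬝ᵥ ρ (b * a) *ᵥ u) ^ 2 = ∑ a, (u ⬝ᵥ ρ a *ᵥ u) ^ 2 := fun b =>
    Equiv.sum_comp (Equiv.mulLeft b) fun a => (u ⬝ᵥ ρ a *ᵥ u) ^ 2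
  rw [Finset.sum_add_distrib, Finset.sum_add_distrib, sh, sh] at h
  linarith

/-- The value at `u` of the group sum of the zonal harmonic with axis `u`. -/
theorem sum_zonal : ∑ a, (231 * (u ⬝ᵥ ρ a *ᵥ u) ^ 6 - 315 * (u ⬝ᵥ ρ a *ᵥ u) ^ 4
    + 105 * (u ⬝ᵥ ρ a *ᵥ u) ^ 2 - 5) = 165 / 4 := by
  -- modulo `z² = (12 z - 1) / 16`, with `z = (u · ρ(a)u)²`, the summand is
  -- `247 / 64 - (63 / 4) z`; the indicator terms correct this for `w` of order `3`, `2`, `1`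
  have hL : ∀ a, 231 * (u ⬝ᵥ ρ a *ᵥ u) ^ 6 - 315 * (u ⬝ᵥ ρ a *ᵥ u) ^ 4
      + 105 * (u ⬝ᵥ ρ a *ᵥ u) ^ 2 - 5 = 247 / 64 - 63 / 4 * (u ⬝ᵥ ρ a *ᵥ u) ^ 2
        + 21 / 4 * (if wA a ^ 3 = 1 then 1 else 0) - 567 / 64 * (if wA a ^ 2 = 1 then 1 else 0)
        + 63 / 2 * (if wA a = 1 then 1 else 0) := fun a => by
    have e6 : (u ⬝ᵥ ρ a *ᵥ u) ^ 6 = ((u ⬝ᵥ ρ a *ᵥ u) ^ 2) ^ 3 := by ring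
    have e4 : (u ⬝ᵥ ρ a *ᵥ u) ^ 4 = ((u ⬝ᵥ ρ a *ᵥ u) ^ 2) ^ 2 := by ring
    rw [e6, e4]
    by_cases w1 : wA a = 1
    · rw [sq_dot_one hO hu hS w1]; simp [w1]; norm_num
    by_cases w2 : wA a ^ 2 = 1
    · have w3 : wA a ^ 3 ≠ 1 := fun h => w1 (by rwa [pow_succ, w2, one_mul] at h)
      rw [sq_dot_two hO hD hI hu hS w1 w2]; simp [w1, w2, w3]; norm_num
    by_cases w3 : wA a ^ 3 = 1
    · rw [sq_dot_three hO hD hI hu hS w1 w3]; simp [w1, w2, w3]; norm_num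
    have w5 : wA a ^ 5 = 1 := by have := wA_pow_cases a; tauto
    have h5 := sq_dot_five hO hD hI hu hS w1 w5
    simp only [w1, w2, w3, if_false]
    linear_combination (231 * (u ⬝ᵥ ρ a *ᵥ u) ^ 2 + 231 * 12 / 16 - 315) * h5
  simp only [hL]
  rw [Finset.sum_add_distrib, Finset.sum_sub_distrib, Finset.sum_add_distrib,
    Finset.sum_sub_distrib, ← Finset.mul_sum, ← Finset.mul_sum, ← Finset.mul_sum, ← Finset.mul_sum,
    sum_orbit_sq hO hD hI hu hS, Finset.sum_boole, Finset.sum_boole, Finset.sum_boole,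
    card_wA_one, card_wA_two, card_wA_three, Finset.sum_const, card_A5]
  norm_num

theorem exists_deg_six : ∃ p : MvPolynomial (Fin 3) ℝ, p ≠ 0 ∧ p.IsHomogeneous 6 ∧ IsHarmonic p ∧
    ∀ a, aeval (matSub (ρ a)) p = p := by
  refine ⟨∑ a, aeval (matSub (ρ a)) (zonal u), ?_, ?_, ?_, ?_⟩
  · intro h0
    have h := congrArg (eval u) h0
    rw [map_zero, map_sum] at h
    have he : ∀ a, eval u (aeval (matSub (ρ a)) (zonal u)) = 231 * (u ⬝ᵥ ρ a *ᵥ u) ^ 6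
        - 315 * (u ⬝ᵥ ρ a *ᵥ u) ^ 4 + 105 * (u ⬝ᵥ ρ a *ᵥ u) ^ 2 - 5 := fun a => by
      rw [eval_aeval_matSub, eval_zonal]
      rw [dot_orbit hO]; simp [hu]
    simp only [he, sum_zonal hO hD hI hu hS] at h
    norm_num at h
  · exact IsHomogeneous.sum _ _ _ fun a _ => isHomogeneous_aeval_matSub _ (zonal_homogeneous u)
  · have hadd : ∀ a, polyLap (aeval (matSub (ρ a)) (zonal u)) = 0 := fun a => by
      rw [polyLap_aeval_matSub (hO a), zonal_harmonic hu, map_zero]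
    simp only [polyLap] at hadd
    simp only [IsHarmonic, polyLap, map_sum]
    rw [Finset.sum_comm]
    exact Finset.sum_eq_zero fun a _ => hadd a
  · intro b
    rw [map_sum]
    simp only [aeval_matSub_comp, ← map_mul]
    exact Equiv.sum_comp (Equiv.mulRight b) fun a => aeval (matSub (ρ a)) (zonal u)

end rep

/-- For any finite subgroup `G` of `SO(3)` isomorphic to the alternating group `A₅`
(the icosahedral rotation group), there is a nonzero `G`-invariant harmonic polynomial on `ℝ³`
homogeneous of degree `6`, while every `G`-invariant harmonic polynomial homogeneous of degree
`d` with `1 ≤ d ≤ 5` vanishes identically. -/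
theorem icosahedral_invariant_harmonics
    (G : Subgroup (Matrix.orthogonalGroup (Fin 3) ℝ)) (hfin : Finite G)
    (hdet : ∀ g ∈ G, ((g : Matrix (Fin 3) (Fin 3) ℝ)).det = 1)
    (hiso : Nonempty (G ≃* alternatingGroup (Fin 5))) :
    (∃ p : MvPolynomial (Fin 3) ℝ, p ≠ 0 ∧ p.IsHomogeneous 6 ∧ IsHarmonic p ∧
      ∀ g ∈ G, aeval (matSub (g : Matrix (Fin 3) (Fin 3) ℝ)) p = p) ∧
    (∀ (p : MvPolynomial (Fin 3) ℝ) (d : ℕ), 1 ≤ d → d ≤ 5 →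
      p.IsHomogeneous d → IsHarmonic p →
      (∀ g ∈ G, aeval (matSub (g : Matrix (Fin 3) (Fin 3) ℝ)) p = p) →
      p = 0) := by
  obtain ⟨e⟩ := hiso
  let ρ : A5 →* M3 := (Submonoid.subtype _).comp (G.subtype.comp e.symm.toMonoidHom)
  have hO : ∀ a, ρ a * (ρ a)ᵀ = 1 := fun a =>
    (Matrix.mem_orthogonalGroup_iff (Fin 3) ℝ).1 (e.symm a : Matrix.orthogonalGroup (Fin 3) ℝ).2
  have hD : ∀ a, (ρ a).det = 1 := fun a => hdet _ (e.symm a).2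
  have hI : Function.Injective ρ := fun a b h =>
    e.symm.injective (Subtype.ext (Subtype.ext h))
  have hG : ∀ g ∈ G, ∃ a, ρ a = (g : M3) := fun g hg => ⟨e ⟨g, hg⟩, by
    change ((e.symm (e ⟨g, hg⟩) : G) : M3) = g
    rw [e.symm_apply_apply]⟩
  obtain ⟨u, hu, hS⟩ := exists_axis (hO sA) (hD sA) (by rw [← map_mul, s_sq, map_one])
    (by rw [← map_one ρ]; exact hI.ne s_ne)
  constructor
  · obtain ⟨p, h0, h6, hh, hinv⟩ := exists_deg_six hO hD hI hu hS
    refine ⟨p, h0, h6, hh, fun g hg => ?_⟩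
    obtain ⟨a, ha⟩ := hG g hg
    rw [← ha, hinv]
  · intro p d h1 h5 hp hh hinv
    exact vanish_of_invariant hO hD hI hu hS h1 h5 hp hh fun a => hinv _ (e.symm a).2
end

section
/- Let G be any finite subgroup of SO(3) isomorphic to the alternating group A₅. Then the dimensions of the spaces of G-invariant homogeneous polynomials on ℝ³ of degrees 0, 1, 2, 3, 4, 5, 6 are 1, 0, 1, 0, 1, 0, 2 respectively. -/
/-!
The group is brought to a standard form in which the invariants can be read off.

Fix an isomorphism with `A₅`. The Klein four-group of `A₄ ⊂ A₅` consists of commuting half-turns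
permuted cyclically by a 3-cycle, so an axis of one half-turn and its images under the 3-cycle form
an orthonormal basis in which `A₄` acts by sign changes and cyclic permutations (`exists_frame`).
A further involution `s` is a symmetric orthogonal matrix. Its products with the Klein four-group
have orders 2, 3, 5, 5, and the trace of a rotation of order 2, 3, 5 is `-1`, `0`, a root of
`φ ^ 2 = φ + 1` (`rot_two`, `rot_three`, `rot_five`). This fixes the diagonal of `s`, hence all its
entries up to signs, which a conjugation in the Klein four-group normalizes (`normal_form`).

In these coordinates, invariance under `A₄` leaves very few free coefficients (`model_coeffs`), and
evaluating the invariance under `s` at one or two points leaves only powers of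
`x² + y² + z²` and, in degree six, one more polynomial, the product of the linear forms of the six
fivefold axes (`sext`). That these are invariant under the whole group follows from invariance
under the generators, which generate `A₅` by `gen_top`.
-/

open MvPolynomial

/-- The space of `G`-invariant polynomials on `ℝ³`, for `G` a subgroup of `O(3)`. -/
noncomputable def invariantSubmodule (G : Subgroup (Matrix.orthogonalGroup (Fin 3) ℝ)) :
    Submodule ℝ (MvPolynomial (Fin 3) ℝ) where
  carrier := {p | ∀ g ∈ G, aeval (matSub (g : Matrix (Fin 3) (Fin 3) ℝ)) p = p}
  add_mem' := by
    intro a b ha hb g hg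
    rw [map_add, ha g hg, hb g hg]
  zero_mem' := by
    intro g hg
    rw [map_zero]
  smul_mem' := by
    intro c p hp g hg
    rw [map_smul, hp g hg]

/-- The space of `G`-invariant homogeneous polynomials of degree `d` on `ℝ³`. -/
noncomputable def invariantHomogeneous (G : Subgroup (Matrix.orthogonalGroup (Fin 3) ℝ))
    (d : ℕ) : Submodule ℝ (MvPolynomial (Fin 3) ℝ) :=
  homogeneousSubmodule (Fin 3) ℝ d ⊓ invariantSubmodule G

namespace Icosahedral

open Matrix

/-! ### Generators of the alternating group -/

/-- The abstract group `A₅`. -/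
abbrev A5 := alternatingGroup (Fin 5)

/-- The involution `(0 1)(2 3)`. -/
def pu : A5 := ⟨c[0,1] * c[2,3], by rw [Equiv.Perm.mem_alternatingGroup]; decide⟩
/-- The 3-cycle `(0 1 2)`, which cyclically permutes `pu`, `pv`, `pu * pv` by conjugation. -/
def pt : A5 := ⟨c[0,1,2], by rw [Equiv.Perm.mem_alternatingGroup]; decide⟩
/-- The involution `(0 1)(2 4)`, outside the point stabilizer `A₄` of `4`. -/
def ps : A5 := ⟨c[0,1] * c[2,4], by rw [Equiv.Perm.mem_alternatingGroup]; decide⟩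
/-- The involution `(0 3)(1 2)`; with `pu` it generates the Klein four-group of `A₄`. -/
def pv : A5 := pt * pu * pt⁻¹

lemma pu_sq : pu * pu = 1 := by decide
lemma pv_sq : pv * pv = 1 := by decide
lemma ps_sq : ps * ps = 1 := by decide
lemma pt_cube : pt * (pt * pt) = 1 := by decide
lemma pt_pu : pt * pu = pv * pt := by decide
lemma pt_pv : pt * pv = pu * pv * pt := by decide
lemma pu_pt : pu * pt = pt * (pu * pv) := by decide
lemma pu_pv : pu * pv = pv * pu := by decide
lemma pus_cube : (pu * ps) ^ 3 = 1 := by decide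
set_option maxRecDepth 4000 in
lemma pvs_five : (pv * ps) ^ 5 = 1 := by decide
set_option maxRecDepth 4000 in
lemma pws_five : (pu * pv * ps) ^ 5 = 1 := by decide

/-- A subgroup containing the three generators has order divisible by `2 * 3 * 5`, hence index at
most two, and a simple group has no subgroup of index two. -/
lemma gen_top (H : Subgroup A5) (hu : pu ∈ H) (ht : pt ∈ H) (hs : ps ∈ H) : H = ⊤ := by
  have hv : pv ∈ H := H.mul_mem (H.mul_mem ht hu) (H.inv_mem ht)
  have key : ∀ (g : A5) (n : ℕ), g ∈ H → g ^ n = 1 → g ≠ 1 → n.Prime → n ∣ Nat.card H := by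
    intro g n hg h1 h2 hn
    have := Fact.mk hn
    rw [← orderOf_eq_prime h1 h2]
    exact Subgroup.orderOf_dvd_natCard H hg
  have h2 := key pu 2 hu (by decide) (by decide) (by norm_num)
  have h3 := key pt 3 ht (by decide) (by decide) (by norm_num)
  have h5 := key (pv * ps) 5 (H.mul_mem hv hs) pvs_five (by decide) (by norm_num)
  have h60 : Nat.card A5 = 60 := by
    rw [nat_card_alternatingGroup]; simp [Nat.factorial]
  have hmul := H.card_mul_index
  rw [h60] at hmul
  have h30 : 30 ∣ Nat.card H := by lia
  have hidx : H.index = 1 ∨ H.index = 2 := by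
    obtain ⟨k, hk⟩ := h30
    rw [hk] at hmul
    have h : k * H.index = 2 := by nlinarith
    have : H.index ∣ 2 := ⟨k, by rw [← h, mul_comm]⟩
    exact (Nat.dvd_prime Nat.prime_two).1 this
  rcases hidx with h | h
  · exact Subgroup.index_eq_one.1 h
  · have := Subgroup.normal_of_index_eq_two h
    have : IsSimpleGroup A5 := alternatingGroup.isSimpleGroup (by simp)
    rcases IsSimpleGroup.eq_bot_or_eq_top_of_normal H inferInstance with h | h
    · subst h
      have : pu = 1 := by simpa using hu
      exact absurd this (by decide)
    · exact h

/-! ### Traces of rotations of small order -/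

/-- Real `3 × 3` matrices. -/
abbrev M3 := Matrix (Fin 3) (Fin 3) ℝ

/-- Cayley–Hamilton for a rotation: since the adjugate is the transpose, the two middle
coefficients of the characteristic polynomial are both given by the trace. -/
lemma rot_poly (M : M3) (h : Mᵀ * M = 1) (hd : M.det = 1) :
    Polynomial.aeval M (Polynomial.X ^ 3 - Polynomial.C M.trace * Polynomial.X ^ 2 +
      Polynomial.C M.trace * Polynomial.X - 1 : Polynomial ℝ) = 0 := by
  have hadj : M.adjugate = Mᵀ := by
    have h1 : M * M.adjugate = 1 := by rw [Matrix.mul_adjugate, hd, one_smul]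
    calc M.adjugate = (Mᵀ * M) * M.adjugate := by rw [h, one_mul]
      _ = Mᵀ := by rw [mul_assoc, h1, mul_one]
  have ht : M.adjugate.trace = M.trace := by rw [hadj, Matrix.trace_transpose]
  have CH : M * M * M - M.trace • (M * M) + M.adjugate.trace • M - M.det • (1 : M3) = 0 := by
    rw [Matrix.adjugate_fin_three, Matrix.det_fin_three, Matrix.trace_fin_three,
      Matrix.trace_fin_three]
    ext i j
    fin_cases i <;> fin_cases j <;>
      simp [Matrix.mul_apply, Fin.sum_univ_three] <;> ring
  rw [ht, hd] at CH
  rw [← CH]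
  simp only [map_sub, map_add, map_mul, Polynomial.aeval_X, Polynomial.aeval_C, map_one,
    Algebra.algebraMap_eq_smul_one, smul_mul_assoc, one_mul, pow_succ, pow_zero]
  module

/-- If a multiple `c * (X - 1)` lies in the ideal of two polynomials that annihilate `M ≠ 1`, then
`c = 0`. The trace of a rotation of order `n` is computed from this with `X ^ n - 1` and the
characteristic polynomial. -/
lemma rot_trace_aux {M : M3} (h1 : M ≠ 1) {c : ℝ} {P Q A B : Polynomial ℝ}
    (hP : Polynomial.aeval M P = 0) (hQ : Polynomial.aeval M Q = 0)
    (h : Polynomial.C c * (Polynomial.X - 1) = A * P + B * Q) : c = 0 := by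
  have e := congrArg (Polynomial.aeval M) h
  simp only [map_add, map_mul, map_sub, Polynomial.aeval_C, Polynomial.aeval_X, map_one, hP, hQ,
    mul_zero, add_zero, ← Algebra.smul_def, smul_eq_zero, sub_eq_zero] at e
  exact e.resolve_right h1

lemma rot_two (M : M3) (h : Mᵀ * M = 1) (hd : M.det = 1) (h2 : M ^ 2 = 1) (h1 : M ≠ 1) :
    M.trace = -1 := by
  have hQ : Polynomial.aeval M (Polynomial.X ^ 2 - 1 : Polynomial ℝ) = 0 := by simp [h2]
  have := rot_trace_aux h1 (c := 1 + M.trace) (A := 1) (B := - (Polynomial.X - Polynomial.C M.trace))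
    (rot_poly M h hd) hQ (by simp only [map_add, map_one]; ring)
  linarith

lemma rot_three (M : M3) (h : Mᵀ * M = 1) (hd : M.det = 1) (h3 : M ^ 3 = 1) (h1 : M ≠ 1) :
    M.trace = 0 := by
  have hQ : Polynomial.aeval M (Polynomial.X ^ 3 - 1 : Polynomial ℝ) = 0 := by simp [h3]
  exact rot_trace_aux h1 (A := - Polynomial.X ^ 2)
    (B := Polynomial.X ^ 2 - Polynomial.C M.trace * (Polynomial.X - 1))
    (rot_poly M h hd) hQ (by ring)

lemma rot_five (M : M3) (h : Mᵀ * M = 1) (hd : M.det = 1) (h5 : M ^ 5 = 1) (h1 : M ≠ 1) :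
    M.trace ^ 2 = M.trace + 1 := by
  have hQ : Polynomial.aeval M (Polynomial.X ^ 5 - 1 : Polynomial ℝ) = 0 := by simp [h5]
  have := rot_trace_aux h1 (c := M.trace ^ 2 - M.trace - 1)
    (A := - Polynomial.X ^ 3 * (Polynomial.X ^ 2 + Polynomial.C M.trace * Polynomial.X + 1))
    (B := Polynomial.X ^ 3 -
      (Polynomial.C M.trace ^ 2 - Polynomial.C M.trace - 1) * (Polynomial.X - 1))
    (rot_poly M h hd) hQ (by simp only [map_sub, map_pow, map_one]; ring)
  linarith

/-! ### Normal form of the representation -/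

/-- The half-turn about the first axis. -/
def mU : M3 := !![1,0,0;0,-1,0;0,0,-1]

/-- The half-turn about the second axis. -/
def mV : M3 := !![-1,0,0;0,1,0;0,0,-1]

/-- The rotation of order three sending `e₀ ↦ e₁ ↦ e₂ ↦ e₀`. -/
def mT : M3 := !![0,0,1;1,0,0;0,1,0]

/-- For `φ ^ 2 = φ + 1`, the half-turn about `(1, φ, 1 - φ)`. Both roots `φ` are allowed; they
correspond to the two Galois-conjugate three-dimensional representations of `A₅`. -/
noncomputable def mS (φ : ℝ) : M3 :=
  !![-1/2, φ/2, (1-φ)/2; φ/2, (φ-1)/2, -1/2; (1-φ)/2, -1/2, -φ/2]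

section NormalForm

variable {ρ : A5 →* M3}

lemma rho_dot (hO : ∀ a, (ρ a)ᵀ * ρ a = 1) (a : A5) (x y : Fin 3 → ℝ) :
    (ρ a *ᵥ x) ⬝ᵥ (ρ a *ᵥ y) = x ⬝ᵥ y := by
  rw [Matrix.dotProduct_mulVec, ← Matrix.mulVec_transpose, Matrix.mulVec_mulVec, hO,
    Matrix.one_mulVec]

/-- The range of `(1 + u)(1 - v)` contains the required vector; this product is nonzero, since
otherwise conjugation by the 3-cycle would force `u * v = 1`. -/
lemma exists_axis (hinj : Function.Injective ρ) :
    ∃ e : Fin 3 → ℝ, e ⬝ᵥ e = 1 ∧ ρ pu *ᵥ e = e ∧ ρ pv *ᵥ e = -e := by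
  have huu : ρ pu * ρ pu = 1 := by rw [← map_mul, pu_sq, map_one]
  have hvv : ρ pv * ρ pv = 1 := by rw [← map_mul, pv_sq, map_one]
  have huv : ρ pu * ρ pv = ρ pv * ρ pu := by rw [← map_mul, pu_pv, map_mul]
  have hne : (1 + ρ pu) * (1 - ρ pv) ≠ 0 := by
    intro h0
    have htt : ρ pt * (ρ pt * ρ pt) = 1 := by rw [← map_mul, ← map_mul, pt_cube, map_one]
    have h1 : ρ pt * ρ pu = ρ pv * ρ pt := by rw [← map_mul, pt_pu, map_mul]
    have h2 : ρ pt * ρ pv = ρ (pu * pv) * ρ pt := by rw [← map_mul, pt_pv, map_mul]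
    have h3 : ρ pt * ρ (pu * pv) = ρ pu * ρ pt := by rw [← map_mul, ← map_mul, pu_pt]
    have e1 : 1 + ρ pu - ρ pv - ρ (pu * pv) = 0 := by
      rw [← h0, map_mul]; noncomm_ring
    have cancel : ∀ {A : M3}, A * ρ pt = 0 → A = 0 := by
      intro A hA
      calc A = A * ρ pt * (ρ pt * ρ pt) := by rw [mul_assoc, htt, mul_one]
        _ = 0 := by rw [hA, zero_mul]
    have e2 : 1 + ρ pv - ρ (pu * pv) - ρ pu = 0 := by
      apply cancel
      have := congrArg (fun A => ρ pt * A) e1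
      simp only [mul_sub, mul_add, mul_one, h1, h2, h3, mul_zero] at this
      simpa only [sub_mul, add_mul, one_mul] using this
    have e3 : (2 : ℝ) • (1 - ρ (pu * pv)) = 0 := by
      calc (2 : ℝ) • (1 - ρ (pu * pv)) = (1 + ρ pu - ρ pv - ρ (pu * pv)) +
            (1 + ρ pv - ρ (pu * pv) - ρ pu) := by module
        _ = 0 := by rw [e1, e2, add_zero]
    rw [smul_eq_zero, sub_eq_zero] at e3
    have e4 := e3.resolve_left (by norm_num)
    have : (1 : A5) = pu * pv := hinj (by rw [map_one]; exact e4)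
    exact absurd this (by decide)
  obtain ⟨x, hx⟩ : ∃ x, ((1 + ρ pu) * (1 - ρ pv)) *ᵥ x ≠ 0 := by
    by_contra! h
    exact hne (Matrix.ext_of_mulVec_single fun i => by rw [h, Matrix.zero_mulVec])
  set f := ((1 + ρ pu) * (1 - ρ pv)) *ᵥ x with hf
  have hfu : ρ pu *ᵥ f = f := by
    rw [hf, Matrix.mulVec_mulVec]
    congr 1
    rw [← mul_assoc, mul_add, huu, mul_one, add_comm]
  have hfv : ρ pv *ᵥ f = -f := by
    rw [hf, Matrix.mulVec_mulVec, ← Matrix.neg_mulVec]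
    congr 1
    rw [← mul_assoc, mul_add, ← huv, mul_one,
      show ρ pv + ρ pu * ρ pv = (1 + ρ pu) * ρ pv by noncomm_ring, mul_assoc, mul_sub, hvv, mul_one]
    noncomm_ring
  have hpos : 0 < f ⬝ᵥ f := by
    have := Matrix.dotProduct_star_self_pos_iff (v := f)
    simpa using this.2 hx
  refine ⟨(√(f ⬝ᵥ f))⁻¹ • f, ?_, ?_, ?_⟩
  · rw [smul_dotProduct, dotProduct_smul, smul_eq_mul, smul_eq_mul, ← mul_assoc, ← mul_inv,
      Real.mul_self_sqrt hpos.le, inv_mul_cancel₀ hpos.ne']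
  · rw [Matrix.mulVec_smul, hfu]
  · rw [Matrix.mulVec_smul, hfv, smul_neg]

/-- An axis vector of `pu` and its images under the 3-cycle form an orthonormal basis in which the
subgroup `A₄` takes its standard form. -/
lemma exists_frame (hO : ∀ a, (ρ a)ᵀ * ρ a = 1) (hinj : Function.Injective ρ) :
    ∃ E : M3, Eᵀ * E = 1 ∧ ρ pu * E = E * mU ∧ ρ pv * E = E * mV ∧ ρ pt * E = E * mT := by
  obtain ⟨e, he, hu1, hv1⟩ := exists_axis hinj
  have htt : ρ pt * (ρ pt * ρ pt) = 1 := by rw [← map_mul, ← map_mul, pt_cube, map_one]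
  have h1 : ρ pt * ρ pu = ρ pv * ρ pt := by rw [← map_mul, pt_pu, map_mul]
  have h3 : ρ pu * ρ pt = ρ pt * (ρ pu * ρ pv) := by rw [← map_mul, pu_pt, map_mul, map_mul]
  obtain ⟨f, hf⟩ : ∃ f, f = ρ pt *ᵥ e := ⟨_, rfl⟩
  obtain ⟨g, hg⟩ : ∃ g, g = ρ pt *ᵥ f := ⟨_, rfl⟩
  have hgt : ρ pt *ᵥ g = e := by
    rw [hg, hf, Matrix.mulVec_mulVec, Matrix.mulVec_mulVec, mul_assoc, htt, Matrix.one_mulVec]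
  have hu2 : ρ pu *ᵥ f = -f := by
    rw [hf, Matrix.mulVec_mulVec, h3, ← Matrix.mulVec_mulVec, ← Matrix.mulVec_mulVec, hv1,
      Matrix.mulVec_neg, hu1, Matrix.mulVec_neg]
  have hv2 : ρ pv *ᵥ f = f := by
    rw [hf, Matrix.mulVec_mulVec, ← h1, ← Matrix.mulVec_mulVec, hu1]
  have hu3 : ρ pu *ᵥ g = -g := by
    rw [hg, Matrix.mulVec_mulVec, h3, ← Matrix.mulVec_mulVec, ← Matrix.mulVec_mulVec, hv2, hu2,
      Matrix.mulVec_neg]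
  have hv3 : ρ pv *ᵥ g = -g := by
    rw [hg, Matrix.mulVec_mulVec, ← h1, ← Matrix.mulVec_mulVec, hu2, Matrix.mulVec_neg]
  have hff : f ⬝ᵥ f = 1 := by rw [hf, rho_dot hO, he]
  have hgg : g ⬝ᵥ g = 1 := by rw [hg, rho_dot hO, hff]
  have hef : e ⬝ᵥ f = 0 := by
    have := rho_dot hO pu e f
    rw [hu1, hu2, dotProduct_neg] at this
    linarith
  have heg : e ⬝ᵥ g = 0 := by
    have := rho_dot hO pu e g
    rw [hu1, hu3, dotProduct_neg] at this
    linarith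
  have hfg : f ⬝ᵥ g = 0 := by
    have := rho_dot hO pv f g
    rw [hv2, hv3, dotProduct_neg] at this
    linarith
  have col : ∀ (A : M3) (x y z : Fin 3 → ℝ), A *ᵥ e = x → A *ᵥ f = y → A *ᵥ g = z →
      A * (Matrix.of ![e, f, g])ᵀ = (Matrix.of ![x, y, z])ᵀ := by
    rintro A x y z rfl rfl rfl
    ext i j
    fin_cases j <;> simp [Matrix.mul_apply, Matrix.mulVec, dotProduct]
  refine ⟨(Matrix.of ![e, f, g])ᵀ, ?_, ?_, ?_, ?_⟩
  · have hfe := dotProduct_comm e f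
    have hge := dotProduct_comm e g
    have hgf := dotProduct_comm f g
    simp only [dotProduct, Fin.sum_univ_three] at *
    ext i j
    fin_cases i <;> fin_cases j <;> simp [Matrix.mul_apply, Fin.sum_univ_three] <;> linarith
  · rw [col _ _ _ _ hu1 hu2 hu3]
    ext i j
    fin_cases j <;> simp [Matrix.mul_apply, mU, Fin.sum_univ_three]
  · rw [col _ _ _ _ hv1 hv2 hv3]
    ext i j
    fin_cases j <;> simp [Matrix.mul_apply, mV, Fin.sum_univ_three]
  · rw [col _ _ _ _ hf.symm hg.symm hgt]
    ext i j
    fin_cases j <;> simp [Matrix.mul_apply, mT, Fin.sum_univ_three]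

/-- A symmetric orthogonal matrix with the diagonal of `mS φ` agrees with it up to the signs of the
off-diagonal entries, and conjugation by the Klein four-group corrects these signs. -/
lemma symm_entries (S : M3) (φ : ℝ) (hφ : φ ^ 2 = φ + 1) (h1 : Sᵀ * S = 1) (hs : Sᵀ = S)
    (h00 : S 0 0 = -1/2) (h11 : S 1 1 = (φ - 1) / 2) (h22 : S 2 2 = - φ / 2) :
    S = mS φ ∨ mU * S * mU = mS φ ∨ mV * S * mV = mS φ ∨ mU * mV * S * (mU * mV) = mS φ := by
  have s10 : S 1 0 = S 0 1 := congrFun (congrFun hs 0) 1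
  have s20 : S 2 0 = S 0 2 := congrFun (congrFun hs 0) 2
  have s21 : S 2 1 = S 1 2 := congrFun (congrFun hs 1) 2
  have a00 := congrFun (congrFun h1 0) 0
  have a11 := congrFun (congrFun h1 1) 1
  have a22 := congrFun (congrFun h1 2) 2
  have a01 := congrFun (congrFun h1 0) 1
  simp [Matrix.mul_apply, Fin.sum_univ_three, s10, s20, s21, h00, h11, h22] at a00 a11 a22 a01
  have hx : S 0 1 ^ 2 = (φ / 2) ^ 2 := by nlinarith
  have hy : S 0 2 ^ 2 = ((1 - φ) / 2) ^ 2 := by nlinarith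
  have hφ1 : (1 - φ) ≠ 0 := by intro h; nlinarith
  -- The orthogonality of the first two columns determines the third sign from the other two.
  have hz : ∀ ε : ℝ, S 0 2 = ε * ((1 - φ) / 2) → ε ^ 2 = 1 → ∀ δ, S 0 1 = δ * (φ / 2) →
      S 1 2 = - (ε * δ) / 2 := by
    intro ε h hε δ hδ
    rw [h, hδ] at a01
    have : (1 - φ) * (S 1 2 + ε * δ / 2) = 0 := by
      linear_combination 2 * ε * a01 - (1 - φ) * S 1 2 * hε - ε * δ / 2 * hφ
    have := (mul_eq_zero.1 this).resolve_left hφ1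
    linarith
  have fin : ∀ A : M3, A = !![S 0 0, S 0 1, S 0 2; S 1 0, S 1 1, S 1 2; S 2 0, S 2 1, S 2 2] →
    S = A := by rintro A rfl; ext i j; fin_cases i <;> fin_cases j <;> rfl
  have hS := fin _ rfl
  rw [s10, s20, s21, h00, h11, h22] at hS
  rcases sq_eq_sq_iff_eq_or_eq_neg.1 hx with hx | hx <;>
  rcases sq_eq_sq_iff_eq_or_eq_neg.1 hy with hy | hy
  · left
    have := hz 1 (by linarith) (by norm_num) 1 (by linarith)
    rw [hS, hx, hy, this]
    ext i j; fin_cases i <;> fin_cases j <;> simp [mS]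
  · right; right; right
    have := hz (-1) (by linarith) (by norm_num) 1 (by linarith)
    rw [hS, hx, hy, this]
    ext i j; fin_cases i <;> fin_cases j <;>
      simp [mS, mU, mV, Matrix.mul_apply, Fin.sum_univ_three] <;> ring
  · right; right; left
    have := hz 1 (by linarith) (by norm_num) (-1) (by linarith)
    rw [hS, hx, hy, this]
    ext i j; fin_cases i <;> fin_cases j <;>
      simp [mS, mV, Matrix.mul_apply, Fin.sum_univ_three] <;> ring
  · right; left
    have := hz (-1) (by linarith) (by norm_num) (-1) (by linarith)
    rw [hS, hx, hy, this]
    ext i j; fin_cases i <;> fin_cases j <;>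
      simp [mS, mU, Matrix.mul_apply, Fin.sum_univ_three]

/-- A faithful representation of `A₅` by rotations is given, in a suitable orthonormal basis `E`, by
`mU`, `mT` and `mS φ` on three elements that generate `A₅`. -/
lemma normal_form (hO : ∀ a, (ρ a)ᵀ * ρ a = 1) (hd : ∀ a, (ρ a).det = 1)
    (hinj : Function.Injective ρ) :
    ∃ (E : M3) (φ : ℝ) (s : A5), Eᵀ * E = 1 ∧ φ ^ 2 = φ + 1 ∧
      (∀ H : Subgroup A5, pu ∈ H → pt ∈ H → s ∈ H → H = ⊤) ∧
      ρ pu * E = E * mU ∧ ρ pt * E = E * mT ∧ ρ s * E = E * mS φ := by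
  obtain ⟨E, hE, hu, hv, ht⟩ := exists_frame hO hinj
  have hE' : E * Eᵀ = 1 := mul_eq_one_comm.1 hE
  have hne : ∀ a : A5, a ≠ 1 → ρ a ≠ 1 := fun a ha h => ha (hinj (by rw [h, map_one]))
  have hpow : ∀ (a : A5) (n : ℕ), a ^ n = 1 → ρ a ^ n = 1 := fun a n h => by
    rw [← map_pow, h, map_one]
  obtain ⟨S, hS⟩ : ∃ S, S = Eᵀ * ρ ps * E := ⟨_, rfl⟩
  have hsE : ρ ps * E = E * S := by
    rw [hS, ← mul_assoc, ← mul_assoc, hE', one_mul]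
  have htr : ∀ (A : M3) (a : A5), ρ a * E = E * A → (A * S).trace = (ρ (a * ps)).trace := by
    intro A a h
    calc (A * S).trace = (Eᵀ * (E * A * S)).trace := by
          rw [mul_assoc, ← mul_assoc Eᵀ, hE, one_mul]
      _ = (Eᵀ * (ρ a * ρ ps * E)).trace := by rw [← h, mul_assoc, ← hsE, mul_assoc]
      _ = (ρ (a * ps)).trace := by
          rw [Matrix.trace_mul_comm, mul_assoc, hE', mul_one, map_mul]
  have t0 : (1 * S).trace = -1 := by
    rw [htr 1 1 (by simp), one_mul]
    exact rot_two _ (hO _) (hd _) (hpow _ _ (by rw [pow_two, ps_sq])) (hne _ (by decide))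
  have t1 : (mU * S).trace = 0 := by
    rw [htr _ _ hu]
    exact rot_three _ (hO _) (hd _) (hpow _ _ pus_cube) (hne _ (by decide))
  obtain ⟨φ, hφ⟩ : ∃ φ, φ = (mV * S).trace := ⟨_, rfl⟩
  have t2 : φ ^ 2 = φ + 1 := by
    rw [hφ, htr _ _ hv]
    exact rot_five _ (hO _) (hd _) (hpow _ _ pvs_five) (hne _ (by decide))
  -- The traces of `S`, `mU * S` and `mV * S` determine the diagonal of `S`.
  simp [Matrix.trace_fin_three, Matrix.vecMul, dotProduct, Fin.sum_univ_three, mU, mV] at t0 t1 hφ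
  have hSS : S * S = 1 := by
    rw [hS]
    calc Eᵀ * ρ ps * E * (Eᵀ * ρ ps * E) = Eᵀ * (ρ ps * ((E * Eᵀ) * ρ ps)) * E := by
          noncomm_ring
      _ = 1 := by rw [hE', one_mul, ← map_mul, ps_sq, map_one, mul_one, hE]
  have hSO : Sᵀ * S = 1 := by
    rw [hS]
    calc (Eᵀ * ρ ps * E)ᵀ * (Eᵀ * ρ ps * E) = Eᵀ * ((ρ ps)ᵀ * ((E * Eᵀ) * ρ ps)) * E := by
          simp only [Matrix.transpose_mul, Matrix.transpose_transpose]; noncomm_ring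
      _ = 1 := by rw [hE', one_mul, hO, mul_one, hE]
  have hsym : Sᵀ = S := by
    calc Sᵀ = Sᵀ * (S * S) := by rw [hSS, mul_one]
      _ = S := by rw [← mul_assoc, hSO, one_mul]
  have conj : ∀ (A : M3) (a : A5), ρ a * E = E * A → ρ (a * ps * a) * E = E * (A * S * A) := by
    intro A a h
    rw [map_mul, map_mul, mul_assoc, h, ← mul_assoc, mul_assoc (ρ a), hsE, ← mul_assoc (ρ a), h]
    noncomm_ring
  have gen : ∀ a : A5, (∀ H : Subgroup A5, pu ∈ H → pt ∈ H → a ∈ H) →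
      ∀ H : Subgroup A5, pu ∈ H → pt ∈ H → a * ps * a ∈ H → H = ⊤ := by
    intro a ha H h1 h2 h3
    refine gen_top H h1 h2 ?_
    rwa [H.mul_mem_cancel_right (ha H h1 h2), H.mul_mem_cancel_left (ha H h1 h2)] at h3
  have hvH : ∀ H : Subgroup A5, pu ∈ H → pt ∈ H → pv ∈ H := fun H h1 h2 =>
    H.mul_mem (H.mul_mem h2 h1) (H.inv_mem h2)
  rcases symm_entries S φ t2 hSO hsym (by linarith) (by linarith) (by linarith) with h | h | h | h
  · exact ⟨E, φ, ps, hE, t2, gen_top, hu, ht, by rw [hsE, h]⟩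
  · exact ⟨E, φ, pu * ps * pu, hE, t2, gen _ (fun H h1 _ => h1), hu, ht, by rw [conj _ _ hu, h]⟩
  · exact ⟨E, φ, pv * ps * pv, hE, t2, gen _ hvH, hu, ht, by rw [conj _ _ hv, h]⟩
  · refine ⟨E, φ, pu * pv * ps * (pu * pv), hE, t2,
      gen _ (fun H h1 h2 => H.mul_mem h1 (hvH H h1 h2)), hu, ht, ?_⟩
    rw [conj (mU * mV) (pu * pv) ?_, h]
    rw [map_mul, mul_assoc, hv, ← mul_assoc, hu, mul_assoc]

end NormalForm

/-! ### Polynomials fixed by a substitution -/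

section Poly

lemma aeval_matSub_comp (g h : M3) (p : MvPolynomial (Fin 3) ℝ) :
    aeval (matSub g) (aeval (matSub h) p) = aeval (matSub (h * g)) p := by
  rw [← AlgHom.comp_apply, MvPolynomial.comp_aeval]
  congr 2
  funext i
  simp only [matSub, map_sum, map_mul, aeval_C, aeval_X, Matrix.mul_apply, Finset.mul_sum,
    Finset.sum_mul, MvPolynomial.algebraMap_eq]
  rw [Finset.sum_comm]
  simp only [mul_assoc]

lemma matSub_one : matSub (1 : M3) = X := by
  funext i
  simp [matSub, Matrix.one_apply]

lemma aeval_matSub_one (p : MvPolynomial (Fin 3) ℝ) : aeval (matSub (1 : M3)) p = p := by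
  rw [matSub_one, aeval_X_left_apply]

lemma eval_aeval_matSub (g : M3) (p : MvPolynomial (Fin 3) ℝ) (x : Fin 3 → ℝ) :
    eval x (aeval (matSub g) p) = eval (g *ᵥ x) p := by
  rw [← MvPolynomial.coe_aeval_eq_eval, ← MvPolynomial.coe_aeval_eq_eval]
  change aeval x (aeval (matSub g) p) = aeval (g *ᵥ x) p
  rw [← AlgHom.comp_apply, MvPolynomial.comp_aeval]
  congr 2
  funext i
  simp [matSub, Matrix.mulVec, dotProduct]

lemma isHomogeneous_aeval_matSub (g : M3) {p : MvPolynomial (Fin 3) ℝ} {d : ℕ}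
    (hp : p.IsHomogeneous d) : (aeval (matSub g) p).IsHomogeneous d := by
  have := hp.aeval (matSub g) (n := 1) (fun i => IsHomogeneous.sum _ _ _ fun j _ => by
    simpa using (isHomogeneous_C (Fin 3) (g i j)).mul (isHomogeneous_X ℝ j))
  simpa using this

/-- The polynomials invariant under the substitution `x ↦ M x`. -/
noncomputable def fixedBy (M : M3) : Submodule ℝ (MvPolynomial (Fin 3) ℝ) :=
  LinearMap.eqLocus (aeval (matSub M)).toLinearMap LinearMap.id

lemma mem_fixedBy {M : M3} {p : MvPolynomial (Fin 3) ℝ} :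
    p ∈ fixedBy M ↔ aeval (matSub M) p = p := Iff.rfl

/-- The homogeneous polynomials of degree `d` fixed by the standard generators `mU`, `mT`, `mS φ`. -/
noncomputable def modelInv (φ : ℝ) (d : ℕ) : Submodule ℝ (MvPolynomial (Fin 3) ℝ) :=
  homogeneousSubmodule (Fin 3) ℝ d ⊓ (fixedBy mU ⊓ (fixedBy mT ⊓ fixedBy (mS φ)))

lemma mem_fixedBy_iff_eval {M : M3} {p : MvPolynomial (Fin 3) ℝ} :
    p ∈ fixedBy M ↔ ∀ x, eval (M *ᵥ x) p = eval x p := by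
  rw [mem_fixedBy]
  constructor
  · intro h x
    rw [← eval_aeval_matSub, h]
  · intro h
    exact MvPolynomial.funext fun x => by rw [eval_aeval_matSub, h]

/-- The exponent of the monomial `X₀ ^ i * X₁ ^ j * X₂ ^ k`. -/
noncomputable def expo (i j k : ℕ) : Fin 3 →₀ ℕ := Finsupp.equivFunOnFinite.symm ![i, j, k]

lemma coeff_diag (c : Fin 3 → ℝ) (p : MvPolynomial (Fin 3) ℝ) (m : Fin 3 →₀ ℕ) :
    coeff m (aeval (fun i => C (c i) * X i : Fin 3 → MvPolynomial (Fin 3) ℝ) p) =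
      (∏ i, c i ^ m i) * coeff m p := by
  induction p using MvPolynomial.induction_on' with
  | monomial n a =>
    have : aeval (fun i => C (c i) * X i : Fin 3 → MvPolynomial (Fin 3) ℝ) (monomial n a) =
        C (∏ i, c i ^ n i) * monomial n a := by
      rw [aeval_monomial, monomial_eq, Finsupp.prod_fintype _ _ (by simp),
        Finsupp.prod_fintype _ _ (by simp)]
      simp only [mul_pow, Finset.prod_mul_distrib, map_prod, map_pow, MvPolynomial.algebraMap_eq]
      ring
    rw [this, coeff_C_mul, coeff_monomial]
    split_ifs with h
    · rw [h]
    · simp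
  | add p q hp hq => rw [map_add, coeff_add, hp, hq, coeff_add, mul_add]

lemma coeff_U {p : MvPolynomial (Fin 3) ℝ} (hp : p ∈ fixedBy mU) {i j k : ℕ}
    (h : (j + k) % 2 = 1) : coeff (expo i j k) p = 0 := by
  have e : (matSub mU) = fun i => C ((![1, -1, -1] : Fin 3 → ℝ) i) * X i := by
    funext i
    fin_cases i <;> simp [matSub, mU, Fin.sum_univ_three]
  rw [mem_fixedBy, e] at hp
  have := coeff_diag ![1, -1, -1] p (expo i j k)
  rw [hp] at this
  simp [Fin.prod_univ_three, expo, ← pow_add, (Nat.odd_iff.2 h).neg_one_pow] at this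
  simp only [expo]
  linarith

lemma coeff_T {p : MvPolynomial (Fin 3) ℝ} (hp : p ∈ fixedBy mT) (i j k : ℕ) :
    coeff (expo i j k) p = coeff (expo j k i) p := by
  have e : (matSub mT) = X ∘ (![2, 0, 1] : Fin 3 → Fin 3) := by
    funext i
    fin_cases i <;> simp [matSub, mT, Fin.sum_univ_three]
  have hσ : Function.Injective (![2, 0, 1] : Fin 3 → Fin 3) := by decide
  rw [mem_fixedBy, e] at hp
  have := coeff_rename_mapDomain _ hσ p (expo i j k)
  have h2 : (expo i j k).mapDomain ![2, 0, 1] = expo j k i := by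
    ext a
    have h0 := Finsupp.mapDomain_apply hσ (expo i j k) 0
    have h1 := Finsupp.mapDomain_apply hσ (expo i j k) 1
    have h2 := Finsupp.mapDomain_apply hσ (expo i j k) 2
    simp at h0 h1 h2
    fin_cases a <;> simp [h0, h1, h2] <;> simp [expo]
  rw [← this, h2]
  conv_rhs => rw [← hp]
  rw [MvPolynomial.rename_eq_aeval]

lemma eval_homogeneous {p : MvPolynomial (Fin 3) ℝ} {d : ℕ} (hp : p.IsHomogeneous d)
    (x y z : ℝ) : eval ![x, y, z] p = ∑ i ∈ Finset.range (d + 1), ∑ j ∈ Finset.range (d + 1 - i),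
      coeff (expo i j (d - i - j)) p * (x ^ i * y ^ j * z ^ (d - i - j)) := by
  rw [eval_eq', Finset.sum_sigma']
  set D := (Finset.range (d + 1)).sigma (fun i => Finset.range (d + 1 - i))
  have hinj : Set.InjOn (fun s : (_ : ℕ) × ℕ => expo s.1 s.2 (d - s.1 - s.2)) D := by
    rintro ⟨i, j⟩ _ ⟨i', j'⟩ _ h
    have h0 := DFunLike.congr_fun h 0
    have h1 := DFunLike.congr_fun h 1
    simp [expo] at h0 h1
    subst h0 h1
    rfl
  have hsub : p.support ⊆ D.image (fun s => expo s.1 s.2 (d - s.1 - s.2)) := by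
    intro m hm
    have hdeg : m 0 + m 1 + m 2 = d := by
      have : Finsupp.weight (fun _ => 1) m = d := hp (mem_support_iff.1 hm)
      rwa [← Finsupp.degree_eq_weight_one, Finsupp.degree_eq_sum, Fin.sum_univ_three] at this
    rw [Finset.mem_image]
    refine ⟨⟨m 0, m 1⟩, ?_, ?_⟩
    · simp [D]; lia
    · ext a
      fin_cases a <;> simp [expo]; lia
  rw [Finset.sum_subset hsub, Finset.sum_image hinj]
  · refine Finset.sum_congr rfl fun s _ => ?_
    simp [Fin.prod_univ_three, expo]
  · intro m _ hm
    rw [notMem_support_iff.1 hm, zero_mul]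

/-- Invariance under `mU` and `mT` makes the coefficients cyclically symmetric and kills those of
monomials whose three exponents do not share one parity. -/
lemma model_coeffs {p : MvPolynomial (Fin 3) ℝ} {φ : ℝ} {d : ℕ} (hp : p ∈ modelInv φ d) :
    ∃ c : ℕ → ℕ → ℕ → ℝ, (∀ i j k, c i j k = c j k i) ∧
      (∀ i j k, ¬ (i % 2 = j % 2 ∧ j % 2 = k % 2) → c i j k = 0) ∧
      ∀ x y z, eval ![x, y, z] p = ∑ i ∈ Finset.range (d + 1), ∑ j ∈ Finset.range (d + 1 - i),
        c i j (d - i - j) * (x ^ i * y ^ j * z ^ (d - i - j)) := by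
  obtain ⟨hh, hU, hT, -⟩ := hp
  refine ⟨fun i j k => coeff (expo i j k) p, coeff_T hT, ?_, eval_homogeneous hh⟩
  intro i j k h
  by_cases h1 : j % 2 = k % 2
  · dsimp only
    rw [coeff_T hT, coeff_T hT]
    exact coeff_U hU (by lia)
  · exact coeff_U hU (by lia)

lemma model_S {p : MvPolynomial (Fin 3) ℝ} {φ : ℝ} {d : ℕ} (hp : p ∈ modelInv φ d) (x y z : ℝ) :
    eval ![(-x + φ * y + (1 - φ) * z) / 2, (φ * x + (φ - 1) * y - z) / 2,
      ((1 - φ) * x - y - φ * z) / 2] p = eval ![x, y, z] p := by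
  have := mem_fixedBy_iff_eval.1 hp.2.2.2 ![x, y, z]
  rw [← this]
  congr 2
  ext i
  fin_cases i <;> simp [mS, Matrix.mulVec, dotProduct, Fin.sum_univ_three] <;> ring

end Poly

/-! ### The two basic invariants -/

/-- The invariant quadratic form. -/
noncomputable def quad : MvPolynomial (Fin 3) ℝ := X 0 ^ 2 + X 1 ^ 2 + X 2 ^ 2

/-- The sextic invariant: the product of the six linear forms `φ xᵢ ± xᵢ₊₁`, one for each fivefold
axis of the icosahedron. -/
noncomputable def sext (φ : ℝ) : MvPolynomial (Fin 3) ℝ :=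
  (C φ ^ 2 * X 0 ^ 2 - X 1 ^ 2) * (C φ ^ 2 * X 1 ^ 2 - X 2 ^ 2) * (C φ ^ 2 * X 2 ^ 2 - X 0 ^ 2)

lemma eval_quad (x : Fin 3 → ℝ) : eval x quad = x 0 ^ 2 + x 1 ^ 2 + x 2 ^ 2 := by
  simp [quad]

lemma eval_sext (φ : ℝ) (x : Fin 3 → ℝ) : eval x (sext φ) =
    (φ ^ 2 * x 0 ^ 2 - x 1 ^ 2) * (φ ^ 2 * x 1 ^ 2 - x 2 ^ 2) * (φ ^ 2 * x 2 ^ 2 - x 0 ^ 2) := by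
  simp [sext]

lemma quad_homogeneous : quad.IsHomogeneous 2 :=
  ((isHomogeneous_X_pow 0 2).add (isHomogeneous_X_pow 1 2)).add (isHomogeneous_X_pow 2 2)

lemma sext_homogeneous (φ : ℝ) : (sext φ).IsHomogeneous 6 := by
  have h : ∀ i j : Fin 3,
      (C φ ^ 2 * X i ^ 2 - X j ^ 2 : MvPolynomial (Fin 3) ℝ).IsHomogeneous 2 := fun i j => by
    have h1 := (isHomogeneous_C (Fin 3) (φ ^ 2)).mul (isHomogeneous_X_pow (R := ℝ) i 2)
    rw [map_pow, zero_add] at h1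
    exact h1.sub (isHomogeneous_X_pow j 2)
  exact ((h 0 1).mul (h 1 2)).mul (h 2 0)

lemma eval_mul_mT (x : Fin 3 → ℝ) : mT *ᵥ x = ![x 2, x 0, x 1] := by
  ext i; fin_cases i <;> simp [mT, Matrix.mulVec, dotProduct, Fin.sum_univ_three]

lemma eval_mul_mU (x : Fin 3 → ℝ) : mU *ᵥ x = ![x 0, -x 1, -x 2] := by
  ext i; fin_cases i <;> simp [mU, Matrix.mulVec, dotProduct, Fin.sum_univ_three]

lemma eval_mul_mS (φ : ℝ) (x : Fin 3 → ℝ) : mS φ *ᵥ x =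
    ![(-x 0 + φ * x 1 + (1 - φ) * x 2) / 2, (φ * x 0 + (φ - 1) * x 1 - x 2) / 2,
      ((1 - φ) * x 0 - x 1 - φ * x 2) / 2] := by
  ext i; fin_cases i <;> simp [mS, Matrix.mulVec, dotProduct, Fin.sum_univ_three] <;> ring

lemma quad_pow_mem {φ : ℝ} (hφ : φ ^ 2 = φ + 1) (n : ℕ) : quad ^ n ∈ modelInv φ (2 * n) := by
  refine ⟨quad_homogeneous.pow n, mem_fixedBy_iff_eval.2 fun x => ?_,
    mem_fixedBy_iff_eval.2 fun x => ?_, mem_fixedBy_iff_eval.2 fun x => ?_⟩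
  · rw [map_pow, map_pow, eval_quad, eval_quad, eval_mul_mU]
    simp
  · rw [map_pow, map_pow, eval_quad, eval_quad, eval_mul_mT]
    simp
    ring
  · rw [map_pow, map_pow, eval_quad, eval_quad, eval_mul_mS]
    congr 1
    simp
    linear_combination (x 0 ^ 2 + x 1 ^ 2 + x 2 ^ 2 + x 0 * x 1 - x 1 * x 2 + x 0 * x 2) * hφ / 2

lemma sext_mem {φ : ℝ} (hφ : φ ^ 2 = φ + 1) : sext φ ∈ modelInv φ 6 := by
  refine ⟨sext_homogeneous φ, mem_fixedBy_iff_eval.2 fun x => ?_,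
    mem_fixedBy_iff_eval.2 fun x => ?_, mem_fixedBy_iff_eval.2 fun x => ?_⟩
  · rw [eval_sext, eval_sext, eval_mul_mU]
    simp
  · rw [eval_sext, eval_sext, eval_mul_mT]
    simp
    ring
  · rw [eval_sext, eval_sext, eval_mul_mS]
    obtain ⟨a, b, c, ha, hb, hc⟩ : ∃ a b c, a = x 0 ∧ b = x 1 ∧ c = x 2 := ⟨_, _, _, rfl, rfl, rfl⟩
    simp only [Matrix.cons_val_zero, Matrix.cons_val_one, Matrix.cons_val, ← ha, ← hb, ← hc]
    set X := (-a + φ * b + (1 - φ) * c) / 2 with hX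
    set Y := (φ * a + (φ - 1) * b - c) / 2 with hY
    set Z := ((1 - φ) * a - b - φ * c) / 2 with hZ
    -- The half-turn permutes the six linear factors up to sign, with an even number of sign changes.
    have f1 : φ * X - Y = -(φ * a - b) := by rw [hX, hY]; linear_combination (b - c) / 2 * hφ
    have f2 : φ * X + Y = φ * b - c := by rw [hX, hY]; linear_combination (b - c) / 2 * hφ
    have f3 : φ * Y - Z = φ * a + b := by rw [hY, hZ]; linear_combination (a + b) / 2 * hφ
    have f4 : φ * Y + Z = -(φ * c - a) := by rw [hY, hZ]; linear_combination (a + b) / 2 * hφ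
    have f5 : φ * Z - X = -(φ * b + c) := by rw [hX, hZ]; linear_combination (-a - c) / 2 * hφ
    have f6 : φ * Z + X = -(φ * c + a) := by rw [hX, hZ]; linear_combination (-a - c) / 2 * hφ
    calc _ = (φ * X - Y) * (φ * X + Y) * ((φ * Y - Z) * (φ * Y + Z)) *
          ((φ * Z - X) * (φ * Z + X)) := by ring
      _ = _ := by rw [f1, f2, f3, f4, f5, f6]; ring

/-! ### Dimensions for the standard group -/

lemma ext_eval {p q : MvPolynomial (Fin 3) ℝ}
    (h : ∀ x y z, eval ![x, y, z] p = eval ![x, y, z] q) : p = q :=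
  MvPolynomial.funext fun x => by
    have := h (x 0) (x 1) (x 2)
    rwa [show ![x 0, x 1, x 2] = x by ext i; fin_cases i <;> rfl] at this

lemma quad_pow_ne_zero (n : ℕ) : quad ^ n ≠ 0 := by
  intro h
  have := congrArg (eval ![1, 0, 0]) h
  rw [map_pow, eval_quad] at this
  simp at this

lemma finrank_of_le_span {φ : ℝ} (hφ : φ ^ 2 = φ + 1) (n : ℕ)
    (h : ∀ p ∈ modelInv φ (2 * n), ∃ a : ℝ, a • quad ^ n = p) :
    Module.finrank ℝ (modelInv φ (2 * n)) = 1 := by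
  have : modelInv φ (2 * n) = Submodule.span ℝ {quad ^ n} := by
    apply le_antisymm
    · exact fun p hp => Submodule.mem_span_singleton.2 (h p hp)
    · rw [Submodule.span_singleton_le_iff_mem]
      exact quad_pow_mem hφ n
  rw [this, finrank_span_singleton (quad_pow_ne_zero n)]

lemma finrank_model_zero {φ : ℝ} (hφ : φ ^ 2 = φ + 1) : Module.finrank ℝ (modelInv φ 0) = 1 := by
  refine finrank_of_le_span hφ 0 fun p hp => ?_
  obtain ⟨c, -, -, he⟩ := model_coeffs hp
  refine ⟨c 0 0 0, ext_eval fun x y z => ?_⟩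
  rw [he]
  simp

lemma finrank_model_one (φ : ℝ) : Module.finrank ℝ (modelInv φ 1) = 0 := by
  have : modelInv φ 1 = ⊥ := by
    rw [Submodule.eq_bot_iff]
    intro p hp
    obtain ⟨c, -, hz, he⟩ := model_coeffs hp
    refine ext_eval fun x y z => ?_
    rw [he]
    simp [Finset.sum_range_succ, hz]
  rw [this, finrank_bot]

lemma finrank_model_two {φ : ℝ} (hφ : φ ^ 2 = φ + 1) : Module.finrank ℝ (modelInv φ 2) = 1 := by
  refine finrank_of_le_span hφ 1 fun p hp => ?_
  obtain ⟨c, hc, hz, he⟩ := model_coeffs hp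
  refine ⟨c 2 0 0, ext_eval fun x y z => ?_⟩
  rw [he, smul_eval, map_pow, eval_quad]
  simp [Finset.sum_range_succ, hz]
  rw [hc 0 0 2, hc 0 2 0]
  ring

lemma finrank_model_three {φ : ℝ} (hφ : φ ^ 2 = φ + 1) : Module.finrank ℝ (modelInv φ 3) = 0 := by
  have : modelInv φ 3 = ⊥ := by
    rw [Submodule.eq_bot_iff]
    intro p hp
    obtain ⟨c, -, hz, he⟩ := model_coeffs hp
    have he' : ∀ x y z, eval ![x, y, z] p = c 1 1 1 * (x * y * z) := by
      intro x y z
      rw [he]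
      simp [Finset.sum_range_succ, hz]
    have h := model_S hp 1 0 0
    rw [he', he'] at h
    have h0 : c 1 1 1 = 0 := by linear_combination 8 * h - c 1 1 1 * hφ
    refine ext_eval fun x y z => ?_
    rw [he', h0, zero_mul, map_zero]
  rw [this, finrank_bot]

lemma finrank_model_four {φ : ℝ} (hφ : φ ^ 2 = φ + 1) : Module.finrank ℝ (modelInv φ 4) = 1 := by
  refine finrank_of_le_span hφ 2 fun p hp => ?_
  obtain ⟨c, hc, hz, he⟩ := model_coeffs hp
  have he' : ∀ x y z, eval ![x, y, z] p = c 4 0 0 * (x ^ 4 + y ^ 4 + z ^ 4) +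
      c 2 2 0 * (x ^ 2 * y ^ 2 + y ^ 2 * z ^ 2 + z ^ 2 * x ^ 2) := by
    intro x y z
    rw [he]
    simp [Finset.sum_range_succ, hz]
    rw [hc 0 0 4, hc 0 4 0, hc 0 2 2, ← hc 2 2 0]
    ring
  have h := model_S hp 1 0 0
  rw [he', he'] at h
  have h0 : c 2 2 0 = 2 * c 4 0 0 := by grind
  refine ⟨c 4 0 0, ext_eval fun x y z => ?_⟩
  rw [he', smul_eval, map_pow, eval_quad, h0]
  simp
  ring

lemma finrank_model_five {φ : ℝ} (hφ : φ ^ 2 = φ + 1) : Module.finrank ℝ (modelInv φ 5) = 0 := by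
  have : modelInv φ 5 = ⊥ := by
    rw [Submodule.eq_bot_iff]
    intro p hp
    obtain ⟨c, hc, hz, he⟩ := model_coeffs hp
    have he' : ∀ x y z, eval ![x, y, z] p = c 3 1 1 * (x * y * z * (x ^ 2 + y ^ 2 + z ^ 2)) := by
      intro x y z
      rw [he]
      simp [Finset.sum_range_succ, hz]
      rw [hc 1 1 3, hc 1 3 1]
      ring
    have h := model_S hp 1 0 0
    rw [he', he'] at h
    have h0 : c 3 1 1 = 0 := by grind
    refine ext_eval fun x y z => ?_
    rw [he', h0, zero_mul, map_zero]
  rw [this, finrank_bot]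

lemma finrank_model_six {φ : ℝ} (hφ : φ ^ 2 = φ + 1) : Module.finrank ℝ (modelInv φ 6) = 2 := by
  have hspan : modelInv φ 6 = Submodule.span ℝ (Set.range ![quad ^ 3, sext φ]) := by
    apply le_antisymm
    · intro p hp
      obtain ⟨c, hc, hz, he⟩ := model_coeffs hp
      have he' : ∀ x y z, eval ![x, y, z] p = c 6 0 0 * (x ^ 6 + y ^ 6 + z ^ 6) +
          c 4 2 0 * (x ^ 4 * y ^ 2 + y ^ 4 * z ^ 2 + z ^ 4 * x ^ 2) +
          c 2 4 0 * (x ^ 2 * y ^ 4 + y ^ 2 * z ^ 4 + z ^ 2 * x ^ 4) +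
          c 2 2 2 * (x ^ 2 * y ^ 2 * z ^ 2) := by
        intro x y z
        rw [he]
        simp [Finset.sum_range_succ, hz]
        rw [hc 0 0 6, hc 0 6 0, hc 0 4 2, ← hc 4 2 0, hc 4 0 2, hc 0 2 4]
        ring
      -- Two test points give two independent linear conditions on the four coefficients.
      have h1 := model_S hp 1 0 0
      have h2 := model_S hp 1 1 1
      rw [he', he'] at h1 h2
      generalize c 6 0 0 = a at *
      generalize c 4 2 0 = b at *
      generalize c 2 4 0 = k at *
      generalize c 2 2 2 = e at *
      have e1 : 45 * a = b * (7 - φ) + k * (6 + φ) + e := by grind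
      have e2 : e = 15 * a - b * (1 + φ) - k * (2 - φ) := by grind
      have hne : 4 + 2 * φ ≠ 0 := by intro h; nlinarith
      have e3 : b - 3 * a = - (k - 3 * a) * φ ^ 2 := by
        have : (4 + 2 * φ) * (b - 3 * a + (k - 3 * a) * φ ^ 2) = 0 := by grind
        have := (mul_eq_zero.1 this).resolve_left hne
        linarith
      rw [Matrix.range_cons, Matrix.range_cons, Matrix.range_empty, Set.union_empty,
        Set.singleton_union, Submodule.mem_span_pair]
      -- `2 - φ` is the inverse of `φ ^ 2`, the coefficient of `X₀ ^ 2 * X₁ ^ 4` in `sext φ`.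
      refine ⟨a, (k - 3 * a) * (2 - φ), ext_eval fun x y z => ?_⟩
      rw [he', map_add, smul_eval, smul_eval, map_pow, eval_quad, eval_sext]
      have hb : b = 3 * a - (k - 3 * a) * φ ^ 2 := by linarith
      simp
      grind
    · rw [Submodule.span_le]
      rintro _ ⟨i, rfl⟩
      fin_cases i
      · exact quad_pow_mem hφ 3
      · exact sext_mem hφ
  have hli : LinearIndependent ℝ ![quad ^ 3, sext φ] := by
    rw [LinearIndependent.pair_iff]
    intro s t h
    have h1 := congrArg (eval ![1, 0, 0]) h
    have h2 := congrArg (eval ![1, 1, 1]) h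
    rw [map_add, smul_eval, smul_eval, map_pow, eval_quad, eval_sext] at h1 h2
    simp at h1 h2
    subst h1
    refine ⟨rfl, ?_⟩
    rw [hφ] at h2
    simp at h2
    rcases h2 with h2 | h2
    · exact h2
    · rw [h2] at hφ; norm_num at hφ
  rw [hspan, finrank_span_eq_card hli]
  simp

/-! ### Transfer to an arbitrary group -/

/-- The substitution `x ↦ E x` for an orthogonal matrix `E`, as a linear automorphism. -/
noncomputable def substEquiv (E : M3) (hE : Eᵀ * E = 1) :
    MvPolynomial (Fin 3) ℝ ≃ₗ[ℝ] MvPolynomial (Fin 3) ℝ :=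
  LinearEquiv.ofLinearMap (aeval (matSub E)).toLinearMap (aeval (matSub Eᵀ)).toLinearMap
    (LinearMap.ext fun p => by
      change aeval (matSub E) (aeval (matSub Eᵀ) p) = p
      rw [aeval_matSub_comp, hE, aeval_matSub_one])
    (LinearMap.ext fun p => by
      change aeval (matSub Eᵀ) (aeval (matSub E) p) = p
      rw [aeval_matSub_comp, mul_eq_one_comm.1 hE, aeval_matSub_one])

lemma mem_fixedBy_conj {E g M : M3} (hE : Eᵀ * E = 1) (h : g * E = E * M)
    (q : MvPolynomial (Fin 3) ℝ) : aeval (matSub Eᵀ) q ∈ fixedBy g ↔ q ∈ fixedBy M := by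
  have hE' : E * Eᵀ = 1 := mul_eq_one_comm.1 hE
  have h' : Eᵀ * g = M * Eᵀ := by
    calc Eᵀ * g = Eᵀ * (g * E) * Eᵀ := by rw [mul_assoc, mul_assoc, hE', mul_one]
      _ = M * Eᵀ := by rw [h, ← mul_assoc, hE, one_mul]
  rw [mem_fixedBy, mem_fixedBy, aeval_matSub_comp, h', ← aeval_matSub_comp]
  exact (substEquiv E hE).symm.injective.eq_iff

theorem finrank_eq_model (G : Subgroup (Matrix.orthogonalGroup (Fin 3) ℝ))
    (hdet : ∀ g ∈ G, ((g : Matrix (Fin 3) (Fin 3) ℝ)).det = 1)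
    (hiso : Nonempty (G ≃* alternatingGroup (Fin 5))) :
    ∃ φ : ℝ, φ ^ 2 = φ + 1 ∧
      ∀ d, Module.finrank ℝ (invariantHomogeneous G d) = Module.finrank ℝ (modelInv φ d) := by
  obtain ⟨ψ⟩ := hiso
  let ρ : A5 →* M3 :=
    ((Matrix.orthogonalGroup (Fin 3) ℝ).subtype.comp G.subtype).comp ψ.symm.toMonoidHom
  have hρ : ∀ a, ρ a = ((ψ.symm a : G) : Matrix.orthogonalGroup (Fin 3) ℝ) := fun a => rfl
  have hO : ∀ a, (ρ a)ᵀ * ρ a = 1 := fun a => by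
    rw [hρ]
    exact (Matrix.mem_orthogonalGroup_iff' (Fin 3) ℝ).1 (ψ.symm a : G).1.2
  have hd : ∀ a, (ρ a).det = 1 := fun a => hdet _ (ψ.symm a).2
  have hinj : Function.Injective ρ := fun a b h =>
    ψ.symm.injective (Subtype.ext (Subtype.ext h))
  obtain ⟨E, φ, s, hE, hφ, hgen, hu, ht, hs⟩ := normal_form hO hd hinj
  refine ⟨φ, hφ, fun d => ?_⟩
  -- The stabilizer of a polynomial is a subgroup, so invariance under generators suffices.
  have hstab : ∀ p, p ∈ fixedBy (ρ pu) → p ∈ fixedBy (ρ pt) → p ∈ fixedBy (ρ s) →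
      ∀ a, p ∈ fixedBy (ρ a) := by
    intro p h1 h2 h3 a
    have hmul : ∀ {a b : A5}, p ∈ fixedBy (ρ a) → p ∈ fixedBy (ρ b) → p ∈ fixedBy (ρ (a * b)) := by
      intro a b ha hb
      rw [mem_fixedBy] at *
      rw [map_mul, ← aeval_matSub_comp, ha, hb]
    let H : Subgroup A5 :=
      { carrier := {a | p ∈ fixedBy (ρ a)}
        mul_mem' := hmul
        one_mem' := by
          change p ∈ fixedBy (ρ 1)
          rw [map_one]; exact aeval_matSub_one p
        inv_mem' := by
          intro a (ha : p ∈ fixedBy (ρ a))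
          change p ∈ fixedBy (ρ a⁻¹)
          rw [mem_fixedBy] at *
          nth_rewrite 1 [← ha]
          rw [aeval_matSub_comp, ← map_mul, mul_inv_cancel, map_one, aeval_matSub_one] }
    have : a ∈ H := by rw [hgen H h1 h2 h3]; trivial
    exact this
  rw [← (substEquiv E hE).finrank_map_eq (invariantHomogeneous G d)]
  suffices h : (invariantHomogeneous G d).map (substEquiv E hE : _ →ₗ[ℝ] _) = modelInv φ d by
    rw [h]
  ext q
  rw [Submodule.mem_map_equiv]
  change aeval (matSub Eᵀ) q ∈ invariantHomogeneous G d ↔ _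
  constructor
  · rintro ⟨hh, hi⟩
    have hfix : ∀ a, aeval (matSub Eᵀ) q ∈ fixedBy (ρ a) := fun a => hi _ (ψ.symm a).2
    refine ⟨?_, (mem_fixedBy_conj hE hu q).1 (hfix _), (mem_fixedBy_conj hE ht q).1 (hfix _),
      (mem_fixedBy_conj hE hs q).1 (hfix _)⟩
    have := isHomogeneous_aeval_matSub E hh
    rwa [aeval_matSub_comp, hE, aeval_matSub_one] at this
  · rintro ⟨hh, h1, h2, h3⟩
    refine ⟨isHomogeneous_aeval_matSub _ hh, fun g hg => ?_⟩
    have := hstab _ ((mem_fixedBy_conj hE hu q).2 h1) ((mem_fixedBy_conj hE ht q).2 h2)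
      ((mem_fixedBy_conj hE hs q).2 h3) (ψ ⟨g, hg⟩)
    rwa [hρ, ψ.symm_apply_apply] at this

end Icosahedral

/-- For any finite subgroup `G` of `SO(3)` isomorphic to the alternating group `A₅`, the spaces
of `G`-invariant homogeneous polynomials on `ℝ³` of degrees `0, 1, 2, 3, 4, 5, 6` have
dimensions `1, 0, 1, 0, 1, 0, 2` respectively. -/
theorem icosahedral_invariant_dimensions
    (G : Subgroup (Matrix.orthogonalGroup (Fin 3) ℝ)) (hfin : Finite G)
    (hdet : ∀ g ∈ G, ((g : Matrix (Fin 3) (Fin 3) ℝ)).det = 1)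
    (hiso : Nonempty (G ≃* alternatingGroup (Fin 5))) :
    Module.finrank ℝ (invariantHomogeneous G 0) = 1 ∧
    Module.finrank ℝ (invariantHomogeneous G 1) = 0 ∧
    Module.finrank ℝ (invariantHomogeneous G 2) = 1 ∧
    Module.finrank ℝ (invariantHomogeneous G 3) = 0 ∧
    Module.finrank ℝ (invariantHomogeneous G 4) = 1 ∧
    Module.finrank ℝ (invariantHomogeneous G 5) = 0 ∧
    Module.finrank ℝ (invariantHomogeneous G 6) = 2 := by
  obtain ⟨φ, hφ, h⟩ := Icosahedral.finrank_eq_model G hdet hiso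
  simp only [h]
  exact ⟨Icosahedral.finrank_model_zero hφ, Icosahedral.finrank_model_one φ,
    Icosahedral.finrank_model_two hφ, Icosahedral.finrank_model_three hφ,
    Icosahedral.finrank_model_four hφ, Icosahedral.finrank_model_five hφ,
    Icosahedral.finrank_model_six hφ⟩
end

section
/- Let E be a real inner product space, let V₁ and V₂ be mutually orthogonal subspaces, let e₁ ∈ V₁ and e₂ ∈ V₂ be unit vectors, and set q = (e₁ + e₂)/√2. Then for every unit vector x lying in V₁ ∪ V₂ one has ⟨x, q⟩ ≤ √2/2, and hence ‖x − q‖² ≥ 2 − √2. Consequently, if G is a group of linear isometries of E such that every g ∈ G either maps V₁ into V₁ and V₂ into V₂, or maps V₁ into V₂ and V₂ into V₁, then for every unit vector p ∈ V₁ and every g ∈ G, ⟨g·p, q⟩ ≤ √2/2; in particular the spherical distance from the G-orbit of p to q is at least π/4, so the quotient of the unit sphere by G has diameter at least π/4. -/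
/-!
If `x ∈ V₁` is a unit vector, then `x ⊥ e₂`, so `⟪x, q⟫ = ⟪x, e₁⟫ / √2 ≤ 1 / √2` by
Cauchy–Schwarz, and symmetrically for `x ∈ V₂`. The distance bound is the expansion
`‖x - q‖² = 2 - 2⟪x, q⟫`, valid because `q` is a unit vector. An element of `G` sends a unit
vector of `V₁` to a unit vector of `V₁ ∪ V₂`, so the same bound applies along the orbit, and
`arccos` is antitone with `arccos (√2 / 2) = π / 4`.
-/

open scoped RealInnerProductSpace

/-- Let `V₁, V₂` be mutually orthogonal subspaces of a real inner product space, let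
`e₁ ∈ V₁`, `e₂ ∈ V₂` be unit vectors and `q = (e₁ + e₂)/√2`.  Then every unit vector
`x ∈ V₁ ∪ V₂` satisfies `⟨x, q⟩ ≤ √2/2` (hence `‖x − q‖² ≥ 2 − √2`); consequently, if `G` is
a group of linear isometries each of which either preserves `V₁` and `V₂` or swaps them, then
for any unit vector `p ∈ V₁` and any `g ∈ G` one has `⟨g·p, q⟩ ≤ √2/2`, so the spherical
distance `arccos⟨g·p, q⟩` from the orbit `G·p` to `q` is at least `π/4`. -/
theorem orbit_far_from_diagonal_point {E : Type*} [NormedAddCommGroup E]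
    [InnerProductSpace ℝ E] (V₁ V₂ : Submodule ℝ E)
    (horth : ∀ x ∈ V₁, ∀ y ∈ V₂, ⟪x, y⟫ = 0)
    (e₁ e₂ : E) (he₁ : e₁ ∈ V₁) (he₂ : e₂ ∈ V₂) (hn₁ : ‖e₁‖ = 1) (hn₂ : ‖e₂‖ = 1) :
    (∀ x : E, ‖x‖ = 1 → x ∈ V₁ ∨ x ∈ V₂ →
      ⟪x, (Real.sqrt 2)⁻¹ • (e₁ + e₂)⟫ ≤ Real.sqrt 2 / 2 ∧
      2 - Real.sqrt 2 ≤ ‖x - (Real.sqrt 2)⁻¹ • (e₁ + e₂)‖ ^ 2) ∧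
    (∀ G : Subgroup (E ≃ₗᵢ[ℝ] E),
      (∀ g ∈ G, ((∀ x ∈ V₁, g x ∈ V₁) ∧ (∀ x ∈ V₂, g x ∈ V₂)) ∨
        ((∀ x ∈ V₁, g x ∈ V₂) ∧ (∀ x ∈ V₂, g x ∈ V₁))) →
      ∀ p ∈ V₁, ‖p‖ = 1 → ∀ g ∈ G,
        ⟪g p, (Real.sqrt 2)⁻¹ • (e₁ + e₂)⟫ ≤ Real.sqrt 2 / 2 ∧
        Real.pi / 4 ≤ Real.arccos ⟪g p, (Real.sqrt 2)⁻¹ • (e₁ + e₂)⟫) := by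
  have hs : Real.sqrt 2 * Real.sqrt 2 = 2 := Real.mul_self_sqrt (by norm_num)
  have hinv : (Real.sqrt 2)⁻¹ = Real.sqrt 2 / 2 := by
    rw [inv_eq_one_div, div_eq_div_iff (by positivity) two_ne_zero, hs, one_mul]
  have hq : ‖(Real.sqrt 2)⁻¹ • (e₁ + e₂)‖ ^ 2 = 1 := by
    rw [norm_smul, mul_pow, norm_add_sq_real, hn₁, hn₂, horth e₁ he₁ e₂ he₂, hinv,
      Real.norm_eq_abs, sq_abs]
    nlinarith
  have key : ∀ x : E, ‖x‖ = 1 → x ∈ V₁ ∨ x ∈ V₂ →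
      ⟪x, (Real.sqrt 2)⁻¹ • (e₁ + e₂)⟫ ≤ Real.sqrt 2 / 2 := by
    intro x hx hmem
    have h₁ : ⟪x, e₁⟫ ≤ 1 := by simpa [hx, hn₁] using real_inner_le_norm x e₁
    have h₂ : ⟪x, e₂⟫ ≤ 1 := by simpa [hx, hn₂] using real_inner_le_norm x e₂
    have hsum : ⟪x, e₁⟫ + ⟪x, e₂⟫ ≤ 1 := by
      rcases hmem with h | h
      · rw [horth x h e₂ he₂]
        linarith
      · rw [real_inner_comm, horth e₁ he₁ x h]
        linarith
    rw [real_inner_smul_right, inner_add_right, hinv]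
    exact mul_le_of_le_one_right (by positivity) hsum
  refine ⟨fun x hx hmem => ⟨key x hx hmem, ?_⟩, fun G hG p hp hpn g hg => ?_⟩
  · rw [norm_sub_sq_real, hx, hq]
    linarith [key x hx hmem]
  · have hgp : g p ∈ V₁ ∨ g p ∈ V₂ := (hG g hg).imp (fun h => h.1 p hp) (fun h => h.1 p hp)
    have hle := key (g p) ((g.norm_map p).trans hpn) hgp
    refine ⟨hle, ?_⟩
    have hpi : Real.arccos (Real.sqrt 2 / 2) = Real.pi / 4 := by
      rw [← Real.cos_pi_div_four]
      exact Real.arccos_cos (by positivity) (by linarith [Real.pi_pos])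
    rw [← hpi]
    exact Real.arccos_le_arccos hle
end

section
/- For every n ≥ 2 there exists ε > 0 (depending only on n) such that for every finite subgroup G of the orthogonal group O(n+1) there exist unit vectors x, y ∈ ℝ^{n+1} with ‖g·x − y‖ ≥ ε for all g ∈ G; that is, the diameter of the quotient S^n/G of the unit sphere by any finite orthogonal group (with or without fixed points) is bounded below by a positive constant depending only on n. -/
/-!
The proof is a quantitative form of Jordan's theorem on finite linear groups.

Measure matrices by the `ℓ²` operator norm. In a finite orthogonal group `G`, all elements at
distance `< 1/2` from the identity commute with each other (`commute_of_near_one`): a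
non-commuting pair `g, h` with `h` as close to `1` as possible has a commutator `k` closer to `1`
than `h`, because `‖ghg⁻¹h⁻¹ - 1‖ ≤ 2‖g - 1‖‖h - 1‖`; hence `k` commutes with `g` and `h`, and a
trace computation (`eq_one_of_central_commutator`) forces `k = 1`.

A set `B` of commuting orthogonal matrices acts reducibly in dimension `≥ 3`: there are unit
vectors `u, y` with `u ⊥ b y` for all `b ∈ B` (`exists_orthogonal_of_commute`). Compactness of
`O(n+1)` bounds the number of translates `sB` needed to cover `G` by a constant `N` depending only
on `n` (`exists_covering_number`), so the orbit `Gy` lies in the union of the `N` hyperplanes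
`(s u)^⊥`. Finally, some unit vector is at distance at least `(1/4)^N` from any `N` given
hyperplanes (`exists_far_from_hyperplanes`), hence from the orbit `Gy`.
-/

open scoped Matrix.Norms.L2Operator Matrix

namespace SphereQuotient

/-! ### Near-identity elements of a finite orthogonal group commute -/

lemma inner_eq_dotProduct {d : ℕ} (v w : Fin d → ℝ) :
    inner ℝ (WithLp.toLp 2 v) (WithLp.toLp 2 w) = v ⬝ᵥ w := by
  rw [EuclideanSpace.inner_toLp_toLp, dotProduct_comm]
  rfl

lemma dotProduct_mulVec_pos {d : ℕ} {H : Matrix (Fin d) (Fin d) ℝ} (hH : ‖H - 1‖ < 1)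
    {v : Fin d → ℝ} (hv : v ≠ 0) : 0 < v ⬝ᵥ (H *ᵥ v) := by
  have h1 : v ⬝ᵥ (H *ᵥ v) = v ⬝ᵥ v + v ⬝ᵥ ((H - 1) *ᵥ v) := by
    rw [Matrix.sub_mulVec, Matrix.one_mulVec, dotProduct_sub]; ring
  have h2 : ‖WithLp.toLp 2 ((H - 1) *ᵥ v)‖ ≤ ‖H - 1‖ * ‖WithLp.toLp 2 v‖ :=
    Matrix.l2_opNorm_mulVec (H - 1) (WithLp.toLp 2 v)
  have h3 := abs_real_inner_le_norm (WithLp.toLp 2 v) (WithLp.toLp 2 ((H - 1) *ᵥ v))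
  have h4 := real_inner_self_eq_norm_sq (WithLp.toLp 2 v)
  rw [inner_eq_dotProduct] at h3 h4
  have h5 : 0 < ‖WithLp.toLp 2 v‖ := by
    rw [norm_pos_iff]
    intro h
    exact hv (by simpa using h)
  have h6 := neg_abs_le (v ⬝ᵥ ((H - 1) *ᵥ v))
  have h7 := mul_le_mul_of_nonneg_left h2 h5.le
  rw [h1, h4]
  nlinarith [mul_pos (mul_pos h5 h5) (sub_pos.2 hH)]

lemma trace_conj_pos {d : ℕ} {H X : Matrix (Fin d) (Fin d) ℝ} (hH : ‖H - 1‖ < 1)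
    (hX : X ≠ 0) : 0 < (X * H * Xᵀ).trace := by
  have h1 : (X * H * Xᵀ).trace = ∑ i, X i ⬝ᵥ (H *ᵥ X i) := by
    simp only [Matrix.trace, Matrix.diag]
    refine Finset.sum_congr rfl fun i _ => ?_
    rw [Matrix.dotProduct_mulVec, Matrix.mul_apply]
    rfl
  rw [h1]
  obtain ⟨i, hi⟩ : ∃ i, X i ≠ 0 := by
    by_contra! h
    exact hX (funext h)
  refine Finset.sum_pos' (fun j _ => ?_) ⟨i, Finset.mem_univ _, dotProduct_mulVec_pos hH hi⟩
  by_cases hj : X j = 0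
  · simp [hj]
  · exact (dotProduct_mulVec_pos hH hj).le

/-- If the commutator `k` of `g` and `h` commutes with `g`, and `h` is near `1`, then `k = 1`:
conjugating by `g` gives `tr (p k h) = tr (p h)` for every `p` commuting with `g`, and
`p = (k - 1)ᵀ` yields `tr ((k - 1) h (k - 1)ᵀ) = 0`. -/
lemma eq_one_of_central_commutator {d : ℕ} {g h k : Matrix.orthogonalGroup (Fin d) ℝ}
    (hgh : g * h = k * h * g) (hkg : Commute k g)
    (hh : ‖(h : Matrix (Fin d) (Fin d) ℝ) - 1‖ < 1) : k = 1 := by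
  by_contra hk
  set X : Matrix (Fin d) (Fin d) ℝ := (k : Matrix (Fin d) (Fin d) ℝ) - 1 with hX
  have hX0 : X ≠ 0 := by
    intro h0
    exact hk (Subtype.ext (sub_eq_zero.1 h0))
  have hpos := trace_conj_pos hh hX0
  have hXT : Xᵀ = ((k⁻¹ : Matrix.orthogonalGroup (Fin d) ℝ) : Matrix (Fin d) (Fin d) ℝ) - 1 := by
    rw [hX, Matrix.transpose_sub, Matrix.transpose_one]
    rfl
  have e1 : (k : Matrix (Fin d) (Fin d) ℝ) * h = g * h * (g⁻¹ : Matrix.orthogonalGroup (Fin d) ℝ) := by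
    have : k * h = g * h * g⁻¹ := by rw [hgh]; group
    exact congrArg Subtype.val this
  have e2 : ((g⁻¹ : Matrix.orthogonalGroup (Fin d) ℝ) : Matrix (Fin d) (Fin d) ℝ) * Xᵀ * g = Xᵀ := by
    have h1 : g⁻¹ * k⁻¹ * g = k⁻¹ := by
      rw [mul_assoc, (hkg.inv_left).eq]; group
    have h1' : ((g⁻¹ : Matrix.orthogonalGroup (Fin d) ℝ) : Matrix (Fin d) (Fin d) ℝ)
        * (k⁻¹ : Matrix.orthogonalGroup (Fin d) ℝ) * g = (k⁻¹ : Matrix.orthogonalGroup (Fin d) ℝ) :=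
      congrArg Subtype.val h1
    have h2 : ((g⁻¹ : Matrix.orthogonalGroup (Fin d) ℝ) : Matrix (Fin d) (Fin d) ℝ) * g = 1 :=
      congrArg Subtype.val (inv_mul_cancel g)
    rw [hXT, mul_sub, sub_mul, h1', mul_one, h2]
  have e3 : (Xᵀ * ((k : Matrix (Fin d) (Fin d) ℝ) * h)).trace = (Xᵀ * h).trace := by
    rw [e1, ← mul_assoc, Matrix.trace_mul_comm, ← mul_assoc, ← mul_assoc, e2]
  have e4 : (X * h * Xᵀ).trace = 0 := by
    rw [Matrix.trace_mul_comm, hX, sub_mul, mul_sub, Matrix.trace_sub, ← hX, one_mul, e3, sub_self]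
  exact hpos.ne' e4

lemma norm_commutator_sub_one_le {d : ℕ} (g h : Matrix.orthogonalGroup (Fin d) ℝ) :
    ‖((g * h * g⁻¹ * h⁻¹ : Matrix.orthogonalGroup (Fin d) ℝ) : Matrix (Fin d) (Fin d) ℝ) - 1‖ ≤
      2 * ‖(g : Matrix (Fin d) (Fin d) ℝ) - 1‖ * ‖(h : Matrix (Fin d) (Fin d) ℝ) - 1‖ := by
  have e : (((g * h * g⁻¹ * h⁻¹ : Matrix.orthogonalGroup (Fin d) ℝ) :
      Matrix (Fin d) (Fin d) ℝ) - 1) * (h * g : Matrix.orthogonalGroup (Fin d) ℝ) =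
      (g - 1) * (h - 1) - (h - 1) * (g - 1) := by
    have h1 : (g * h * g⁻¹ * h⁻¹) * (h * g) = g * h := by group
    have h1' := congrArg Subtype.val h1
    rw [Submonoid.coe_mul] at h1'
    rw [sub_mul, h1', one_mul, Submonoid.coe_mul, Submonoid.coe_mul]
    noncomm_ring
  rw [← CStarRing.norm_mul_coe_unitary _ (h * g), e]
  refine (norm_sub_le _ _).trans ?_
  have := norm_mul_le ((g : Matrix (Fin d) (Fin d) ℝ) - 1) (h - 1)
  have := norm_mul_le ((h : Matrix (Fin d) (Fin d) ℝ) - 1) (g - 1)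
  linarith

/-- The set of elements of `G` at distance less than `1/2` from the identity. -/
def nearOne {d : ℕ} (G : Subgroup (Matrix.orthogonalGroup (Fin d) ℝ)) :
    Set (Matrix.orthogonalGroup (Fin d) ℝ) :=
  {g | g ∈ G ∧ ‖(g : Matrix (Fin d) (Fin d) ℝ) - 1‖ < 1 / 2}

lemma commute_of_near_one {d : ℕ} (G : Subgroup (Matrix.orthogonalGroup (Fin d) ℝ)) [Finite G]
    {a b : Matrix.orthogonalGroup (Fin d) ℝ} (ha : a ∈ nearOne G) (hb : b ∈ nearOne G) :
    Commute a b := by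
  by_contra hab
  let S : Set (Matrix.orthogonalGroup (Fin d) ℝ) :=
    {h | h ∈ nearOne G ∧ ∃ g ∈ nearOne G, ¬ Commute g h}
  have hS : S.Finite := (Set.toFinite (G : Set _)).subset fun h hh => hh.1.1
  obtain ⟨h, ⟨hh, g, hg, hgh⟩, hmin⟩ := Set.exists_min_image S
    (fun h => ‖(h : Matrix (Fin d) (Fin d) ℝ) - 1‖) hS ⟨b, hb, a, ha, hab⟩
  have hpos : 0 < ‖(h : Matrix (Fin d) (Fin d) ℝ) - 1‖ := by
    rw [norm_pos_iff]
    intro h0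
    have : h = 1 := Subtype.ext (sub_eq_zero.1 h0)
    exact hgh (this ▸ Commute.one_right g)
  have hlt := norm_commutator_sub_one_le g h
  have hlt' : ‖((g * h * g⁻¹ * h⁻¹ : Matrix.orthogonalGroup (Fin d) ℝ) :
      Matrix (Fin d) (Fin d) ℝ) - 1‖ < ‖(h : Matrix (Fin d) (Fin d) ℝ) - 1‖ := by
    nlinarith [hg.2]
  have hk : g * h * g⁻¹ * h⁻¹ ∈ nearOne G :=
    ⟨G.mul_mem (G.mul_mem (G.mul_mem hg.1 hh.1) (G.inv_mem hg.1)) (G.inv_mem hh.1),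
      hlt'.trans hh.2⟩
  have hkg : Commute g (g * h * g⁻¹ * h⁻¹) := by
    by_contra hc
    exact absurd (hmin _ ⟨hk, g, hg, hc⟩) (not_le.2 hlt')
  have h1 := eq_one_of_central_commutator (g := g) (h := h) (k := g * h * g⁻¹ * h⁻¹)
    (by group) hkg.symm (by linarith [hh.2])
  exact hgh (by
    have : g * h = (g * h * g⁻¹ * h⁻¹) * (h * g) := by group
    rw [h1, one_mul] at this
    exact this)

/-! ### Commuting orthogonal matrices act reducibly in dimension at least three -/

/-- A non-scalar symmetric matrix `S` commuting with `B` provides a proper `B`-invariant subspace,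
an eigenspace `ker (S - μ)`; its orthogonal complement is the range of `S - μ`. -/
lemma exists_orthogonal_of_symm {d : ℕ} (hd : 0 < d) {B : Set (Matrix (Fin d) (Fin d) ℝ)}
    {S : Matrix (Fin d) (Fin d) ℝ} (hS : Sᵀ = S) (hSB : ∀ b ∈ B, Commute S b)
    (hns : ∀ c : ℝ, S ≠ c • (1 : Matrix (Fin d) (Fin d) ℝ)) :
    ∃ u y : Fin d → ℝ, u ≠ 0 ∧ y ≠ 0 ∧ ∀ b ∈ B, u ⬝ᵥ (b *ᵥ y) = 0 := by
  have hH : S.IsHermitian := by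
    rw [Matrix.IsHermitian, Matrix.conjTranspose_eq_transpose_of_trivial, hS]
  let i : Fin d := ⟨0, hd⟩
  set μ := hH.eigenvalues i with hμ
  set y := (hH.eigenvectorBasis i).ofLp with hy
  have hSy : S *ᵥ y = μ • y := hH.mulVec_eigenvectorBasis i
  have hy0 : y ≠ 0 := by
    intro h0
    have := hH.eigenvectorBasis.orthonormal.ne_zero i
    exact this (by ext j; exact congrFun h0 j)
  set T := S - μ • (1 : Matrix (Fin d) (Fin d) ℝ) with hT
  have hTy : T *ᵥ y = 0 := by
    rw [hT, Matrix.sub_mulVec, hSy, Matrix.smul_mulVec, Matrix.one_mulVec, sub_self]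
  have hTT : Tᵀ = T := by
    rw [hT, Matrix.transpose_sub, hS, Matrix.transpose_smul, Matrix.transpose_one]
  obtain ⟨w, hw⟩ : ∃ w, T *ᵥ w ≠ 0 := by
    by_contra! h
    apply hns μ
    have : T = 0 := by
      apply Matrix.ext_of_mulVec_single
      intro j
      rw [h, Matrix.zero_mulVec]
    exact sub_eq_zero.1 this
  refine ⟨T *ᵥ w, y, hw, hy0, fun b hb => ?_⟩
  have hc : T * b = b * T := by
    rw [hT, sub_mul, mul_sub, (hSB b hb).eq, smul_mul_assoc, mul_smul_comm, one_mul, mul_one]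
  rw [← Matrix.vecMul_transpose, hTT, ← Matrix.dotProduct_mulVec, Matrix.mulVec_mulVec, hc,
    ← Matrix.mulVec_mulVec, hTy, Matrix.mulVec_zero, dotProduct_zero]

lemma exists_orthogonal_pair {d : ℕ} (hd : 3 ≤ d) (v w : Fin d → ℝ) :
    ∃ u : Fin d → ℝ, u ≠ 0 ∧ u ⬝ᵥ v = 0 ∧ u ⬝ᵥ w = 0 := by
  have hk := LinearMap.ker_ne_bot_of_finrank_lt (f := (Matrix.of ![v, w]).mulVecLin)
    (by simp; omega)
  obtain ⟨u, hu, hu0⟩ := (Submodule.ne_bot_iff _).1 hk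
  have hu' : (Matrix.of ![v, w]) *ᵥ u = 0 := hu
  refine ⟨u, hu0, ?_, ?_⟩
  · rw [dotProduct_comm]; exact congrFun hu' 0
  · rw [dotProduct_comm]; exact congrFun hu' 1

/-- If `b + bᵀ` and `(a - aᵀ)(b - bᵀ)` are scalar for all `a, b ∈ B`, then all of `B` lies in the
span of `1` and a single skew matrix `J`. Otherwise one of these symmetric matrices is non-scalar
and `exists_orthogonal_of_symm` applies. -/
lemma exists_orthogonal_of_commute {d : ℕ} (hd : 3 ≤ d) {B : Set (Matrix (Fin d) (Fin d) ℝ)}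
    (hB : ∀ a ∈ B, ∀ b ∈ B, Commute a b) (hBT : ∀ a ∈ B, ∀ b ∈ B, Commute aᵀ b) :
    ∃ u y : Fin d → ℝ, u ≠ 0 ∧ y ≠ 0 ∧ ∀ b ∈ B, u ⬝ᵥ (b *ᵥ y) = 0 := by
  have hBTT : ∀ a ∈ B, ∀ b ∈ B, Commute aᵀ bᵀ := fun a ha b hb => by
    have := congrArg Matrix.transpose (hB b hb a ha).eq
    rwa [Matrix.transpose_mul, Matrix.transpose_mul] at this
  by_cases h1 : ∃ a ∈ B, ∀ c : ℝ, a + aᵀ ≠ c • (1 : Matrix (Fin d) (Fin d) ℝ)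
  · obtain ⟨a, ha, hns⟩ := h1
    refine exists_orthogonal_of_symm (by omega) (S := a + aᵀ) ?_ (fun b hb => ?_) hns
    · rw [Matrix.transpose_add, Matrix.transpose_transpose, add_comm]
    · exact (hB a ha b hb).add_left (hBT a ha b hb)
  by_cases h2 : ∃ a ∈ B, ∃ b ∈ B,
      ∀ c : ℝ, (a - aᵀ) * (b - bᵀ) ≠ c • (1 : Matrix (Fin d) (Fin d) ℝ)
  · obtain ⟨a, ha, b, hb, hns⟩ := h2
    refine exists_orthogonal_of_symm (by omega) (S := (a - aᵀ) * (b - bᵀ)) ?_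
      (fun e he => ?_) hns
    · have hc : Commute (a - aᵀ) (b - bᵀ) :=
        ((hB a ha b hb).sub_right (hBT b hb a ha).symm).sub_left
          ((hBT a ha b hb).sub_right (hBTT a ha b hb))
      rw [Matrix.transpose_mul, Matrix.transpose_sub, Matrix.transpose_sub,
        Matrix.transpose_transpose, Matrix.transpose_transpose, hc.eq]
      noncomm_ring
    · exact ((hB a ha e he).sub_left (hBT a ha e he)).mul_left
        ((hB b hb e he).sub_left (hBT b hb e he))
  push Not at h1 h2
  obtain ⟨J, hJ⟩ : ∃ J : Matrix (Fin d) (Fin d) ℝ, ∀ b ∈ B, ∃ t : ℝ, b - bᵀ = t • J := by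
    by_cases h3 : ∃ a ∈ B, a - aᵀ ≠ 0
    · obtain ⟨a, ha, hne⟩ := h3
      refine ⟨a - aᵀ, fun b hb => ?_⟩
      obtain ⟨s, hs⟩ := h2 a ha a ha
      obtain ⟨t, ht⟩ := h2 a ha b hb
      have hs0 : s ≠ 0 := by
        rintro rfl
        apply hne
        rw [← Matrix.conjTranspose_mul_self_eq_zero, Matrix.conjTranspose_eq_transpose_of_trivial,
          Matrix.transpose_sub, Matrix.transpose_transpose, ← neg_sub a, neg_mul, hs, zero_smul,
          neg_zero]
      have e : s • (b - bᵀ) = t • (a - aᵀ) := by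
        have : (a - aᵀ) * (a - aᵀ) * (b - bᵀ) = (a - aᵀ) * ((a - aᵀ) * (b - bᵀ)) := mul_assoc _ _ _
        rw [hs, ht] at this
        simpa using this
      refine ⟨s⁻¹ * t, ?_⟩
      rw [mul_smul, ← e, smul_smul, inv_mul_cancel₀ hs0, one_smul]
    · push Not at h3
      exact ⟨0, fun b hb => ⟨0, by rw [h3 b hb, smul_zero]⟩⟩
  let y : Fin d → ℝ := fun _ => 1
  have hy : y ≠ 0 := fun h => one_ne_zero (congrFun h (⟨0, by omega⟩ : Fin d))
  obtain ⟨u, hu0, hu1, hu2⟩ := exists_orthogonal_pair hd y (J *ᵥ y)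
  refine ⟨u, y, hu0, hy, fun b hb => ?_⟩
  obtain ⟨c, hc⟩ := h1 b hb
  obtain ⟨t, ht⟩ := hJ b hb
  have hb2 : (2 : ℝ) • b = c • (1 : Matrix (Fin d) (Fin d) ℝ) + t • J := by
    rw [← hc, ← ht, two_smul]; abel
  have : (2 : ℝ) * (u ⬝ᵥ (b *ᵥ y)) = 0 := by
    rw [← smul_eq_mul, ← dotProduct_smul, ← Matrix.smul_mulVec, hb2, Matrix.add_mulVec,
      Matrix.smul_mulVec, Matrix.smul_mulVec, Matrix.one_mulVec, dotProduct_add, dotProduct_smul,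
      dotProduct_smul, hu1, hu2]
    simp
  linarith

/-! ### Covering the group and avoiding hyperplanes -/

lemma exists_covering_number (d : ℕ) : ∃ N : ℕ,
    ∀ G : Subgroup (Matrix.orthogonalGroup (Fin d) ℝ),
      ∃ t : Finset (Matrix.orthogonalGroup (Fin d) ℝ), t.card ≤ N ∧
        ∀ g ∈ G, ∃ s ∈ t, s⁻¹ * g ∈ nearOne G := by
  classical
  have hprop : ProperSpace (Matrix (Fin d) (Fin d) ℝ) := FiniteDimensional.proper ℝ _
  have htb : TotallyBounded (Metric.closedBall (0 : Matrix (Fin d) (Fin d) ℝ)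
      ‖(1 : Matrix (Fin d) (Fin d) ℝ)‖) := (isCompact_closedBall _ _).totallyBounded
  obtain ⟨c, hcfin, hc⟩ := Metric.totallyBounded_iff.1 htb (1 / 4) (by norm_num)
  refine ⟨hcfin.toFinset.card, fun G => ?_⟩
  -- In each covering ball that meets `G`, pick an element of `G`.
  have hex : ∀ p : Matrix (Fin d) (Fin d) ℝ, ∃ s : Matrix.orthogonalGroup (Fin d) ℝ,
      (∃ g ∈ G, (g : Matrix (Fin d) (Fin d) ℝ) ∈ Metric.ball p (1 / 4)) →
        s ∈ G ∧ (s : Matrix (Fin d) (Fin d) ℝ) ∈ Metric.ball p (1 / 4) := by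
    intro p
    by_cases h : ∃ g ∈ G, (g : Matrix (Fin d) (Fin d) ℝ) ∈ Metric.ball p (1 / 4)
    · obtain ⟨g, hg, hgp⟩ := h
      exact ⟨g, fun _ => ⟨hg, hgp⟩⟩
    · exact ⟨1, fun h' => absurd h' h⟩
  choose f hf using hex
  refine ⟨hcfin.toFinset.image f, Finset.card_image_le, fun g hg => ?_⟩
  have hgb : (g : Matrix (Fin d) (Fin d) ℝ) ∈ Metric.closedBall (0 : Matrix (Fin d) (Fin d) ℝ)
      ‖(1 : Matrix (Fin d) (Fin d) ℝ)‖ := by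
    rw [mem_closedBall_zero_iff, ← CStarRing.norm_coe_unitary_mul g 1, mul_one]
  obtain ⟨p, hp, hgp⟩ := Set.mem_iUnion₂.1 (hc hgb)
  obtain ⟨hsG, hsp⟩ := hf p ⟨g, hg, hgp⟩
  refine ⟨f p, Finset.mem_image_of_mem f (hcfin.mem_toFinset.2 hp),
    G.mul_mem (G.inv_mem hsG) hg, ?_⟩
  have e : (f p : Matrix (Fin d) (Fin d) ℝ) *
      (((f p)⁻¹ * g : Matrix.orthogonalGroup (Fin d) ℝ) - 1) = g - f p := by
    have h1 : f p * ((f p)⁻¹ * g) = g := by group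
    have h1' := congrArg Subtype.val h1
    rw [Submonoid.coe_mul] at h1'
    rw [mul_sub, h1', mul_one]
  rw [← CStarRing.norm_coe_unitary_mul (f p), e, ← dist_eq_norm]
  have := dist_triangle_right (g : Matrix (Fin d) (Fin d) ℝ) (f p) p
  rw [Metric.mem_ball] at hgp hsp
  linarith

/-- Adding one hyperplane `u^⊥` at a time, the current vector `x` is replaced by `(x ± t u) / 2`
with `t` half the current bound and the sign chosen to agree with that of `⟪u, x⟫`. -/
lemma exists_far_from_hyperplanes_aux {E : Type*} [NormedAddCommGroup E] [InnerProductSpace ℝ E]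
    [Nontrivial E] (t : Finset E) (ht : ∀ u ∈ t, ‖u‖ = 1) :
    ∃ x : E, x ≠ 0 ∧ ‖x‖ ≤ 1 ∧ ∀ u ∈ t, (1 / 4 : ℝ) ^ t.card ≤ |inner ℝ u x| := by
  classical
  induction t using Finset.induction_on with
  | empty =>
    obtain ⟨x, hx⟩ := exists_norm_eq E (zero_le_one' ℝ)
    refine ⟨x, ?_, hx.le, by simp⟩
    rintro rfl
    simp at hx
  | insert u t hut ih =>
    obtain ⟨x, hx0, hx1, hx⟩ := ih fun v hv => ht v (Finset.mem_insert_of_mem hv)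
    have hu : ‖u‖ = 1 := ht u (Finset.mem_insert_self u t)
    rw [Finset.card_insert_of_notMem hut, pow_succ]
    set c : ℝ := (1 / 4) ^ t.card with hc
    have hc0 : 0 < c := by positivity
    have hc1 : c ≤ 1 := pow_le_one₀ (by norm_num) (by norm_num)
    obtain ⟨σ, hσ, hσx⟩ : ∃ σ : ℝ, |σ| = 1 ∧ |inner ℝ u x| = σ * inner ℝ u x := by
      rcases le_total 0 (inner ℝ u x) with h | h
      · exact ⟨1, by simp, by rw [abs_of_nonneg h, one_mul]⟩
      · exact ⟨-1, by simp, by rw [abs_of_nonpos h]; ring⟩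
    have hσσ : σ * σ = 1 := by rw [← abs_mul_abs_self, hσ, one_mul]
    have huu : inner ℝ u u = (1 : ℝ) := by rw [real_inner_self_eq_norm_sq, hu, one_pow]
    have hin : ∀ v : E, inner ℝ v ((1 / 2 : ℝ) • (x + (σ * (c / 2)) • u)) =
        1 / 2 * (inner ℝ v x + σ * (c / 2) * inner ℝ v u) := by
      intro v
      rw [real_inner_smul_right, inner_add_right, real_inner_smul_right]
    have hnew : c * (1 / 4) ≤ |inner ℝ u ((1 / 2 : ℝ) • (x + (σ * (c / 2)) • u))| := by
      have h1 : σ * inner ℝ u ((1 / 2 : ℝ) • (x + (σ * (c / 2)) • u)) =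
          1 / 2 * (|inner ℝ u x| + c / 2) := by
        rw [hin, huu, hσx]
        linear_combination (c / 4) * hσσ
      have h2 := le_abs_self (σ * inner ℝ u ((1 / 2 : ℝ) • (x + (σ * (c / 2)) • u)))
      rw [abs_mul, hσ, one_mul, h1] at h2
      linarith [abs_nonneg (inner ℝ u x)]
    refine ⟨(1 / 2 : ℝ) • (x + (σ * (c / 2)) • u), ?_, ?_, ?_⟩
    · intro h0
      rw [h0, inner_zero_right, abs_zero] at hnew
      linarith
    · have h1 : ‖(σ * (c / 2)) • u‖ = c / 2 := by
        rw [norm_smul, hu, Real.norm_eq_abs, abs_mul, hσ, abs_of_pos (by positivity)]; ring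
      have h2 := norm_add_le x ((σ * (c / 2)) • u)
      rw [norm_smul, Real.norm_eq_abs, abs_of_pos (by norm_num)]
      linarith
    · intro v hv
      rcases Finset.mem_insert.1 hv with rfl | hvt
      · exact hnew
      · have h1 := hx v hvt
        have h2 : |σ * (c / 2) * inner ℝ v u| ≤ c / 2 := by
          have h3 := abs_real_inner_le_norm v u
          rw [hu, ht v hv] at h3
          rw [abs_mul, abs_mul, hσ, abs_of_pos (show 0 < c / 2 by positivity)]
          nlinarith
        have h4 := abs_sub_abs_le_abs_add (inner ℝ v x) (σ * (c / 2) * inner ℝ v u)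
        rw [hin, abs_mul, abs_of_pos (show (0 : ℝ) < 1 / 2 by norm_num)]
        linarith

lemma exists_far_from_hyperplanes {E : Type*} [NormedAddCommGroup E] [InnerProductSpace ℝ E]
    [Nontrivial E] (t : Finset E) (ht : ∀ u ∈ t, ‖u‖ = 1) :
    ∃ x : E, ‖x‖ = 1 ∧ ∀ u ∈ t, (1 / 4 : ℝ) ^ t.card ≤ |inner ℝ u x| := by
  obtain ⟨x, hx0, hx1, hx⟩ := exists_far_from_hyperplanes_aux t ht
  have hpos : 0 < ‖x‖ := norm_pos_iff.2 hx0
  refine ⟨‖x‖⁻¹ • x, by rw [norm_smul, norm_inv, norm_norm, inv_mul_cancel₀ hpos.ne'],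
    fun u hu => (hx u hu).trans ?_⟩
  rw [real_inner_smul_right, abs_mul, abs_of_pos (inv_pos.2 hpos)]
  exact le_mul_of_one_le_left (abs_nonneg _) ((one_le_inv₀ hpos).2 hx1)

lemma dotProduct_orthogonal {d : ℕ} (s : Matrix.orthogonalGroup (Fin d) ℝ) (v w : Fin d → ℝ) :
    ((s : Matrix (Fin d) (Fin d) ℝ) *ᵥ v) ⬝ᵥ ((s : Matrix (Fin d) (Fin d) ℝ) *ᵥ w) = v ⬝ᵥ w := by
  have h : (s : Matrix (Fin d) (Fin d) ℝ)ᵀ * s = 1 := congrArg Subtype.val (inv_mul_cancel s)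
  rw [Matrix.dotProduct_mulVec, ← Matrix.mulVec_transpose, Matrix.mulVec_mulVec, h,
    Matrix.one_mulVec]

lemma exists_unit_multiple {d : ℕ} {v : Fin d → ℝ} (hv : v ≠ 0) :
    ∃ r : ℝ, ‖WithLp.toLp 2 (r • v)‖ = 1 := by
  have h : ‖WithLp.toLp 2 v‖ ≠ 0 := by
    rw [norm_ne_zero_iff]
    intro h
    exact hv (by simpa using h)
  exact ⟨‖WithLp.toLp 2 v‖⁻¹, by rw [WithLp.toLp_smul, norm_smul, norm_inv, norm_norm,
    inv_mul_cancel₀ h]⟩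

end SphereQuotient

open SphereQuotient

/-- For every `n ≥ 2` there is an `ε > 0`, depending only on `n`, such that for every finite
subgroup `G` of `O(n+1)` there are unit vectors `x, y ∈ ℝ^{n+1}` with `‖g·x − y‖ ≥ ε` for all
`g ∈ G`: the diameter of any quotient `Sⁿ/G` of the unit sphere by a finite orthogonal group
(with or without fixed points) is bounded below by a positive constant depending only on
`n`. -/
theorem sphere_quotient_diameter_bound (n : ℕ) (hn : 2 ≤ n) :
    ∃ ε : ℝ, 0 < ε ∧
      ∀ G : Subgroup (Matrix.orthogonalGroup (Fin (n + 1)) ℝ), Finite G →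
        ∃ x y : EuclideanSpace ℝ (Fin (n + 1)), ‖x‖ = 1 ∧ ‖y‖ = 1 ∧
          ∀ g ∈ G,
            ε ≤ ‖(EuclideanSpace.equiv (Fin (n + 1)) ℝ).symm
                  (Matrix.mulVec (g : Matrix (Fin (n + 1)) (Fin (n + 1)) ℝ)
                    (EuclideanSpace.equiv (Fin (n + 1)) ℝ x)) - y‖ := by
  classical
  obtain ⟨N, hN⟩ := exists_covering_number (n + 1)
  refine ⟨(1 / 4) ^ N, by positivity, fun G hG => ?_⟩
  obtain ⟨t, htN, ht⟩ := hN G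
  obtain ⟨u, y, hu0, hy0, huy⟩ := exists_orthogonal_of_commute (d := n + 1) (by omega)
    (B := Subtype.val '' nearOne G)
    (by
      rintro _ ⟨a, ha, rfl⟩ _ ⟨b, hb, rfl⟩
      exact congrArg Subtype.val (commute_of_near_one G ha hb).eq)
    (by
      rintro _ ⟨a, ha, rfl⟩ _ ⟨b, hb, rfl⟩
      exact congrArg Subtype.val (commute_of_near_one G ha hb).inv_left.eq)
  obtain ⟨q, hq⟩ := exists_unit_multiple hu0
  obtain ⟨r, hr⟩ := exists_unit_multiple hy0
  let F : Matrix.orthogonalGroup (Fin (n + 1)) ℝ → EuclideanSpace ℝ (Fin (n + 1)) :=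
    fun s => WithLp.toLp 2 ((s : Matrix (Fin (n + 1)) (Fin (n + 1)) ℝ) *ᵥ (q • u))
  have hF : ∀ s, ‖F s‖ = 1 := by
    intro s
    rw [← hq, ← sq_eq_sq₀ (norm_nonneg _) (norm_nonneg _), ← real_inner_self_eq_norm_sq,
      ← real_inner_self_eq_norm_sq, inner_eq_dotProduct, inner_eq_dotProduct,
      dotProduct_orthogonal]
  obtain ⟨x, hx, hfar⟩ := exists_far_from_hyperplanes (t.image F) (by
    intro v hv
    obtain ⟨s, -, rfl⟩ := Finset.mem_image.1 hv
    exact hF s)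
  refine ⟨WithLp.toLp 2 (r • y), x, hr, hx, fun g hg => ?_⟩
  obtain ⟨s, hst, hs⟩ := ht g hg
  change _ ≤ ‖WithLp.toLp 2 ((g : Matrix (Fin (n + 1)) (Fin (n + 1)) ℝ) *ᵥ (r • y)) - x‖
  -- With `b = s⁻¹ g` near the identity, `⟪s u, g y⟫ = ⟪u, b y⟫ = 0`.
  have horth : inner ℝ (F s)
      (WithLp.toLp 2 ((g : Matrix (Fin (n + 1)) (Fin (n + 1)) ℝ) *ᵥ (r • y))) = 0 := by
    have h1 : s * (s⁻¹ * g) = g := by group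
    have h2 := congrArg Subtype.val h1
    rw [Submonoid.coe_mul] at h2
    rw [← h2, ← Matrix.mulVec_mulVec, inner_eq_dotProduct, dotProduct_orthogonal,
      Matrix.mulVec_smul, smul_dotProduct, dotProduct_smul, huy _ ⟨_, hs, rfl⟩]
    simp
  have hle := hfar (F s) (Finset.mem_image_of_mem F hst)
  have hcs := abs_real_inner_le_norm (F s)
    (WithLp.toLp 2 ((g : Matrix (Fin (n + 1)) (Fin (n + 1)) ℝ) *ᵥ (r • y)) - x)
  rw [inner_sub_right, horth, zero_sub, abs_neg, hF, one_mul] at hcs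
  refine le_trans ?_ (hle.trans hcs)
  exact pow_le_pow_of_le_one (by norm_num) (by norm_num) (Finset.card_image_le.trans htN)
end
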